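/- arXiv:2107.00550 — 2 statements merged into one kernel-verified Lean document; each statement's English description precedes it below -/
import Mathlib

section
/- Let V be a good ssee. Let N ∈ ℕ and let F be a nonempty finite family of simple boxes in [0,1]^{V_N}; set b = ⋃_{f∈F} f and define P = Forb(b), i.e. P_n := [0,1]^{V_n} \ ∂⁺_{V_n}(b) for n ≥ N. Then for every ε > 0 there exists n₀ such that for every n ≥ n₀ there exists a collection C of simple boxes in [0,1]^{V_n} satisfying: (i) P_n ⊆ ⋃_{c∈C} c; (ii) for every c ∈ C, E_φ vol(c_{↓φ} ∩ b) < ε; and (iii) |C| ≤ e^{ε|V_n|}. -/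
open MeasureTheory Filter Set

noncomputable section

/-- A set-sequence equipped with embeddings (ssee): a sequence of finite nonempty
sets `V n` together with, for `N ≤ n`, a collection of injections `V N → V n`. -/
structure Ssee where
  V : ℕ → Type
  fin : ∀ n, Fintype (V n)
  dec : ∀ n, DecidableEq (V n)
  nonemp : ∀ n, Nonempty (V n)
  emb : (N n : ℕ) → Finset (V N → V n)
  emb_inj : ∀ N n, N ≤ n → ∀ φ ∈ emb N n, Function.Injective φ

attribute [instance] Ssee.fin Ssee.dec Ssee.nonemp

/-- `I(N,n)`: the number of pairs of embeddings whose images intersect in exactly `i`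
elements, summed over all `i` with `1 < i < |V_N|`. -/
def Ssee.interCount (S : Ssee) (N n : ℕ) : ℕ :=
  ((S.emb N n ×ˢ S.emb N n).filter (fun p =>
    1 < ((Finset.univ.image p.1) ∩ (Finset.univ.image p.2)).card ∧
    ((Finset.univ.image p.1) ∩ (Finset.univ.image p.2)).card < Fintype.card (S.V N))).card

/-- A ssee is good if `|V_n| → ∞`, and for every `N` with `|V_N| > 1` we have
`|emb N n| / |V_n| → ∞` and `|V_n| · I(N,n) / |emb N n|² → 0`. -/
def Ssee.Good (S : Ssee) : Prop :=
  Tendsto (fun n => Fintype.card (S.V n)) atTop atTop ∧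
  (∀ N, 1 < Fintype.card (S.V N) →
    Tendsto (fun n => ((S.emb N n).card : ℝ) / (Fintype.card (S.V n) : ℝ)) atTop atTop) ∧
  (∀ N, 1 < Fintype.card (S.V N) →
    Tendsto (fun n => ((Fintype.card (S.V n) : ℝ) * (S.interCount N n : ℝ)) /
      ((S.emb N n).card : ℝ) ^ 2) atTop (nhds 0))

/-- Homogeneous: every point of `V n` lies in the same strictly positive number of
images of embeddings of `V N`. -/
def Ssee.Homogeneous (S : Ssee) : Prop :=
  ∀ N n, N ≤ n → ∃ k : ℕ, 0 < k ∧ ∀ x : S.V n,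
    ((S.emb N n).filter (fun φ => x ∈ Finset.univ.image φ)).card = k

/-- The unit cube `[0,1]^ι`. -/
def unitCube (ι : Type) : Set (ι → ℝ) := Set.univ.pi fun _ => Set.Icc (0:ℝ) 1

/-- A box in `[0,1]^ι`: a product of measurable subsets of `[0,1]`. -/
def IsBox {ι : Type} (b : Set (ι → ℝ)) : Prop :=
  ∃ A : ι → Set ℝ, (∀ i, MeasurableSet (A i) ∧ A i ⊆ Set.Icc 0 1) ∧ b = Set.univ.pi A

/-- A simple box: a product of finite unions of intervals (i.e. of order-connected
subsets of `ℝ`) contained in `[0,1]`. -/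
def IsSimpleBox {ι : Type} (b : Set (ι → ℝ)) : Prop :=
  ∃ A : ι → Set ℝ,
    (∀ i, A i ⊆ Set.Icc 0 1 ∧
      ∃ s : Finset (Set ℝ), (∀ J ∈ s, J.OrdConnected) ∧ A i = ⋃₀ ↑s) ∧
    b = Set.univ.pi A

/-- The projection `b_{↓φ}` of a body `b ⊆ [0,1]^β` along `φ : α → β`: those `c` whose
fiber (in the coordinates outside the range of `φ`) has positive measure. -/
def projBody {α β : Type} [Fintype α] [Fintype β] (φ : α → β) (b : Set (β → ℝ)) :
    Set (α → ℝ) :=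
  letI : ∀ p : Prop, Decidable p := fun p => Classical.propDecidable p
  {c | 0 < volume {d : {i : β // i ∉ Set.range φ} → ℝ |
    (fun i : β => if h : i ∈ Set.range φ then c h.choose else d ⟨i, h⟩) ∈ b}}

/-- The lift `b_{↑φ}` of a body `b ⊆ [0,1]^α` along `φ : α → β`. -/
def liftBody {α β : Type} (φ : α → β) (b : Set (α → ℝ)) : Set (β → ℝ) :=
  {c | c ∈ unitCube β ∧ (fun j => c (φ j)) ∈ b}

/-- The upper shadow `∂⁺_{V_n}(b)` of a body `b ⊆ [0,1]^{V_N}`. -/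
def Ssee.upperShadow (S : Ssee) (N n : ℕ) (b : Set (S.V N → ℝ)) : Set (S.V n → ℝ) :=
  ⋃ φ ∈ S.emb N n, liftBody φ b

/-- A hereditary `[0,1]`-decoration property: a sequence of measurable subsets of the
unit cubes whose complements (within the cubes) are closed under upper shadows. -/
def Ssee.Hereditary (S : Ssee) (P : ∀ n, Set (S.V n → ℝ)) : Prop :=
  (∀ n, MeasurableSet (P n) ∧ P n ⊆ unitCube (S.V n)) ∧
  ∀ N n, N ≤ n → S.upperShadow N n (unitCube (S.V N) \ P N) ⊆ unitCube (S.V n) \ P n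

/-- Expectation of `f φ` over an embedding `φ` chosen uniformly from `emb N n`. -/
def Ssee.expProj (S : Ssee) (N n : ℕ) (f : (S.V N → S.V n) → ℝ) : ℝ :=
  (∑ φ ∈ S.emb N n, f φ) / ((S.emb N n).card : ℝ)

/-- The entropy `Ent(b) = -log vol(b)`, valued in `EReal` (so `Ent(b) = ⊤` when
`vol(b) = 0`). -/
def entE {ι : Type} [Fintype ι] (b : Set (ι → ℝ)) : EReal := -(ENNReal.log (volume b))

/-- Extremal entropy `ex(V_n, P_n) = inf { Ent(b) : b a box with vol(b \ P_n) = 0 }`. -/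
def Ssee.exEnt (S : Ssee) (P : ∀ n, Set (S.V n → ℝ)) (n : ℕ) : EReal :=
  sInf {e : EReal | ∃ b : Set (S.V n → ℝ), IsBox b ∧ volume (b \ P n) = 0 ∧ e = entE b}

/-!
Cut the line into finitely many intervals, the cells, such that membership in `b` depends only on
the cells of the coordinates; `b` is then a finite set `P` of assignments of cells to the points of
`V_N`. A pair of an embedding `φ` and an assignment `h ∈ P` is an edge `{(φ j, h j) | j}` of a
hypergraph on the pairs of a point of `V_n` and a cell. A point of `[0,1]^{V_n}` outside the upper
shadow of `b` is an independent set, every set of vertices is a simple box `c`, and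
`E_φ vol(c_{↓φ} ∩ b)` is at most the number of edges inside `c` divided by the number of embeddings.
By goodness the number of edges grows faster than linearly and few pairs of edges share two or more
vertices.

So it suffices to cover the independent sets of such a hypergraph by few sets of vertices spanning
few edges. When the degrees are bounded by a multiple of the average and the codegrees are small,
this is an induction on the rank. Let `I` be independent and `A` its current container. If `I` has
few vertices of high degree within `A`, guessing these and deleting all others of high degree from
`A` leaves few edges. Otherwise a small set `T ⊆ I` of them, the fingerprint, already has a dense
link: the edges through `T` with one vertex of `T` removed, again with bounded degrees and few
overlaps. As `I` is independent in the link, the induction hypothesis confines it to a set spanning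
few edges of the link, which misses a positive proportion of the vertices of `A`. After boundedly
many rounds only the first case is left. Small codegrees are arranged by deleting the edges with
many overlaps, and the few vertices of exceptionally high degree are handled by guessing their
intersection with `I`.
-/

open scoped Finset

section Covers

variable {β : Type*} [Preorder β]

/-- `CoveredBy 𝓘 𝒢 M`: the members of `𝓘` have at most `M` containers, all of them in `𝒢`,
where `C` is a container for `I` if `I ≤ C`. -/
def CoveredBy (𝓘 𝒢 : Set β) (M : ℝ) : Prop :=
  ∃ 𝒞 : Finset β, #𝒞 ≤ M ∧ (∀ C ∈ 𝒞, C ∈ 𝒢) ∧ ∀ I ∈ 𝓘, ∃ C ∈ 𝒞, I ≤ C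

namespace CoveredBy

variable {𝓘 𝓙 𝒢 𝓗 : Set β} {M N : ℝ}

lemma map (h : CoveredBy 𝓘 𝒢 M) (f : β → β) (hf : MapsTo f 𝒢 𝓗)
    (hle : ∀ J ∈ 𝓙, J ∈ 𝓘 ∧ ∀ C, J ≤ C → J ≤ f C) : CoveredBy 𝓙 𝓗 M := by
  classical
  obtain ⟨𝒞, hcard, h𝒢, hcover⟩ := h
  refine ⟨𝒞.image f, le_trans (mod_cast Finset.card_image_le) hcard, ?_, fun J hJ => ?_⟩
  · simpa only [Finset.forall_mem_image] using fun C hC => hf (h𝒢 C hC)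
  · obtain ⟨C, hC, hJC⟩ := hcover J (hle J hJ).1
    exact ⟨f C, Finset.mem_image_of_mem f hC, (hle J hJ).2 C hJC⟩

lemma mono (h : CoveredBy 𝓘 𝒢 M) (h𝓘 : 𝓙 ⊆ 𝓘) (h𝒢 : 𝒢 ⊆ 𝓗) (hM : M ≤ N) : CoveredBy 𝓙 𝓗 N :=
  let ⟨𝒞, hcard, h𝒞, hcover⟩ := h
  ⟨𝒞, hcard.trans hM, fun C hC => h𝒢 (h𝒞 C hC), fun J hJ => hcover J (h𝓘 hJ)⟩

lemma of_nonempty (hM : 0 ≤ M) (h : 𝓘.Nonempty → CoveredBy 𝓘 𝒢 M) : CoveredBy 𝓘 𝒢 M := by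
  obtain rfl | hne := 𝓘.eq_empty_or_nonempty
  · exact ⟨∅, by simpa using hM, by simp, by simp⟩
  · exact h hne

lemma of_finset {ι : Type*} (s : Finset ι) (f : ι → β) (hf : ∀ i ∈ s, f i ∈ 𝒢)
    (h : ∀ I ∈ 𝓘, ∃ i ∈ s, I ≤ f i) : CoveredBy 𝓘 𝒢 #s := by
  classical
  refine ⟨s.image f, mod_cast Finset.card_image_le, by simpa using hf, fun I hI => ?_⟩
  obtain ⟨i, hi, hIi⟩ := h I hI
  exact ⟨f i, Finset.mem_image_of_mem f hi, hIi⟩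

lemma biUnion {ι : Type*} {s : Finset ι} {𝓘 : ι → Set β} (h : ∀ i ∈ s, CoveredBy (𝓘 i) 𝒢 M) :
    CoveredBy (⋃ i ∈ s, 𝓘 i) 𝒢 (#s * M) := by
  classical
  choose! 𝒞 hcard h𝒢 hcover using h
  refine ⟨s.biUnion 𝒞, ?_, ?_, fun I hI => ?_⟩
  · calc (#(s.biUnion 𝒞) : ℝ) ≤ ∑ i ∈ s, (#(𝒞 i) : ℝ) := mod_cast Finset.card_biUnion_le
      _ ≤ #s * M := by simpa using Finset.sum_le_card_nsmul s _ M hcard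
  · simpa only [Finset.mem_biUnion] using fun C ⟨i, hi, hC⟩ => h𝒢 i hi C hC
  · obtain ⟨i, hi, hI⟩ := mem_iUnion₂.1 hI
    obtain ⟨C, hC, hIC⟩ := hcover i hi I hI
    exact ⟨C, Finset.mem_biUnion.2 ⟨i, hi, hC⟩, hIC⟩

lemma union (h𝓘 : CoveredBy 𝓘 𝒢 M) (h𝓙 : CoveredBy 𝓙 𝒢 N) : CoveredBy (𝓘 ∪ 𝓙) 𝒢 (M + N) := by
  classical
  obtain ⟨𝒞, hcard, h𝒞, hcover⟩ := h𝓘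
  obtain ⟨𝒟, hcard', h𝒟, hcover'⟩ := h𝓙
  refine ⟨𝒞 ∪ 𝒟, ?_, ?_, ?_⟩
  · exact le_trans (mod_cast Finset.card_union_le 𝒞 𝒟) (add_le_add hcard hcard')
  · simpa only [Finset.mem_union] using fun C hC => hC.elim (h𝒞 C) (h𝒟 C)
  · rintro I (hI | hI)
    · exact (hcover I hI).imp fun C hC => ⟨Finset.mem_union_left _ hC.1, hC.2⟩
    · exact (hcover' I hI).imp fun C hC => ⟨Finset.mem_union_right _ hC.1, hC.2⟩

lemma trans (hN : 0 ≤ N) (h : CoveredBy 𝓘 𝒢 M) (h' : ∀ B ∈ 𝒢, CoveredBy (𝓘 ∩ Iic B) 𝓗 N) :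
    CoveredBy 𝓘 𝓗 (M * N) := by
  obtain ⟨𝒞, hcard, h𝒢, hcover⟩ := h
  refine (biUnion fun B hB => h' B (h𝒢 B hB)).mono (fun I hI => ?_) subset_rfl
    (mul_le_mul_of_nonneg_right hcard hN)
  obtain ⟨B, hB, hIB⟩ := hcover I hI
  exact mem_iUnion₂.2 ⟨B, hB, hI, hIB⟩

lemma iterate {W : Type*} {𝓘 𝒢 : Set (Finset W)} {M N b : ℝ} (hM : 0 ≤ M) (hN : 0 ≤ N)
    (h : ∀ A, ∃ 𝓛, CoveredBy 𝓛 𝒢 M ∧ CoveredBy ((𝓘 ∩ Iic A) \ 𝓛) {C | #C + b ≤ #A} N)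
    (R : ℕ) (A : Finset W) (hA : #A < R * b) : CoveredBy (𝓘 ∩ Iic A) 𝒢 (M * (1 + N) ^ R) := by
  induction R generalizing A with
  | zero => exact absurd hA (by simp)
  | succ R ih =>
    obtain ⟨𝓛, hlight, hheavy⟩ := h A
    have hrest : CoveredBy ((𝓘 ∩ Iic A) \ 𝓛) 𝒢 (N * (M * (1 + N) ^ R)) := by
      refine hheavy.trans (by positivity) fun B hB => (ih B ?_).mono ?_ subset_rfl le_rfl
      · push_cast at hA
        linarith [hB.out]
      · exact inter_subset_inter_left _ fun I hI => hI.1.1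
    refine (hlight.union hrest).mono (fun I hI => ?_) subset_rfl ?_
    · by_cases hI𝓛 : I ∈ 𝓛
      · exact Or.inl hI𝓛
      · exact Or.inr ⟨hI, hI𝓛⟩
    · have hpow : M * 1 ≤ M * (1 + N) ^ R := by
        gcongr
        exact one_le_pow₀ (by linarith)
      linear_combination hpow

end CoveredBy

end Covers

section SmallSubsets

/-- The subsets of `W` with at most `t` elements. -/
def smallSubsets (W : Type*) [Fintype W] (t : ℝ) : Finset (Finset W) := {T | (#T : ℝ) ≤ t}

@[simp] lemma mem_smallSubsets {W : Type*} [Fintype W] {t : ℝ} {T : Finset W} :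
    T ∈ smallSubsets W t ↔ (#T : ℝ) ≤ t := by
  simp [smallSubsets]

lemma smallSubsets_mono {W : Type*} [Fintype W] {t u : ℝ} (h : t ≤ u) :
    smallSubsets W t ⊆ smallSubsets W u := fun _ hT =>
  mem_smallSubsets.2 ((mem_smallSubsets.1 hT).trans h)

lemma card_smallSubsets_mul_rpow_le (W : Type*) [Fintype W] {x : ℝ} (hx : 0 < x) (hx1 : x ≤ 1)
    (t : ℝ) : #(smallSubsets W t) * x ^ t ≤ (1 + x) ^ Fintype.card W := by
  calc #(smallSubsets W t) * x ^ t ≤ ∑ T ∈ smallSubsets W t, x ^ #T := by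
        rw [← nsmul_eq_mul]
        refine Finset.card_nsmul_le_sum _ _ _ fun T hT => ?_
        rw [← Real.rpow_natCast]
        exact Real.rpow_le_rpow_of_exponent_ge hx hx1 (mem_smallSubsets.1 hT)
    _ ≤ ∑ T : Finset W, x ^ #T :=
        Finset.sum_le_sum_of_subset_of_nonneg (Finset.subset_univ _) fun _ _ _ => by positivity
    _ = (1 + x) ^ Fintype.card W := by
        simpa [add_comm] using Fintype.sum_pow_mul_eq_add_pow W x 1

lemma exists_card_smallSubsets_le_exp {δ : ℝ} (hδ : 0 < δ) :
    ∃ q > 0, ∀ (W : Type*) [Fintype W],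
      #(smallSubsets W (q * Fintype.card W)) ≤ Real.exp (δ * Fintype.card W) := by
  set x : ℝ := min 1 (δ / 2)
  have hx : 0 < x := lt_min one_pos (by positivity)
  have hlog : 0 < 1 - Real.log x := by
    linarith [Real.log_nonpos hx.le (min_le_left 1 (δ / 2))]
  refine ⟨δ / 2 / (1 - Real.log x), by positivity, fun W _ => ?_⟩
  set q : ℝ := δ / 2 / (1 - Real.log x)
  set m := (Fintype.card W : ℝ)
  have hq : q * (1 - Real.log x) = δ / 2 := div_mul_cancel₀ _ hlog.ne'
  have hpow : (1 + x) ^ Fintype.card W ≤ Real.exp (m * x) := by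
    rw [Real.exp_nat_mul, add_comm]
    gcongr
    exact Real.add_one_le_exp x
  have hcard := (card_smallSubsets_mul_rpow_le W hx (min_le_left _ _) (q * m)).trans hpow
  rw [Real.rpow_def_of_pos hx, ← le_div_iff₀ (Real.exp_pos _), ← Real.exp_sub] at hcard
  refine hcard.trans (Real.exp_le_exp.2 ?_)
  have hm : m * x ≤ m * (δ / 2) := by gcongr; exact min_le_right _ _
  have hqm : 0 ≤ q * m := by positivity
  linear_combination hm + m * hq + hqm

end SmallSubsets

/-- A finite hypergraph on the vertex set `W` whose edges are labelled by elements of `α`. Distinct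
labels may carry the same vertex set: passing to links and traces creates such repetitions, and
edges are always counted by label. -/
structure LabelledHypergraph (W α : Type*) where
  edges : Finset α
  support : α → Finset W

namespace LabelledHypergraph

section Basic

variable {W α : Type*} {G H : LabelledHypergraph W α} {E : Finset α} {r : ℕ} {d Δ : ℝ}

/-- `G ≤ H` if the labels of `G` are labels of `H`, with smaller vertex sets in `G`. -/
instance : Preorder (LabelledHypergraph W α) where
  le G H := G.edges ⊆ H.edges ∧ ∀ e ∈ G.edges, G.support e ⊆ H.support e
  le_refl _ := ⟨subset_rfl, fun _ _ => subset_rfl⟩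
  le_trans _ _ _ h h' := ⟨h.1.trans h'.1, fun e he => (h.2 e he).trans (h'.2 e (h.1 he))⟩

/-- The hypergraph with the same vertex sets and only the labels in `E`. -/
def restrict (H : LabelledHypergraph W α) (E : Finset α) : LabelledHypergraph W α :=
  ⟨E, H.support⟩

/-- Every edge has at most `r` vertices. -/
def RankLE (H : LabelledHypergraph W α) (r : ℕ) : Prop := ∀ e ∈ H.edges, #(H.support e) ≤ r

/-- The vertex sets containing no edge. -/
def indepSets (H : LabelledHypergraph W α) : Set (Finset W) :=
  {I | ∀ e ∈ H.edges, ¬H.support e ⊆ I}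

lemma restrict_le (hE : E ⊆ H.edges) : H.restrict E ≤ H := ⟨hE, fun _ _ => subset_rfl⟩

lemma support_nonempty_of_mem_indepSets {I : Finset W} (hI : I ∈ H.indepSets) {e : α}
    (he : e ∈ H.edges) : (H.support e).Nonempty :=
  Finset.nonempty_iff_ne_empty.2 fun h => hI e he (h ▸ Finset.empty_subset I)

lemma RankLE.of_le (hH : H.RankLE r) (hGH : G ≤ H) : G.RankLE r := fun e he =>
  (Finset.card_le_card (hGH.2 e he)).trans (hH e (hGH.1 he))

variable [DecidableEq W]

/-- The edges contained in `C`. -/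
def edgesIn (H : LabelledHypergraph W α) (C : Finset W) : Finset α :=
  {e ∈ H.edges | H.support e ⊆ C}

/-- The edges that have a vertex in `X`. -/
def edgesMeeting (H : LabelledHypergraph W α) (X : Finset W) : Finset α :=
  {e ∈ H.edges | ¬Disjoint (H.support e) X}

/-- The edges that have no vertex in `X`. -/
def edgesAvoiding (H : LabelledHypergraph W α) (X : Finset W) : Finset α :=
  {e ∈ H.edges | Disjoint (H.support e) X}

/-- The number of edges through `v`. -/
def degree (H : LabelledHypergraph W α) (v : W) : ℕ := #{e ∈ H.edges | v ∈ H.support e}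

/-- The number of edges through both `u` and `v`. -/
def codegree (H : LabelledHypergraph W α) (u v : W) : ℕ :=
  #{e ∈ H.edges | u ∈ H.support e ∧ v ∈ H.support e}

/-- The vertices of degree at least `d`. -/
def highDegree [Fintype W] (H : LabelledHypergraph W α) (d : ℝ) : Finset W :=
  {v | d ≤ H.degree v}

/-- The ordered pairs of distinct edges sharing at least two vertices. -/
def overlaps [DecidableEq α] (H : LabelledHypergraph W α) : Finset (α × α) :=
  {p ∈ H.edges.offDiag | 1 < #(H.support p.1 ∩ H.support p.2)}

lemma edgesIn_subset (H : LabelledHypergraph W α) (C : Finset W) : H.edgesIn C ⊆ H.edges :=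
  Finset.filter_subset _ _

lemma degree_le_of_le (hGH : G ≤ H) (v : W) : G.degree v ≤ H.degree v :=
  Finset.card_le_card fun e he => by
    simp only [Finset.mem_filter] at he ⊢
    exact ⟨hGH.1 he.1, hGH.2 e he.1 he.2⟩

lemma codegree_le_of_le (hGH : G ≤ H) (u v : W) : G.codegree u v ≤ H.codegree u v :=
  Finset.card_le_card fun e he => by
    simp only [Finset.mem_filter] at he ⊢
    exact ⟨hGH.1 he.1, hGH.2 e he.1 he.2.1, hGH.2 e he.1 he.2.2⟩

lemma card_overlaps_le_of_le [DecidableEq α] (hGH : G ≤ H) : #G.overlaps ≤ #H.overlaps :=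
  Finset.card_le_card fun p hp => by
    simp only [overlaps, Finset.mem_filter, Finset.mem_offDiag] at hp ⊢
    obtain ⟨⟨h₁, h₂, hne⟩, hp⟩ := hp
    exact ⟨⟨hGH.1 h₁, hGH.1 h₂, hne⟩, hp.trans_le <| Finset.card_le_card <|
      Finset.inter_subset_inter (hGH.2 _ h₁) (hGH.2 _ h₂)⟩

lemma sum_degree_le (hH : H.RankLE r) (J : Finset W) : ∑ v ∈ J, H.degree v ≤ #H.edges * r := by
  calc ∑ v ∈ J, H.degree v = ∑ e ∈ H.edges, #{v ∈ J | v ∈ H.support e} :=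
        Finset.sum_card_bipartiteAbove_eq_sum_card_bipartiteBelow _
    _ ≤ #H.edges * r := by
        rw [← smul_eq_mul]
        refine Finset.sum_le_card_nsmul _ _ _ fun e he => le_trans ?_ (hH e he)
        exact Finset.card_mono fun v hv => (Finset.mem_filter.1 hv).2

lemma card_highDegree_mul_le [Fintype W] (hH : H.RankLE r) (d : ℝ) :
    #(H.highDegree d) * d ≤ #H.edges * r := by
  calc #(H.highDegree d) * d ≤ ∑ v ∈ H.highDegree d, (H.degree v : ℝ) := by
        rw [← nsmul_eq_mul]
        exact Finset.card_nsmul_le_sum _ _ _ fun v hv => (Finset.mem_filter.1 hv).2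
    _ ≤ #H.edges * r := mod_cast sum_degree_le hH _

lemma card_edgesMeeting_le {X : Finset W} (hΔ : ∀ v ∈ X, H.degree v ≤ Δ) :
    #(H.edgesMeeting X) ≤ #X * Δ := by
  classical
  have hsub : H.edgesMeeting X ⊆ X.biUnion fun v => {e ∈ H.edges | v ∈ H.support e} := by
    intro e he
    obtain ⟨he, hX⟩ := Finset.mem_filter.1 he
    obtain ⟨v, hve, hvX⟩ := Finset.not_disjoint_iff.1 hX
    exact Finset.mem_biUnion.2 ⟨v, hvX, Finset.mem_filter.2 ⟨he, hve⟩⟩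
  calc (#(H.edgesMeeting X) : ℝ) ≤ ∑ v ∈ X, (H.degree v : ℝ) :=
        mod_cast (Finset.card_le_card hsub).trans Finset.card_biUnion_le
    _ ≤ #X * Δ := by simpa using Finset.sum_le_card_nsmul X _ Δ hΔ

lemma card_edges_le_add_edgesMeeting {A : Finset W} (hA : ∀ e ∈ H.edges, H.support e ⊆ A)
    (C : Finset W) : #H.edges ≤ #(H.edgesIn C) + #(H.edgesMeeting (A \ C)) := by
  rw [edgesIn, ← Finset.card_filter_add_card_filter_not fun e => H.support e ⊆ C]
  gcongr
  intro e he
  obtain ⟨he, hC⟩ := Finset.mem_filter.1 he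
  obtain ⟨v, hve, hvC⟩ := Finset.not_subset.1 hC
  exact Finset.mem_filter.2
    ⟨he, Finset.not_disjoint_iff.2 ⟨v, hve, Finset.mem_sdiff.2 ⟨hA e he hve, hvC⟩⟩⟩

lemma coveredBy_indepSets_of_rankLE_one [Finite W] (hH : H.RankLE 1) :
    CoveredBy H.indepSets {C | H.edgesIn C = ∅} 1 := by
  have := Fintype.ofFinite W
  refine .of_nonempty zero_le_one fun ⟨J, hJ⟩ => ?_
  have hsupp : ∀ e ∈ H.edges, ∃ w, H.support e = {w} := fun e he =>
    Finset.card_eq_one.1 <| le_antisymm (hH e he) <| Finset.card_pos.2 <|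
      Finset.nonempty_iff_ne_empty.2 fun h => hJ e he (by simp [h])
  let C : Finset W := {w | ∀ e ∈ H.edges, H.support e ≠ {w}}
  refine ⟨{C}, by simp, fun C' hC' => ?_, fun I hI => ⟨C, Finset.mem_singleton_self C, ?_⟩⟩
  · obtain rfl := Finset.mem_singleton.1 hC'
    refine Finset.filter_eq_empty_iff.2 fun e he heC => ?_
    obtain ⟨w, hw⟩ := hsupp e he
    exact (Finset.mem_filter.1 (heC (hw ▸ Finset.mem_singleton_self w))).2 e he hw
  · intro w hw
    exact Finset.mem_filter.2 ⟨Finset.mem_univ w, fun e he h => hI e he (by simpa [h] using hw)⟩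

variable [DecidableEq α]

/-- The other edges sharing at least two vertices with the edge `e`. -/
def overlapsWith (H : LabelledHypergraph W α) (e : α) : Finset α :=
  {e' ∈ H.edges | e ≠ e' ∧ 1 < #(H.support e ∩ H.support e')}

lemma sum_card_overlapsWith : ∑ e ∈ H.edges, #(H.overlapsWith e) = #H.overlaps := by
  rw [← Finset.card_sigma]
  refine Finset.card_bij (fun p _ => (p.1, p.2)) ?_ ?_ ?_
  · simp +contextual [overlapsWith, overlaps]
  · rintro ⟨a, b⟩ _ ⟨c, d⟩ _ h
    simpa using h
  · rintro ⟨a, b⟩ h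
    exact ⟨⟨a, b⟩, by simp_all [overlapsWith, overlaps], rfl⟩

lemma codegree_le_card_overlapsWith {e : α} {u v : W} (huv : u ≠ v) (hu : u ∈ H.support e)
    (hv : v ∈ H.support e) : H.codegree u v ≤ #(H.overlapsWith e) + 1 := by
  refine le_trans (Finset.card_le_card fun e' he' => ?_) (Finset.card_insert_le e _)
  obtain ⟨he', hu', hv'⟩ := Finset.mem_filter.1 he'
  obtain rfl | hne := eq_or_ne e e'
  · exact Finset.mem_insert_self _ _
  · refine Finset.mem_insert_of_mem (Finset.mem_filter.2 ⟨he', hne, ?_⟩)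
    exact Finset.one_lt_card.2 ⟨u, by simp [hu, hu'], v, by simp [hv, hv'], huv⟩

lemma exists_codegree_le {w x : ℝ} (hw : 2 ≤ w) (hH : #H.overlaps ≤ x * (w / 2)) :
    ∃ E ⊆ H.edges, #H.edges ≤ #E + x ∧ ∀ u v, u ≠ v → (H.restrict E).codegree u v ≤ w := by
  have hsub : {e ∈ H.edges | #(H.overlapsWith e) ≤ w / 2} ⊆ H.edges := Finset.filter_subset _ _
  refine ⟨_, hsub, ?_, fun u v huv => ?_⟩
  · have hmarkov : #{e ∈ H.edges | ¬#(H.overlapsWith e) ≤ w / 2} * (w / 2) ≤ #H.overlaps := by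
      rw [← sum_card_overlapsWith, ← nsmul_eq_mul, Nat.cast_sum]
      refine (Finset.card_nsmul_le_sum _ _ _ fun e he => ?_).trans
        (Finset.sum_le_sum_of_subset_of_nonneg (Finset.filter_subset _ H.edges) (by simp))
      exact (not_le.1 (Finset.mem_filter.1 he).2).le
    rw [← H.edges.card_filter_add_card_filter_not fun e => #(H.overlapsWith e) ≤ w / 2]
    push_cast
    gcongr
    exact le_of_mul_le_mul_right (hmarkov.trans hH) (by linarith)
  · obtain h | ⟨e, he⟩ := Finset.eq_empty_or_nonempty
      {e ∈ (H.restrict {e ∈ H.edges | #(H.overlapsWith e) ≤ w / 2}).edges |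
        u ∈ H.support e ∧ v ∈ H.support e}
    · exact (Nat.cast_eq_zero.2 (Finset.card_eq_zero.2 h)).trans_le (by linarith)
    · obtain ⟨he, hue, hve⟩ := Finset.mem_filter.1 he
      calc ((H.restrict _).codegree u v : ℝ) ≤ #(H.overlapsWith e) + 1 :=
            mod_cast (codegree_le_of_le (restrict_le hsub) u v).trans
              (codegree_le_card_overlapsWith huv hue hve)
        _ ≤ w := by linarith [(Finset.mem_filter.1 he).2]

end Basic

section Links

variable {W α : Type*} [DecidableEq W] {G H : LabelledHypergraph W α} {T J : Finset W}
  {s : ℕ} {Δ κ y : ℝ}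

/-- `G` consists of edges of `H` with one vertex removed each, the removed vertex lying in `T`. An
independent set of `H` containing `T` is then independent in `G`. -/
def IsLink (H G : LabelledHypergraph W α) (T : Finset W) : Prop :=
  G.edges ⊆ H.edges ∧ ∀ e ∈ G.edges, ∃ v ∈ T, v ∈ H.support e ∧ G.support e = (H.support e).erase v

lemma IsLink.le (h : H.IsLink G T) : G ≤ H :=
  ⟨h.1, fun e he => let ⟨_, _, _, hG⟩ := h.2 e he; hG ▸ Finset.erase_subset _ _⟩

lemma IsLink.rankLE (h : H.IsLink G T) (hH : H.RankLE (s + 1)) : G.RankLE s := fun e he => by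
  obtain ⟨v, -, hv, hG⟩ := h.2 e he
  rw [hG, Finset.card_erase_of_mem hv]
  exact Nat.sub_le_of_le_add (hH e (h.1 he))

lemma IsLink.mem_indepSets {I : Finset W} (h : H.IsLink G T) (hI : I ∈ H.indepSets) (hT : T ⊆ I) :
    I ∈ G.indepSets := fun e he heI => by
  obtain ⟨v, hvT, hv, hG⟩ := h.2 e he
  refine hI e (h.1 he) ?_
  rw [← Finset.insert_erase hv, ← hG]
  exact Finset.insert_subset (hT hvT) heI

lemma IsLink.card_edges_le (h : H.IsLink G T) (hΔ : ∀ v, H.degree v ≤ Δ) : #G.edges ≤ #T * Δ := by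
  refine le_trans (mod_cast Finset.card_le_card fun e he => ?_)
    (card_edgesMeeting_le fun v _ => hΔ v)
  obtain ⟨v, hvT, hv, -⟩ := h.2 e he
  exact Finset.mem_filter.2 ⟨h.1 he, Finset.not_disjoint_iff.2 ⟨v, hv, hvT⟩⟩

lemma IsLink.card_union_highDegree_le [Fintype W] (h : H.IsLink G T) (hH : H.RankLE (s + 1))
    (hΔ : ∀ v, H.degree v ≤ Δ) (hκ : 0 < κ) :
    #(T ∪ G.highDegree κ) ≤ #T + s * (#T * Δ) / κ := by
  have hhigh : #(G.highDegree κ) * κ ≤ s * (#T * Δ) := by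
    refine (card_highDegree_mul_le (h.rankLE hH) κ).trans ?_
    rw [mul_comm]
    gcongr
    exact h.card_edges_le hΔ
  rw [← le_div_iff₀ hκ] at hhigh
  calc (#(T ∪ G.highDegree κ) : ℝ) ≤ #T + #(G.highDegree κ) := mod_cast Finset.card_union_le _ _
    _ ≤ #T + s * (#T * Δ) / κ := by gcongr

lemma exists_lt_degree_avoiding {r : ℕ} {X : Finset W} (hH : H.RankLE r)
    (hJ : #(H.edgesMeeting X) * r + #J * y < ∑ v ∈ J, (H.degree v : ℝ)) :
    ∃ v ∈ J, y < (H.restrict (H.edgesAvoiding X)).degree v := by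
  have hsplit (v : W) : H.degree v =
      (H.restrict (H.edgesMeeting X)).degree v + (H.restrict (H.edgesAvoiding X)).degree v := by
    rw [degree, ← Finset.card_filter_add_card_filter_not fun e => ¬Disjoint (H.support e) X]
    simp only [not_not]
    rw [Finset.filter_comm, Finset.filter_comm (fun e => v ∈ H.support e)]
    rfl
  have hmeet : ∑ v ∈ J, ((H.restrict (H.edgesMeeting X)).degree v : ℝ) ≤
      #(H.edgesMeeting X) * r :=
    mod_cast sum_degree_le (hH.of_le (restrict_le (Finset.filter_subset _ _))) J
  simp only [hsplit, Nat.cast_add, Finset.sum_add_distrib] at hJ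
  refine Finset.exists_lt_of_sum_lt ?_
  rw [Finset.sum_const, nsmul_eq_mul]
  linarith

section AddLink

variable [DecidableEq α] {E : Finset α}

/-- The edges of `G`, together with the edges in `E` through `v` with the vertex `v` removed. -/
def addLink (H G : LabelledHypergraph W α) (E : Finset α) (v : W) : LabelledHypergraph W α where
  edges := G.edges ∪ {e ∈ E | v ∈ H.support e}
  support e := if e ∈ G.edges then G.support e else (H.support e).erase v

lemma IsLink.addLink (h : H.IsLink G T) (hE : E ⊆ H.edges) (hEG : Disjoint G.edges E) (v : W) :
    H.IsLink (H.addLink G E v) (insert v T) := by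
  refine ⟨Finset.union_subset h.1 ((Finset.filter_subset _ _).trans hE), fun e he => ?_⟩
  obtain heG | he := Finset.mem_union.1 he
  · obtain ⟨w, hwT, hw, hGw⟩ := h.2 e heG
    exact ⟨w, Finset.mem_insert_of_mem hwT, hw, (if_pos heG).trans hGw⟩
  · obtain ⟨heE, hve⟩ := Finset.mem_filter.1 he
    exact ⟨v, Finset.mem_insert_self v T, hve, if_neg (Finset.disjoint_right.1 hEG heE)⟩

lemma card_edges_addLink (hEG : Disjoint G.edges E) (v : W) :
    #(H.addLink G E v).edges = #G.edges + (H.restrict E).degree v :=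
  Finset.card_union_of_disjoint (hEG.mono_right (Finset.filter_subset _ _))

lemma degree_addLink_le (hEG : Disjoint G.edges E) (u v : W) :
    (H.addLink G E v).degree u ≤
      G.degree u + #{e ∈ E | u ≠ v ∧ u ∈ H.support e ∧ v ∈ H.support e} := by
  rw [degree, LabelledHypergraph.addLink, Finset.filter_union]
  refine (Finset.card_union_le _ _).trans (add_le_add ?_ ?_) <;>
    refine Finset.card_le_card fun e he => ?_ <;>
    simp only [Finset.mem_filter] at he ⊢
  · exact ⟨he.1, by simpa [he.1] using he.2⟩
  · obtain ⟨⟨heE, hve⟩, hu⟩ := he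
    rw [if_neg (Finset.disjoint_right.1 hEG heE), Finset.mem_erase] at hu
    exact ⟨heE, hu.1, hu.2, hve⟩

end AddLink

lemma IsLink.exists_insert [Fintype W] (h : H.IsLink G T) (hG : ∀ v, G.degree v ≤ 2 * κ)
    (hcodeg : ∀ u v, u ≠ v → H.codegree u v ≤ κ) (v : W) :
    ∃ G', H.IsLink G' (insert v T) ∧ (∀ u, G'.degree u ≤ 2 * κ) ∧
      #G'.edges = #G.edges + (H.restrict (H.edgesAvoiding (T ∪ G.highDegree κ))).degree v := by
  classical
  set E := H.edgesAvoiding (T ∪ G.highDegree κ)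
  have hE {e : α} (he : e ∈ E) {u : W} (hu : u ∈ H.support e) : u ∉ T ∪ G.highDegree κ :=
    Finset.disjoint_left.1 (Finset.mem_filter.1 he).2 hu
  have hEG : Disjoint G.edges E := Finset.disjoint_left.2 fun e heG he =>
    let ⟨_, huT, hu, _⟩ := h.2 e heG
    hE he hu (Finset.mem_union_left _ huT)
  refine ⟨H.addLink G E v, h.addLink (Finset.filter_subset _ _) hEG v, fun u => ?_,
    card_edges_addLink hEG v⟩
  have hle : ((H.addLink G E v).degree u : ℝ) ≤
      G.degree u + #{e ∈ E | u ≠ v ∧ u ∈ H.support e ∧ v ∈ H.support e} :=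
    mod_cast degree_addLink_le hEG u v
  refine hle.trans ?_
  by_cases hu : u ∈ G.highDegree κ
  · rw [Finset.filter_false_of_mem fun e he h' => hE he h'.2.1 (Finset.mem_union_right _ hu)]
    simpa using hG u
  · have hlow : (G.degree u : ℝ) < κ := by simpa [highDegree] using hu
    obtain rfl | huv := eq_or_ne u v
    · simp only [ne_eq, not_true_eq_false, false_and, Finset.filter_false, Finset.card_empty,
        Nat.cast_zero]
      linarith [Nat.cast_nonneg (α := ℝ) (G.degree u)]
    · have : (#{e ∈ E | u ≠ v ∧ u ∈ H.support e ∧ v ∈ H.support e} : ℝ) ≤ H.codegree u v := by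
        refine mod_cast Finset.card_le_card fun e he => ?_
        simp only [Finset.mem_filter, E, edgesAvoiding] at he ⊢
        exact ⟨he.1.1, he.2.2⟩
      linarith [hcodeg u v huv]

lemma exists_link [Finite W] (hH : H.RankLE (s + 1)) (hΔ0 : 0 ≤ Δ) (hΔ : ∀ v, H.degree v ≤ Δ)
    (hκ : 0 < κ) (hcodeg : ∀ u v, u ≠ v → H.codegree u v ≤ κ) (n : ℕ)
    (hJ : (n + s * (n * Δ) / κ) * Δ * (s + 1) + #J * y < ∑ v ∈ J, (H.degree v : ℝ)) :
    ∃ T ⊆ J, #T ≤ n ∧ ∃ G, H.IsLink G T ∧ (∀ v, G.degree v ≤ 2 * κ) ∧ n * y ≤ #G.edges := by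
  have := Fintype.ofFinite W
  induction n with
  | zero =>
    refine ⟨∅, by simp, by simp, ⟨∅, H.support⟩, ⟨by simp, by simp⟩, fun v => ?_, by simp⟩
    simp [degree, hκ.le]
  | succ n ih =>
    have hJn : (n + s * (n * Δ) / κ) * Δ * (s + 1) + #J * y < ∑ v ∈ J, (H.degree v : ℝ) := by
      refine hJ.trans_le' ?_
      push_cast
      gcongr <;> linarith
    obtain ⟨T, hTJ, hT, G, hlink, hdeg, hcard⟩ := ih hJn
    have hmeet : #(H.edgesMeeting (T ∪ G.highDegree κ)) ≤ (n + s * (n * Δ) / κ) * Δ := by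
      refine (card_edgesMeeting_le fun v _ => hΔ v).trans (mul_le_mul_of_nonneg_right ?_ hΔ0)
      exact (hlink.card_union_highDegree_le hH hΔ hκ).trans (by gcongr)
    obtain ⟨v, hvJ, hv⟩ := exists_lt_degree_avoiding (y := y) hH <| hJn.trans_le' <| by
      push_cast
      gcongr
    obtain ⟨G', hlink', hdeg', hcard'⟩ := hlink.exists_insert hdeg hcodeg v
    refine ⟨insert v T, Finset.insert_subset hvJ hTJ,
      (Finset.card_insert_le v T).trans (by gcongr), G', hlink', hdeg', ?_⟩
    rw [hcard']
    push_cast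
    linarith

end Links

section Round

variable {W α : Type*} [DecidableEq W] {G H : LabelledHypergraph W α} {A C : Finset W}
  {s n : ℕ} {Δ θ κ t x y b M : ℝ}

lemma card_inter_add_le (hA : ∀ e ∈ G.edges, G.support e ⊆ A) (hκ : 0 < κ)
    (hG : ∀ v, G.degree v ≤ κ) (hC : #(G.edgesIn C) + b * κ ≤ #G.edges) :
    #(A ∩ C) + b ≤ #A := by
  have hedges : (#G.edges : ℝ) ≤ #(G.edgesIn C) + #(A \ C) * κ :=
    le_trans (mod_cast card_edges_le_add_edgesMeeting hA C)
      (add_le_add_right (card_edgesMeeting_le fun v _ => hG v) _)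
  have hb : b ≤ #(A \ C) := le_of_mul_le_mul_right (by linarith) hκ
  have hcard : (#(A ∩ C) + #(A \ C) : ℝ) = #A := mod_cast Finset.card_inter_add_card_sdiff A C
  linarith

lemma coveredBy_of_isLink {T : Finset W} (hlink : (H.restrict (H.edgesIn A)).IsLink G T)
    (hκ : 0 < κ) (hdeg : ∀ v, G.degree v ≤ κ) (hb : x + b * κ ≤ #G.edges)
    (hG : CoveredBy G.indepSets {C | #(G.edgesIn C) ≤ x} M) :
    CoveredBy {I ∈ H.indepSets | T ⊆ I ∧ I ⊆ A} {C | #C + b ≤ #A} M := by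
  have hGA : ∀ e ∈ G.edges, G.support e ⊆ A := fun e he =>
    (hlink.le.2 e he).trans (Finset.mem_filter.1 (hlink.1 he)).2
  refine hG.map (A ∩ ·) (fun C hC => card_inter_add_le hGA hκ hdeg ?_) fun I ⟨hI, hTI, hIA⟩ => ?_
  · exact (add_le_add_left hC.out _).trans hb
  · exact ⟨hlink.mem_indepSets (fun e he => hI e (edgesIn_subset H A he)) hTI,
      fun C hIC => Finset.subset_inter hIA hIC⟩

variable [Fintype W]

/-- The vertices lying in at least `θ` of the edges inside `A`. -/
def denseVertices (H : LabelledHypergraph W α) (A : Finset W) (θ : ℝ) : Finset W :=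
  (H.restrict (H.edgesIn A)).highDegree θ

lemma card_edgesIn_sdiff_denseVertices_union_le (hH : ∀ e ∈ H.edges, (H.support e).Nonempty)
    (hΔ : ∀ v, H.degree v ≤ Δ) (hθ : 0 ≤ θ) (A T : Finset W) :
    #(H.edgesIn (A \ H.denseVertices A θ ∪ T)) ≤ #T * Δ + Fintype.card W * θ := by
  classical
  set L := H.denseVertices A θ
  have hsub : H.edgesIn (A \ L ∪ T) ⊆
      H.edgesMeeting T ∪ (H.restrict (H.edgesIn A)).edgesMeeting Lᶜ := by
    intro e he
    obtain ⟨heH, heC⟩ := Finset.mem_filter.1 he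
    by_cases hT : Disjoint (H.support e) T
    · have heA := Finset.subset_sdiff.1 (hT.left_le_of_le_sup_right heC)
      obtain ⟨v, hv⟩ := hH e heH
      refine Finset.mem_union_right _ (Finset.mem_filter.2 ⟨Finset.mem_filter.2 ⟨heH, heA.1⟩, ?_⟩)
      exact Finset.not_disjoint_iff.2
        ⟨v, hv, Finset.mem_compl.2 (Finset.disjoint_left.1 heA.2 hv)⟩
    · exact Finset.mem_union_left _ (Finset.mem_filter.2 ⟨heH, hT⟩)
  have hsparse : #((H.restrict (H.edgesIn A)).edgesMeeting Lᶜ) ≤ #Lᶜ * θ :=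
    card_edgesMeeting_le fun v hv => (not_le.1 fun h => Finset.mem_compl.1 hv (by
      exact Finset.mem_filter.2 ⟨Finset.mem_univ v, h⟩)).le
  calc (#(H.edgesIn (A \ L ∪ T)) : ℝ)
      ≤ #(H.edgesMeeting T) + #((H.restrict (H.edgesIn A)).edgesMeeting Lᶜ) :=
        mod_cast (Finset.card_le_card hsub).trans (Finset.card_union_le _ _)
    _ ≤ #T * Δ + #Lᶜ * θ := add_le_add (card_edgesMeeting_le fun v _ => hΔ v) hsparse
    _ ≤ #T * Δ + Fintype.card W * θ := by gcongr; exact Finset.card_le_univ _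

lemma coveredBy_light (hΔ0 : 0 ≤ Δ) (hΔ : ∀ v, H.degree v ≤ Δ) (hθ : 0 ≤ θ) (A : Finset W) (t : ℝ) :
    CoveredBy {I ∈ H.indepSets | I ⊆ A ∧ #(I ∩ H.denseVertices A θ) ≤ t}
      {C | #(H.edgesIn C) ≤ t * Δ + Fintype.card W * θ} #(smallSubsets W t) := by
  refine .of_nonempty (Nat.cast_nonneg _) fun ⟨J, hJ, _⟩ => ?_
  refine .of_finset _ (fun T => A \ H.denseVertices A θ ∪ T) (fun T hT => ?_) fun I hI => ?_
  · refine (card_edgesIn_sdiff_denseVertices_union_le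
      (fun e => support_nonempty_of_mem_indepSets hJ) hΔ hθ A T).trans ?_
    gcongr
    exact mem_smallSubsets.1 hT
  · refine ⟨I ∩ H.denseVertices A θ, mem_smallSubsets.2 hI.2.2, fun v hv => ?_⟩
    by_cases h : v ∈ H.denseVertices A θ <;> simp [h, hv, hI.2.1 hv]

lemma coveredBy_heavy (hH : H.RankLE (s + 1)) (hΔ0 : 0 ≤ Δ) (hΔ : ∀ v, H.degree v ≤ Δ)
    (hκ : 0 < κ) (hcodeg : ∀ u v, u ≠ v → H.codegree u v ≤ κ) (hθ : 0 < θ) (hy : 0 ≤ y)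
    (hM : 0 ≤ M)
    (ht : (n + s * (n * Δ) / κ) * Δ * (s + 1) + Fintype.card W * y ≤ t * θ)
    (hb : x + b * (2 * κ) ≤ n * y)
    (hcover : ∀ G ≤ H, G.RankLE s → (∀ v, G.degree v ≤ 2 * κ) →
      CoveredBy G.indepSets {C | #(G.edgesIn C) ≤ x} M) (A : Finset W) :
    CoveredBy {I ∈ H.indepSets | I ⊆ A ∧ t < #(I ∩ H.denseVertices A θ)}
      {C | #C + b ≤ #A} (#(smallSubsets W n) * M) := by
  classical
  set HA := H.restrict (H.edgesIn A)
  have hHA : HA ≤ H := restrict_le (edgesIn_subset H A)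
  let fingerprints : Finset (Finset W) :=
    {T ∈ smallSubsets W n | ∃ G, HA.IsLink G T ∧ (∀ v, G.degree v ≤ 2 * κ) ∧ n * y ≤ #G.edges}
  have hfingerprints : (#fingerprints : ℝ) ≤ #(smallSubsets W n) :=
    mod_cast Finset.card_le_card (Finset.filter_subset _ _)
  have hunion : CoveredBy (⋃ T ∈ fingerprints, {I ∈ H.indepSets | T ⊆ I ∧ I ⊆ A})
      {C | #C + b ≤ #A} (#fingerprints * M) := .biUnion fun T hT => by
    obtain ⟨-, G, hlink, hdeg, hG⟩ := Finset.mem_filter.1 hT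
    exact coveredBy_of_isLink hlink (by positivity) hdeg (hb.trans hG)
      (hcover G (hlink.le.trans hHA) (hlink.rankLE (hH.of_le hHA)) hdeg)
  refine hunion.mono (fun I ⟨hI, hIA, hIL⟩ => ?_) subset_rfl (by gcongr)
  have hsum : t * θ < ∑ v ∈ I ∩ H.denseVertices A θ, (HA.degree v : ℝ) := by
    refine (mul_lt_mul_of_pos_right hIL hθ).trans_le ?_
    rw [← nsmul_eq_mul]
    exact Finset.card_nsmul_le_sum _ _ _ fun v hv =>
      (Finset.mem_filter.1 (Finset.mem_inter.1 hv).2).2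
  obtain ⟨T, hTI, hT, hG⟩ := exists_link (y := y) (n := n) (hH.of_le hHA) hΔ0
    (fun v => le_trans (mod_cast degree_le_of_le hHA v) (hΔ v)) hκ
    (fun u v huv => le_trans (mod_cast codegree_le_of_le hHA u v) (hcodeg u v huv))
    ((ht.trans' (by gcongr; exact Finset.card_le_univ _)).trans_lt hsum)
  exact mem_iUnion₂.2 ⟨T, Finset.mem_filter.2 ⟨mem_smallSubsets.2 (mod_cast hT), hG⟩, hI,
    hTI.trans Finset.inter_subset_left, hIA⟩

end Round

section BoundedDegree

universe u v

variable {W : Type u} {α : Type v} [DecidableEq W] {H : LabelledHypergraph W α} {s n R : ℕ}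
  {D K ε δ η τ c q β x M : ℝ}

/-- Constraints on the constants of one round of the container algorithm, for a hypergraph of rank
`s + 1` with degrees at most `K * D`. An independent set `I` is heavy if it has more than `τ * |W|`
dense vertices; then at least `q * |W|` fingerprint vertices are chosen from `I`, each adding
`η * D` edges to a link whose degrees are at most `2 * (c * q) * D`, and the container shrinks by
`β * |W|` vertices. -/
structure RoundParameters (s : ℕ) (K ε τ η c β q : ℝ) : Prop where
  eta_pos : 0 < η
  c_pos : 0 < c
  q_pos : 0 < q
  light : τ * K ≤ ε / 4
  heavy : (s + 1) * K * (2 * q + s * (2 * q * K) / (c * q)) + η ≤ τ * (ε / 4)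
  shrink : β * (2 * c) ≤ η / 2

lemma exists_roundParameters (s : ℕ) {K ε q₀ : ℝ} (hK : 0 < K) (hε : 0 < ε) (hq₀ : 0 < q₀) :
    ∃ τ ≤ q₀, ∃ η > 0, ∃ c > 0, ∃ β > 0, ∃ q₁ > 0,
      ∀ q, 0 < q → q ≤ q₁ → RoundParameters s K ε τ η c β q := by
  set τ := min q₀ (ε / (4 * K))
  have hτ : 0 < τ := lt_min hq₀ (by positivity)
  set η := τ * ε / 8 with hη
  have hη0 : 0 < η := div_pos (mul_pos hτ hε) (by norm_num)
  refine ⟨τ, min_le_left _ _, η, hη0, 4 * (s + 1) ^ 2 * K ^ 2 / η, by positivity,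
    η / (4 * (4 * (s + 1) ^ 2 * K ^ 2 / η)), by positivity, η / (4 * (s + 1) * K), by positivity,
    fun q hq hq₁ => ⟨hη0, by positivity, hq, ?_, ?_, ?_⟩⟩
  · calc τ * K ≤ ε / (4 * K) * K := by gcongr; exact min_le_right _ _
      _ = ε / 4 := by field_simp
  · rw [le_div_iff₀ (by positivity)] at hq₁
    have hs : (s + 1) * K * (s * (2 * q * K) / (4 * (s + 1) ^ 2 * K ^ 2 / η * q)) ≤ η / 2 := by
      rw [show (s + 1) * K * (s * (2 * q * K) / (4 * (s + 1) ^ 2 * K ^ 2 / η * q)) =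
        η / 2 * (s / (s + 1)) by field_simp; norm_num]
      exact mul_le_of_le_one_right (by positivity) ((div_le_one (by positivity)).2 (by linarith))
    rw [mul_add]
    linarith
  · exact le_of_eq (by field_simp; norm_num)

lemma coveredBy_of_restrict {E : Finset α} (hE : E ⊆ H.edges) {p : ℝ} (hp : #H.edges ≤ #E + p)
    (h : CoveredBy (H.restrict E).indepSets {C | #((H.restrict E).edgesIn C) ≤ x} M) :
    CoveredBy H.indepSets {C | #(H.edgesIn C) ≤ x + p} M := by
  classical
  refine h.mono (fun I hI e he => hI e (hE he)) (fun C hC => ?_) le_rfl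
  have hsub : H.edgesIn C ⊆ (H.restrict E).edgesIn C ∪ (H.edges \ E) := by
    intro e he
    simp only [edgesIn, Finset.mem_union, Finset.mem_filter, Finset.mem_sdiff] at he ⊢
    by_cases heE : e ∈ E
    · exact Or.inl ⟨heE, he.2⟩
    · exact Or.inr ⟨he.1, heE⟩
  have hcard : #(H.edgesIn C) ≤ #((H.restrict E).edgesIn C) + #(H.edges \ E) :=
    (Finset.card_le_card hsub).trans (Finset.card_union_le _ _)
  have hsdiff : #(H.edges \ E) + #E = #H.edges := Finset.card_sdiff_add_card_eq_card hE
  have := hC.out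
  rify at hcard hsdiff
  exact mem_ofPred.2 (by linarith)

variable [Fintype W]

lemma coveredBy_of_codegree_le (hp : RoundParameters s K ε τ η c β q) (hH : H.RankLE (s + 1))
    (hD : 0 < D) (hK : 0 < K) (hε : 0 < ε) (hM : 0 ≤ M) (hdeg : ∀ v, H.degree v ≤ K * D)
    (hcodeg : ∀ u v, u ≠ v → H.codegree u v ≤ c * q * D)
    (hn : q * Fintype.card W ≤ n) (hn' : n ≤ 2 * q * Fintype.card W)
    (hR : Fintype.card W < R * (β * Fintype.card W))
    (hlinks : ∀ G ≤ H, G.RankLE s → (∀ v, G.degree v ≤ 2 * (c * q) * D) →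
      CoveredBy G.indepSets {C | #(G.edgesIn C) ≤ q * η / 2 * D * Fintype.card W} M) :
    CoveredBy H.indepSets {C | #(H.edgesIn C) ≤ ε / 2 * D * Fintype.card W}
      (#(smallSubsets W (τ * Fintype.card W)) * (1 + #(smallSubsets W n) * M) ^ R) := by
  obtain ⟨hη, hc, hq, hlight, hheavy, hshrink⟩ := hp
  set m : ℝ := (Fintype.card W : ℝ)
  have hΔ0 : 0 ≤ K * D := by positivity
  have hκ : 0 < c * q * D := by positivity
  have hθ : 0 < ε / 4 * D := by positivity
  have hdense : (n + s * (n * (K * D)) / (c * q * D)) * (K * D) * (s + 1) + m * (η * D) ≤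
      τ * m * (ε / 4 * D) := by
    calc (n + s * (n * (K * D)) / (c * q * D)) * (K * D) * (s + 1) + m * (η * D)
        ≤ (2 * q * m + s * (2 * q * m * (K * D)) / (c * q * D)) * (K * D) * (s + 1) +
            m * (η * D) := by gcongr
      _ = ((s + 1) * K * (2 * q + s * (2 * q * K) / (c * q)) + η) * (m * D) := by
          field_simp
      _ ≤ τ * (ε / 4) * (m * D) := by gcongr
      _ = τ * m * (ε / 4 * D) := by ring
  have hsize : q * η / 2 * D * m + β * m * (2 * (c * q * D)) ≤ n * (η * D) := by
    calc q * η / 2 * D * m + β * m * (2 * (c * q * D))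
        = (q * η / 2 + q * (β * (2 * c))) * (m * D) := by ring
      _ ≤ (q * η / 2 + q * (η / 2)) * (m * D) := by gcongr
      _ = q * m * (η * D) := by ring
      _ ≤ n * (η * D) := by gcongr
  have hfew : τ * m * (K * D) + m * (ε / 4 * D) ≤ ε / 2 * D * m := by
    have : τ * K * (m * D) ≤ ε / 4 * (m * D) := by gcongr
    linear_combination this
  refine (CoveredBy.iterate (b := β * m) (Nat.cast_nonneg _) (by positivity) (fun A => ?_) R
    Finset.univ (by simpa using hR)).mono (fun I hI => ⟨hI, Finset.subset_univ I⟩) subset_rfl le_rfl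
  refine ⟨_, (coveredBy_light hΔ0 hdeg hθ.le A (τ * m)).mono subset_rfl
    (fun C hC => hC.out.trans hfew) le_rfl, ?_⟩
  refine (coveredBy_heavy hH hΔ0 hdeg hκ hcodeg hθ (by positivity) hM hdense hsize
    (by simpa only [mul_assoc] using hlinks) A).mono ?_ subset_rfl le_rfl
  exact fun I ⟨⟨hI, hIA⟩, hnot⟩ => ⟨hI, hIA, not_le.1 fun hle => hnot ⟨hI, hIA, hle⟩⟩

lemma coveredBy_of_card_overlaps_le [DecidableEq α] (hp : RoundParameters s K ε τ η c β q)
    (hH : H.RankLE (s + 1)) (hD : 2 ≤ c * q * D) (hK : 0 < K) (hε : 0 < ε) (hM : 0 ≤ M)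
    (hdeg : ∀ v, H.degree v ≤ K * D)
    (hover : #H.overlaps ≤ ε * (c * q) / 4 * D ^ 2 * Fintype.card W)
    (hn : q * Fintype.card W ≤ n) (hn' : n ≤ 2 * q * Fintype.card W)
    (hR : Fintype.card W < R * (β * Fintype.card W))
    (hlinks : ∀ G ≤ H, G.RankLE s → (∀ v, G.degree v ≤ 2 * (c * q) * D) →
      CoveredBy G.indepSets {C | #(G.edgesIn C) ≤ q * η / 2 * D * Fintype.card W} M) :
    CoveredBy H.indepSets {C | #(H.edgesIn C) ≤ ε * D * Fintype.card W}
      (#(smallSubsets W (τ * Fintype.card W)) * (1 + #(smallSubsets W n) * M) ^ R) := by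
  have hD0 : 0 < D := pos_of_mul_pos_right (two_pos.trans_le hD) (mul_pos hp.c_pos hp.q_pos).le
  obtain ⟨E, hEH, hE, hcodeg⟩ := H.exists_codegree_le (x := ε / 2 * D * Fintype.card W) hD
    (hover.trans_eq (by ring))
  have hle : H.restrict E ≤ H := restrict_le hEH
  refine (coveredBy_of_restrict hEH hE (coveredBy_of_codegree_le hp (hH.of_le hle) hD0 hK hε hM
    (fun v => le_trans (mod_cast degree_le_of_le hle v) (hdeg v)) hcodeg hn hn' hR
    fun G hG => hlinks G (hG.trans hle))).mono subset_rfl (fun C hC => ?_) le_rfl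
  exact hC.out.trans_eq (by ring)

lemma exp_mul_one_add_exp_pow_le {m : ℝ} (hm : 1 ≤ δ / (6 * R) * m) (hR : 0 < R) :
    Real.exp (δ / 2 * m) * (1 + Real.exp (δ / (6 * R) * m) * Real.exp (δ / (6 * R) * m)) ^ R ≤
      Real.exp (δ * m) := by
  set a := δ / (6 * R) * m with ha
  have h2 : 2 ≤ Real.exp a := by linarith [Real.add_one_le_exp a]
  calc Real.exp (δ / 2 * m) * (1 + Real.exp a * Real.exp a) ^ R
      ≤ Real.exp (δ / 2 * m) * (Real.exp a * (Real.exp a * Real.exp a)) ^ R := by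
        gcongr
        nlinarith
    _ = Real.exp (δ * m) := by
        rw [← Real.exp_add, ← Real.exp_add, ← Real.exp_nat_mul, ← Real.exp_add, ha]
        congr 1
        field_simp
        ring

/-- The container theorem for hypergraphs of rank at most `s` and maximum degree of order `D`,
which is the statement proved by induction on `s`. -/
def BoundedDegreeContainers (s : ℕ) : Prop :=
  ∀ K > 0, ∀ ε > 0, ∀ δ > 0, ∃ D₀ : ℝ, ∃ γ > 0, ∀ {W : Type u} {α : Type v} [Fintype W]
    [DecidableEq W] [DecidableEq α] (H : LabelledHypergraph W α) (D : ℝ),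
    D₀ ≤ D → D₀ ≤ Fintype.card W → H.RankLE s → (∀ v, H.degree v ≤ K * D) →
    #H.overlaps ≤ γ * D ^ 2 * Fintype.card W →
    CoveredBy H.indepSets {C | #(H.edgesIn C) ≤ ε * D * Fintype.card W}
      (Real.exp (δ * Fintype.card W))

lemma boundedDegreeContainers_zero : BoundedDegreeContainers.{u, v} 0 := by
  refine fun K _ ε hε δ hδ => ⟨0, 1, one_pos, fun {W α} _ _ _ H D hD _ hH _ _ => ?_⟩
  refine (coveredBy_indepSets_of_rankLE_one fun e he => (hH e he).trans zero_le_one).mono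
    subset_rfl (fun C hC => ?_) (Real.one_le_exp (by positivity))
  rw [mem_ofPred, hC.out, Finset.card_empty, Nat.cast_zero]
  positivity

lemma BoundedDegreeContainers.succ (ih : BoundedDegreeContainers.{u, v} s) :
    BoundedDegreeContainers.{u, v} (s + 1) := by
  intro K hK ε hε δ hδ
  obtain ⟨q₀, hq₀, hsmall₀⟩ := exists_card_smallSubsets_le_exp.{u} (half_pos hδ)
  obtain ⟨τ, hτ, η, hη, c, hc, β, hβ, q₁, hq₁, hparam⟩ := exists_roundParameters s hK hε hq₀
  obtain ⟨R, hR⟩ := exists_nat_gt (1 / β)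
  have hRβ : 1 < R * β := (div_lt_iff₀ hβ).1 hR
  have hR0 : 0 < R := Nat.cast_pos.1 ((by positivity : 0 < 1 / β).trans hR)
  set δ' := δ / (6 * R)
  have hδ' : 0 < δ' := by positivity
  obtain ⟨q₂, hq₂, hsmall₂⟩ := exists_card_smallSubsets_le_exp.{u} hδ'
  set q := min q₁ (q₂ / 2)
  have hq : 0 < q := lt_min hq₁ (by positivity)
  obtain ⟨D₁, γ₁, hγ₁, hlinks⟩ :=
    ih (2 * (c * q)) (by positivity) (q * η / 2) (by positivity) δ' hδ'
  refine ⟨max (max D₁ (2 / (c * q))) (max (1 / q) (1 / δ')), min γ₁ (ε * (c * q) / 4),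
    lt_min hγ₁ (by positivity), fun {W α} _ _ _ H D hD hm hH hdeg hover => ?_⟩
  set m := (Fintype.card W : ℝ)
  simp only [max_le_iff, div_le_iff₀ hq, div_le_iff₀ hδ', div_le_iff₀' (mul_pos hc hq)] at hD hm
  obtain ⟨⟨⟨hD₁, hDκ⟩, -⟩, ⟨hm₁, -⟩, hmq, hmδ⟩ := And.intro hD hm
  have hm0 : 0 < m := pos_of_mul_pos_left (one_pos.trans_le hmq) hq.le
  have hover' {γ : ℝ} (hγ : min γ₁ (ε * (c * q) / 4) ≤ γ) : #H.overlaps ≤ γ * D ^ 2 * m :=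
    hover.trans (by gcongr)
  have hn : ⌈q * m⌉₊ ≤ 2 * q * m := by linarith [Nat.ceil_lt_add_one (mul_pos hq hm0).le]
  have hcover := coveredBy_of_card_overlaps_le (R := R) (M := Real.exp (δ' * m))
    (hparam q hq (min_le_left _ _)) hH hDκ hK hε (Real.exp_nonneg _) hdeg
    (hover' (min_le_right _ _)) (Nat.le_ceil _) hn (by nlinarith)
    fun G hG hGs hGdeg => hlinks G D hD₁ hm₁ hGs hGdeg <|
      le_trans (mod_cast card_overlaps_le_of_le hG) (hover' (min_le_left _ _))
  refine hcover.mono subset_rfl subset_rfl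
    (le_trans ?_ (exp_mul_one_add_exp_pow_le (hmδ.trans_eq (mul_comm _ _)) hR0))
  gcongr
  · exact (Nat.cast_le.2 (Finset.card_le_card (smallSubsets_mono (by gcongr)))).trans (hsmall₀ W)
  · refine (Nat.cast_le.2 (Finset.card_le_card (smallSubsets_mono (hn.trans ?_)))).trans (hsmall₂ W)
    gcongr
    linarith [min_le_right q₁ (q₂ / 2)]

lemma boundedDegreeContainers (s : ℕ) : BoundedDegreeContainers.{u, v} s := by
  induction s with
  | zero => exact boundedDegreeContainers_zero
  | succ s ih => exact ih.succ

end BoundedDegree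

section Trace

universe u v

variable {W : Type u} {α : Type v} [DecidableEq W] {H : LabelledHypergraph W α} {B S : Finset W}
  {x M d : ℝ}

/-- The hypergraph left on the complement of `B` once it is known that an independent set meets `B`
exactly in `S`: the edges leaving `S` inside `B` are dropped and the others lose their vertices
in `B`. -/
def trace (H : LabelledHypergraph W α) (B S : Finset W) : LabelledHypergraph W α :=
  ⟨{e ∈ H.edges | H.support e ∩ B ⊆ S}, fun e => H.support e \ B⟩

lemma trace_le : H.trace B S ≤ H :=
  ⟨Finset.filter_subset _ _, fun _ _ => Finset.sdiff_subset⟩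

lemma degree_trace_highDegree_le [Fintype W] (hd : 0 ≤ d) (v : W) :
    (H.trace (H.highDegree d) S).degree v ≤ d := by
  by_cases hv : v ∈ H.highDegree d
  · have hzero : (H.trace (H.highDegree d) S).degree v = 0 :=
      Finset.card_eq_zero.2 (Finset.filter_false_of_mem fun e _ he => (Finset.mem_sdiff.1 he).2 hv)
    simpa only [hzero, Nat.cast_zero] using hd
  · have hlt : H.degree v < d := by simpa [highDegree] using hv
    exact le_trans (mod_cast degree_le_of_le trace_le v) hlt.le

lemma coveredBy_inter_eq_of_trace (hS : S ⊆ B)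
    (h : CoveredBy (H.trace B S).indepSets {C | #((H.trace B S).edgesIn C) ≤ x} M) :
    CoveredBy {I ∈ H.indepSets | I ∩ B = S} {C | #(H.edgesIn C) ≤ x} M := by
  refine h.map (fun C => C \ B ∪ S) (fun C hC => ?_) fun I ⟨hI, hIB⟩ => ⟨fun e he heI => ?_, ?_⟩
  · refine le_trans (mod_cast Finset.card_le_card fun e he => ?_) hC.out
    obtain ⟨heH, heC⟩ := Finset.mem_filter.1 he
    refine Finset.mem_filter.2 ⟨Finset.mem_filter.2 ⟨heH, fun v hv => ?_⟩, fun v hv => ?_⟩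
    · obtain ⟨hve, hvB⟩ := Finset.mem_inter.1 hv
      exact (Finset.mem_union.1 (heC hve)).elim (fun h => absurd hvB (Finset.mem_sdiff.1 h).2) id
    · obtain ⟨hve, hvB⟩ := Finset.mem_sdiff.1 hv
      exact (Finset.mem_union.1 (heC hve)).elim (fun h => (Finset.mem_sdiff.1 h).1)
        fun hvS => absurd (hS hvS) hvB
  · obtain ⟨heH, heS⟩ := Finset.mem_filter.1 he
    refine hI e heH fun v hv => ?_
    by_cases hvB : v ∈ B
    · rw [← hIB] at heS
      exact (Finset.mem_inter.1 (heS (Finset.mem_inter.2 ⟨hv, hvB⟩))).1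
    · exact heI (Finset.mem_sdiff.2 ⟨hv, hvB⟩)
  · intro C hIC v hv
    by_cases hvB : v ∈ B
    · exact Finset.mem_union_right _ (hIB ▸ Finset.mem_inter.2 ⟨hv, hvB⟩)
    · exact Finset.mem_union_left _ (Finset.mem_sdiff.2 ⟨hIC hv, hvB⟩)

lemma coveredBy_of_forall_trace (B : Finset W) (h : ∀ S ⊆ B,
      CoveredBy (H.trace B S).indepSets {C | #((H.trace B S).edgesIn C) ≤ x} M) :
    CoveredBy H.indepSets {C | #(H.edgesIn C) ≤ x} (2 ^ #B * M) := by
  refine (CoveredBy.biUnion (s := B.powerset) fun S hS => coveredBy_inter_eq_of_trace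
    (Finset.mem_powerset.1 hS) (h S (Finset.mem_powerset.1 hS))).mono (fun I hI => ?_) subset_rfl
    (by simp)
  exact mem_iUnion₂.2 ⟨I ∩ B, Finset.mem_powerset.2 Finset.inter_subset_right, hI, rfl⟩

theorem exists_containers (r : ℕ) {ε δ : ℝ} (hε : 0 < ε) (hδ : 0 < δ) :
    ∃ D₀ : ℝ, ∃ γ > (0 : ℝ), ∀ {W : Type u} {α : Type v} [Fintype W] [DecidableEq W] [DecidableEq α]
      (H : LabelledHypergraph W α), H.RankLE r → D₀ ≤ Fintype.card W →
      D₀ * Fintype.card W ≤ #H.edges → #H.overlaps * Fintype.card W ≤ γ * #H.edges ^ 2 →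
      CoveredBy H.indepSets {C | #(H.edgesIn C) ≤ ε * #H.edges}
        (Real.exp (δ * Fintype.card W)) := by
  obtain ⟨D₀, γ, hγ, hcontainers⟩ := boundedDegreeContainers.{u, v} r (2 * (r + 1) / δ)
    (by positivity) ε hε (δ / 2) (half_pos hδ)
  refine ⟨max D₀ 1, γ, hγ, fun {W α} _ _ _ H hH hm hedges hover => ?_⟩
  set m : ℝ := (Fintype.card W : ℝ)
  obtain ⟨hm₀, hm₁⟩ := max_le_iff.1 hm
  have hm0 : 0 < m := one_pos.trans_le hm₁
  set D := #H.edges / m with hD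
  have hDm : D * m = #H.edges := div_mul_cancel₀ _ hm0.ne'
  obtain ⟨hD₀, hD₁⟩ := max_le_iff.1 ((le_div_iff₀ hm0).2 hedges)
  have hD0 : 0 < D := one_pos.trans_le hD₁
  set B := H.highDegree (2 * (r + 1) / δ * D)
  have hB : #B ≤ δ / 2 * m := by
    have hmarkov : #B * (2 * (r + 1) / δ * D) ≤ D * m * r := by
      simpa only [hDm] using card_highDegree_mul_le hH (2 * (r + 1) / δ * D)
    have hBr : #B * (2 * (r + 1) / δ * D) ≤ δ / 2 * m * (2 * (r + 1) / δ * D) := by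
      refine hmarkov.trans ?_
      rw [show δ / 2 * m * (2 * (r + 1) / δ * D) = D * m * (r + 1) by field_simp]
      gcongr
      linarith
    exact le_of_mul_le_mul_right hBr (by positivity)
  have htraces : ∀ S ⊆ B, CoveredBy (H.trace B S).indepSets
      {C | #((H.trace B S).edgesIn C) ≤ ε * #H.edges} (Real.exp (δ / 2 * m)) := by
    intro S _
    refine (hcontainers (H.trace B S) D hD₀ hm₀ (hH.of_le trace_le)
      (degree_trace_highDegree_le (by positivity)) ?_).mono subset_rfl ?_ le_rfl
    · calc (#(H.trace B S).overlaps : ℝ) ≤ #H.overlaps :=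
            Nat.cast_le.2 (card_overlaps_le_of_le trace_le)
        _ ≤ γ * #H.edges ^ 2 / m := (le_div_iff₀ hm0).2 hover
        _ = γ * D ^ 2 * m := by rw [← hDm]; field_simp
    · exact fun C hC => hC.out.trans_eq (by rw [mul_assoc, hDm])
  refine (coveredBy_of_forall_trace B htraces).mono subset_rfl subset_rfl ?_
  calc (2 : ℝ) ^ #B * Real.exp (δ / 2 * m) ≤ Real.exp 1 ^ #B * Real.exp (δ / 2 * m) := by
        gcongr
        linarith [Real.add_one_le_exp 1]
    _ = Real.exp (#B + δ / 2 * m) := by rw [← Real.exp_nat_mul, mul_one, Real.exp_add]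
    _ ≤ Real.exp (δ * m) := Real.exp_le_exp.2 (by linarith)

end Trace

end LabelledHypergraph

section Cells

lemma ordConnected_setOf_mem_eq {α : Type*} [Preorder α] {s : Set α} (hs : s.OrdConnected)
    (hsc : sᶜ.OrdConnected) (p : Prop) : {x | (x ∈ s) = p}.OrdConnected := by
  by_cases hp : p
  · simpa only [hp, eq_iff_iff, iff_true, ofPred_mem_eq] using hs
  · simpa only [hp, eq_iff_iff, iff_false, compl_def] using hsc

/-- The position of a point relative to each member of a family of intervals: whether it is above
some point of the interval, and whether it is below some point of it. Unlike those of membership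
alone, the level sets of the position are intervals. -/
def position {α : Type*} [Preorder α] (𝒥 : Finset (Set α)) (x : α) (J : 𝒥) : Prop × Prop :=
  (x ∈ (upperClosure J.1 : Set α), x ∈ (lowerClosure J.1 : Set α))

section Position

variable {α : Type*} [Preorder α] {𝒥 : Finset (Set α)}

lemma ordConnected_position_preimage (t : 𝒥 → Prop × Prop) :
    (position 𝒥 ⁻¹' {t}).OrdConnected := by
  have hfiber : position 𝒥 ⁻¹' {t} = ⋂ J : 𝒥, {x | (x ∈ (upperClosure J.1 : Set α)) = (t J).1} ∩
      {x | (x ∈ (lowerClosure J.1 : Set α)) = (t J).2} := by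
    ext x
    simp only [mem_preimage, mem_singleton_iff, mem_iInter, mem_inter_iff, mem_ofPred, position,
      funext_iff, Prod.ext_iff]
  rw [hfiber]
  have hupper (J : Set α) := (upperClosure J).upper
  have hlower (J : Set α) := (lowerClosure J).lower
  exact ordConnected_iInter fun J =>
    (ordConnected_setOf_mem_eq (hupper J).ordConnected (hupper J).compl.ordConnected _).inter
      (ordConnected_setOf_mem_eq (hlower J).ordConnected (hlower J).compl.ordConnected _)

lemma mem_iff_of_position_eq {J : Set α} (hJ : J ∈ 𝒥) (hord : J.OrdConnected) {x y : α}
    (hxy : position 𝒥 x = position 𝒥 y) : x ∈ J ↔ y ∈ J := by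
  obtain ⟨hupper, hlower⟩ := Prod.ext_iff.1 (congrFun hxy ⟨J, hJ⟩)
  rw [← hord.upperClosure_inter_lowerClosure]
  exact and_congr hupper.to_iff hlower.to_iff

end Position

lemma IsSimpleBox.subset_unitCube {ι : Type} {f : Set (ι → ℝ)} (hf : IsSimpleBox f) :
    f ⊆ unitCube ι := by
  obtain ⟨A, hA, rfl⟩ := hf
  exact pi_mono fun i _ => (hA i).1

lemma exists_cells {ι : Type} [Finite ι] (F : Finset (Set (ι → ℝ)))
    (hF : ∀ f ∈ F, IsSimpleBox f) :
    ∃ (κ : Type) (_ : Fintype κ) (τ : ℝ → κ) (P : Finset (ι → κ)),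
      (∀ t, (τ ⁻¹' {t}).OrdConnected) ∧ ∀ x, x ∈ ⋃ f ∈ F, f ↔ τ ∘ x ∈ P := by
  classical
  have := Fintype.ofFinite ι
  choose! A hA hfA using hF
  choose! _ s hs hAs using hA
  let 𝒥 := F.biUnion fun f => Finset.univ.biUnion (s f)
  refine ⟨𝒥 → Prop × Prop, inferInstance, position 𝒥,
    ((position 𝒥 ∘ ·) '' ⋃ f ∈ F, f).toFinite.toFinset, ordConnected_position_preimage,
    fun y => ?_⟩
  rw [Set.Finite.mem_toFinset]
  refine ⟨fun hy => ⟨y, hy, rfl⟩, fun ⟨x, hx, hxy⟩ => ?_⟩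
  obtain ⟨f, hf, hxf⟩ := mem_iUnion₂.1 hx
  refine mem_iUnion₂.2 ⟨f, hf, ?_⟩
  rw [hfA f hf] at hxf ⊢
  intro i hi
  obtain ⟨J, hJ, hxJ⟩ := (hAs f hf i).subset (hxf i hi)
  have hJ𝒥 : J ∈ 𝒥 := Finset.mem_biUnion.2
    ⟨f, hf, Finset.mem_biUnion.2 ⟨i, Finset.mem_univ i, hJ⟩⟩
  exact (hAs f hf i).superset
    ⟨J, hJ, (mem_iff_of_position_eq hJ𝒥 (hs f hf i J hJ) (congrFun hxy i)).1 hxJ⟩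

variable {V κ : Type} {τ : ℝ → κ} {C : Finset (V × κ)}

/-- The box in `[0,1]^V` encoded by a set `C` of pairs of a coordinate and a cell: its `i`-th side
is the union of the cells `τ ⁻¹' {t}` with `(i, t) ∈ C`. -/
def cellBox (τ : ℝ → κ) (C : Finset (V × κ)) : Set (V → ℝ) :=
  univ.pi fun i => {x ∈ Icc 0 1 | (i, τ x) ∈ C}

/-- The pairs of a coordinate `i` and the cell that contains the value of `c` at `i`. -/
def cellGraph [Fintype V] [DecidableEq V] [DecidableEq κ] (τ : ℝ → κ) (c : V → ℝ) :
    Finset (V × κ) :=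
  Finset.univ.image fun i => (i, τ (c i))

lemma mem_cellBox_of_cellGraph_subset [Fintype V] [DecidableEq V] [DecidableEq κ] {c : V → ℝ}
    (hc : c ∈ unitCube V) (hC : cellGraph τ c ⊆ C) : c ∈ cellBox τ C := fun i hi =>
  ⟨hc i hi, hC (Finset.mem_image_of_mem _ (Finset.mem_univ i))⟩

lemma isSimpleBox_cellBox [Finite κ] (hτ : ∀ t, (τ ⁻¹' {t}).OrdConnected)
    (C : Finset (V × κ)) : IsSimpleBox (cellBox τ C) := by
  classical
  have := Fintype.ofFinite κ
  refine ⟨_, fun i => ⟨fun x hx => hx.1, ({t | (i, t) ∈ C} : Finset κ).image fun t =>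
    Icc 0 1 ∩ τ ⁻¹' {t}, ?_, ?_⟩, rfl⟩
  · simpa only [Finset.forall_mem_image] using fun t _ => ordConnected_Icc.inter (hτ t)
  · ext x
    simp [and_assoc, and_comm]

end Cells

section Patterns

variable {ι V κ : Type} [Fintype ι] [DecidableEq V] [DecidableEq κ] {Φ : Finset (ι → V)}
  {P : Finset (ι → κ)}

/-- The hypergraph on the pairs of a coordinate and a cell whose edges are the sets
`{(φ j, h j) | j}`, for a map `φ ∈ Φ` and an assignment `h ∈ P` of cells. -/
def patternHypergraph (Φ : Finset (ι → V)) (P : Finset (ι → κ)) :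
    LabelledHypergraph (V × κ) ((ι → V) × (ι → κ)) where
  edges := Φ ×ˢ P
  support e := Finset.univ.image fun j => (e.1 j, e.2 j)

lemma card_edges_patternHypergraph : #(patternHypergraph Φ P).edges = #Φ * #P :=
  Finset.card_product _ _

lemma rankLE_patternHypergraph : (patternHypergraph Φ P).RankLE (Fintype.card ι) :=
  fun _ _ => Finset.card_image_le

lemma card_edgesIn_patternHypergraph (C : Finset (V × κ)) :
    #((patternHypergraph Φ P).edgesIn C) =
      ∑ φ ∈ Φ, #{h ∈ P | (patternHypergraph Φ P).support (φ, h) ⊆ C} := by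
  simp only [LabelledHypergraph.edgesIn, Finset.card_filter]
  exact Finset.sum_product _ _ _

lemma card_filter_image_subset_image_le (Φ : Finset (ι → V)) :
    #{p ∈ Φ ×ˢ Φ | Finset.univ.image p.2 ⊆ Finset.univ.image p.1} ≤
      Fintype.card ι ^ Fintype.card ι * #Φ := by
  classical
  refine Finset.card_le_mul_card_image_of_maps_to (f := Prod.fst)
    (fun p hp => (Finset.mem_product.1 (Finset.mem_filter.1 hp).1).1) _ fun φ _ => ?_
  calc _ ≤ #(Fintype.piFinset fun _ : ι => Finset.univ.image φ) := by
        refine Finset.card_le_card_of_injOn Prod.snd (fun p hp => ?_) fun p hp q hq hpq => ?_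
        · obtain ⟨hpΦ, rfl⟩ := Finset.mem_filter.1 hp
          have hsub := (Finset.mem_filter.1 hpΦ).2
          exact Fintype.mem_piFinset.2 fun j => hsub (Finset.mem_image_of_mem _ (Finset.mem_univ j))
        · exact Prod.ext ((Finset.mem_filter.1 hp).2.trans (Finset.mem_filter.1 hq).2.symm) hpq
    _ ≤ Fintype.card ι ^ Fintype.card ι := by
        rw [Fintype.card_piFinset, Finset.prod_const, Finset.card_univ]
        exact Nat.pow_le_pow_left Finset.card_image_le _

lemma card_filter_one_lt_card_inter_le (Φ : Finset (ι → V)) :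
    #{p ∈ Φ ×ˢ Φ | 1 < #(Finset.univ.image p.1 ∩ Finset.univ.image p.2)} ≤
      #{p ∈ Φ ×ˢ Φ | 1 < #(Finset.univ.image p.1 ∩ Finset.univ.image p.2) ∧
        #(Finset.univ.image p.1 ∩ Finset.univ.image p.2) < Fintype.card ι} +
      Fintype.card ι ^ Fintype.card ι * #Φ := by
  rw [← Finset.card_filter_add_card_filter_not
    fun p => #(Finset.univ.image p.1 ∩ Finset.univ.image p.2) < Fintype.card ι,
    Finset.filter_filter]
  gcongr
  refine (Finset.card_le_card fun p hp => ?_).trans (card_filter_image_subset_image_le Φ)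
  obtain ⟨hp, hcard⟩ := Finset.mem_filter.1 hp
  have hinter := Finset.eq_of_subset_of_card_le Finset.inter_subset_right
    (Finset.card_image_le.trans (not_lt.1 hcard))
  exact Finset.mem_filter.2 ⟨(Finset.mem_filter.1 hp).1, Finset.inter_eq_right.1 hinter⟩

lemma card_support_inter_support_le {e f : (ι → V) × (ι → κ)} (he : Function.Injective e.1) :
    #((patternHypergraph Φ P).support e ∩ (patternHypergraph Φ P).support f) ≤
      #(Finset.univ.image e.1 ∩ Finset.univ.image f.1) := by
  have hfst (g : (ι → V) × (ι → κ)) {w} (hw : w ∈ (patternHypergraph Φ P).support g) :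
      ∃ j, (g.1 j, g.2 j) = w := by
    simpa [patternHypergraph] using hw
  refine Finset.card_le_card_of_injOn Prod.fst (fun w hw => ?_) fun w hw w' hw' hww' => ?_
  · obtain ⟨hwe, hwf⟩ := Finset.mem_inter.1 hw
    obtain ⟨⟨i, rfl⟩, j, hj⟩ := And.intro (hfst e hwe) (hfst f hwf)
    exact Finset.mem_inter.2 ⟨Finset.mem_image_of_mem _ (Finset.mem_univ i),
      Finset.mem_image.2 ⟨j, Finset.mem_univ j, congrArg Prod.fst hj⟩⟩
  · obtain ⟨i, rfl⟩ := hfst e (Finset.mem_inter.1 hw).1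
    obtain ⟨j, rfl⟩ := hfst e (Finset.mem_inter.1 hw').1
    rw [he hww']

lemma card_overlaps_patternHypergraph_le (hΦ : ∀ φ ∈ Φ, Function.Injective φ) :
    #(patternHypergraph Φ P).overlaps ≤
      #{p ∈ Φ ×ˢ Φ | 1 < #(Finset.univ.image p.1 ∩ Finset.univ.image p.2)} * #P ^ 2 := by
  rw [sq, ← Finset.card_product P P, ← Finset.card_product]
  refine Finset.card_le_card_of_injOn (fun p => ((p.1.1, p.2.1), p.1.2, p.2.2)) (fun p hp => ?_)
    fun p _ q _ hpq => by simpa [Prod.ext_iff, and_assoc, and_left_comm] using hpq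
  obtain ⟨hp, hcard⟩ := Finset.mem_filter.1 hp
  obtain ⟨h₁, h₂, -⟩ := Finset.mem_offDiag.1 hp
  obtain ⟨⟨hφ, hh⟩, hψ, hh'⟩ := And.intro (Finset.mem_product.1 h₁) (Finset.mem_product.1 h₂)
  exact Finset.mem_product.2 ⟨Finset.mem_filter.2 ⟨Finset.mem_product.2 ⟨hφ, hψ⟩,
    hcard.trans_le (card_support_inter_support_le (hΦ _ hφ))⟩, Finset.mem_product.2 ⟨hh, hh'⟩⟩

end Patterns

section Volume

variable {ι V κ : Type} [Fintype ι] [Fintype V] [DecidableEq V] [DecidableEq κ]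
  {Φ : Finset (ι → V)} {P : Finset (ι → κ)} {φ : ι → V} {b : Set (ι → ℝ)} {τ : ℝ → κ}
  {C : Finset (V × κ)}

lemma volume_unitCube : volume (unitCube ι) = 1 := by
  rw [unitCube, volume_pi_pi]
  simp

lemma support_subset_of_mem_projBody_cellBox (hφ : φ.Injective) {x : ι → ℝ}
    (hx : x ∈ projBody φ (cellBox τ C)) :
    (patternHypergraph Φ P).support (φ, τ ∘ x) ⊆ C := by
  obtain ⟨d, hd⟩ := nonempty_of_measure_ne_zero (ne_of_gt hx)
  refine Finset.image_subset_iff.2 fun j _ => ?_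
  have hj : φ j ∈ range φ := mem_range_self j
  have hcell := (hd (φ j) (mem_univ _)).2
  beta_reduce at hcell
  rw [dif_pos hj, hφ hj.choose_spec] at hcell
  exact hcell

lemma volume_projBody_cellBox_inter_le (hφ : φ.Injective) (hb : b ⊆ unitCube ι)
    (hP : ∀ x ∈ b, τ ∘ x ∈ P) :
    (volume (projBody φ (cellBox τ C) ∩ b)).toReal ≤
      #{h ∈ P | (patternHypergraph Φ P).support (φ, h) ⊆ C} := by
  obtain hempty | ⟨x, hx, hxb⟩ := (projBody φ (cellBox τ C) ∩ b).eq_empty_or_nonempty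
  · simp [hempty]
  calc (volume (projBody φ (cellBox τ C) ∩ b)).toReal ≤ (1 : ENNReal).toReal :=
        ENNReal.toReal_mono ENNReal.one_ne_top <|
          (measure_mono (inter_subset_right.trans hb)).trans_eq volume_unitCube
    _ = (1 : ℕ) := by simp
    _ ≤ #{h ∈ P | (patternHypergraph Φ P).support (φ, h) ⊆ C} :=
        Nat.cast_le.2 <| Finset.card_pos.2
          ⟨τ ∘ x, Finset.mem_filter.2 ⟨hP x hxb, support_subset_of_mem_projBody_cellBox hφ hx⟩⟩

end Volume

namespace Ssee

variable {S : Ssee} {N n : ℕ} {κ : Type} [DecidableEq κ] {P : Finset (S.V N → κ)}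
  {b : Set (S.V N → ℝ)} {τ : ℝ → κ}

lemma cellGraph_mem_indepSets (hP : ∀ x, τ ∘ x ∈ P → x ∈ b) {c : S.V n → ℝ}
    (hc : c ∈ unitCube (S.V n) \ S.upperShadow N n b) :
    cellGraph τ c ∈ (patternHypergraph (S.emb N n) P).indepSets := by
  rintro ⟨φ, h⟩ he hsub
  obtain ⟨hφ, hh⟩ := Finset.mem_product.1 he
  refine hc.2 (mem_iUnion₂.2 ⟨φ, hφ, hc.1, hP _ ?_⟩)
  convert hh using 1
  funext j
  obtain ⟨i, -, hi⟩ := Finset.mem_image.1 (hsub (Finset.mem_image_of_mem _ (Finset.mem_univ j)))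
  obtain ⟨rfl, hτ⟩ := Prod.mk.inj hi
  exact hτ

lemma expProj_cellBox_le (hn : N ≤ n) (hb : b ⊆ unitCube (S.V N)) (hP : ∀ x ∈ b, τ ∘ x ∈ P)
    {x : ℝ} (hx : 0 ≤ x) {C : Finset (S.V n × κ)}
    (hC : #((patternHypergraph (S.emb N n) P).edgesIn C) ≤
      x * #(patternHypergraph (S.emb N n) P).edges) :
    S.expProj N n (fun φ => (volume (projBody φ (cellBox τ C) ∩ b)).toReal) ≤ x * #P := by
  refine div_le_of_le_mul₀ (by positivity) (by positivity) ?_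
  calc _ ≤ ∑ φ ∈ S.emb N n,
          (#{h ∈ P | (patternHypergraph (S.emb N n) P).support (φ, h) ⊆ C} : ℝ) :=
        Finset.sum_le_sum fun φ hφ =>
          volume_projBody_cellBox_inter_le (S.emb_inj N n hn φ hφ) hb hP
    _ = #((patternHypergraph (S.emb N n) P).edgesIn C) := by
        rw [card_edgesIn_patternHypergraph, Nat.cast_sum]
    _ ≤ x * #P * #(S.emb N n) := by
        rw [card_edges_patternHypergraph, Nat.cast_mul] at hC
        linarith

namespace Good

lemma tendsto_card (hS : S.Good) :
    Tendsto (fun n => (Fintype.card (S.V n) : ℝ)) atTop atTop :=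
  tendsto_natCast_atTop_atTop.comp hS.1

lemma eventually_card_overlaps_le (hS : S.Good) (hN : 1 < Fintype.card (S.V N)) {γ : ℝ}
    (hγ : 0 < γ) : ∀ᶠ n in atTop, #(patternHypergraph (S.emb N n) P).overlaps *
      (Fintype.card (S.V n) : ℝ) ≤ γ * #(patternHypergraph (S.emb N n) P).edges ^ 2 := by
  set R := Fintype.card (S.V N) ^ Fintype.card (S.V N)
  have hsmall := (hS.2.2 N hN).add ((hS.2.1 N hN).inv_tendsto_atTop.const_mul (R : ℝ))
  rw [mul_zero, add_zero] at hsmall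
  filter_upwards [hsmall.eventually_le_const hγ, eventually_ge_atTop N,
    (hS.2.1 N hN).eventually_gt_atTop 0] with n hratio hn hpos
  simp only [Pi.inv_apply, inv_div] at hratio
  set v := (Fintype.card (S.V n) : ℝ)
  have ha : (#(S.emb N n) : ℝ) ≠ 0 := fun h => by simp [h] at hpos
  have hpairs : v * (S.interCount N n + R * #(S.emb N n)) ≤ γ * #(S.emb N n) ^ 2 := by
    rw [← div_le_iff₀ (by positivity)]
    convert hratio using 1
    field_simp
  have hoverlaps : #(patternHypergraph (S.emb N n) P).overlaps ≤
      (S.interCount N n + R * #(S.emb N n)) * #P ^ 2 :=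
    (card_overlaps_patternHypergraph_le (S.emb_inj N n hn)).trans
      (Nat.mul_le_mul_right _ (card_filter_one_lt_card_inter_le (S.emb N n)))
  calc _ ≤ (S.interCount N n + R * #(S.emb N n)) * #P ^ 2 * v := by
        gcongr
        exact_mod_cast hoverlaps
    _ = v * (S.interCount N n + R * #(S.emb N n)) * #P ^ 2 := by ring
    _ ≤ γ * #(S.emb N n) ^ 2 * #P ^ 2 := by gcongr
    _ = γ * #(patternHypergraph (S.emb N n) P).edges ^ 2 := by
        rw [card_edges_patternHypergraph, Nat.cast_mul, mul_pow, mul_assoc]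

lemma eventually_mul_card_le_card_edges (hS : S.Good) (hN : 1 < Fintype.card (S.V N))
    (hP : P.Nonempty) (D : ℝ) : ∀ᶠ n in atTop,
      D * Fintype.card (S.V n) ≤ #(patternHypergraph (S.emb N n) P).edges := by
  filter_upwards [(hS.2.1 N hN).eventually_ge_atTop D] with n hD
  have hemb : D * Fintype.card (S.V n) ≤ #(S.emb N n) :=
    (le_div_iff₀ (mod_cast Fintype.card_pos)).1 hD
  rw [card_edges_patternHypergraph]
  exact hemb.trans (mod_cast Nat.le_mul_of_pos_right _ hP.card_pos)

theorem eventually_coveredBy [Fintype κ] (hS : S.Good) (P : Finset (S.V N → κ)) {ε δ : ℝ}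
    (hε : 0 < ε) (hδ : 0 < δ) : ∀ᶠ n in atTop,
      CoveredBy (patternHypergraph (S.emb N n) P).indepSets
        {C | #((patternHypergraph (S.emb N n) P).edgesIn C) ≤
          ε * #(patternHypergraph (S.emb N n) P).edges}
        (Real.exp (δ * Fintype.card (S.V n × κ))) := by
  by_cases hrank : ∀ n, (patternHypergraph (S.emb N n) P).RankLE 1
  · refine .of_forall fun n =>
      (LabelledHypergraph.coveredBy_indepSets_of_rankLE_one (hrank n)).mono subset_rfl
        (fun C hC => ?_) (Real.one_le_exp (by positivity))
    rw [mem_ofPred, hC.out, Finset.card_empty, Nat.cast_zero]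
    positivity
  have hN : 1 < Fintype.card (S.V N) := by
    by_contra! hN
    exact hrank fun n e he => (rankLE_patternHypergraph e he).trans hN
  have hP : P.Nonempty := by
    by_contra! rfl
    exact hrank fun n e he => by simp [patternHypergraph] at he
  have hκ : (0 : ℝ) < Fintype.card κ :=
    mod_cast Fintype.card_pos_iff.2 ⟨hP.choose (Classical.arbitrary _)⟩
  obtain ⟨D₀, γ, hγ, hcontainers⟩ :=
    LabelledHypergraph.exists_containers (Fintype.card (S.V N)) hε hδ
  filter_upwards [(hS.tendsto_card.atTop_mul_const hκ).eventually_ge_atTop D₀,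
    hS.eventually_mul_card_le_card_edges hN hP (D₀ * Fintype.card κ),
    hS.eventually_card_overlaps_le (P := P) hN (div_pos hγ hκ)] with n hcard hedges hoverlaps
  have hprod : (Fintype.card (S.V n × κ) : ℝ) = Fintype.card (S.V n) * Fintype.card κ := by
    rw [Fintype.card_prod, Nat.cast_mul]
  refine hcontainers _ rankLE_patternHypergraph (hprod ▸ hcard) ?_ ?_
  · rw [hprod]
    linarith
  · rw [hprod, ← mul_assoc, ← le_div_iff₀ hκ]
    exact hoverlaps.trans_eq (by ring)

end Good

end Ssee

/-- **Theorem (containers for Forb of a finite union of simple boxes).**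
Let `V` be a good ssee, `F` a nonempty finite family of simple boxes in `[0,1]^{V_N}`,
`b = ⋃ F` and `P_n = [0,1]^{V_n} \ ∂⁺_{V_n}(b)`.  Then for every `ε > 0` there is `n₀`
such that for every `n ≥ n₀` there is a collection `C` of simple boxes in `[0,1]^{V_n}`
with (i) `P_n ⊆ ⋃ C`, (ii) `E_φ vol(c_{↓φ} ∩ b) < ε` for every `c ∈ C`, and
(iii) `|C| ≤ e^{ε |V_n|}`. -/
theorem containers_for_forb_union_of_simple_boxes
    (S : Ssee) (hS : S.Good) (N : ℕ)
    (F : Finset (Set (S.V N → ℝ))) (hF : F.Nonempty)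
    (hFsimple : ∀ f ∈ F, IsSimpleBox f)
    (b : Set (S.V N → ℝ)) (hb : b = ⋃ f ∈ F, f)
    (ε : ℝ) (hε : 0 < ε) :
    ∃ n₀ : ℕ, ∀ n ≥ n₀, ∃ C : Finset (Set (S.V n → ℝ)),
      (∀ c ∈ C, IsSimpleBox c) ∧
      (unitCube (S.V n) \ S.upperShadow N n b) ⊆ ⋃ c ∈ C, c ∧
      (∀ c ∈ C, S.expProj N n (fun φ => (volume (projBody φ c ∩ b)).toReal) < ε) ∧
      ((C.card : ℝ) ≤ Real.exp (ε * (Fintype.card (S.V n) : ℝ))) := by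
  classical
  obtain ⟨κ, _, τ, P, hτ, hP⟩ := exists_cells F hFsimple
  rw [← hb] at hP
  have hbcube : b ⊆ unitCube (S.V N) :=
    hb ▸ iUnion₂_subset fun f hf => (hFsimple f hf).subset_unitCube
  have hκ : (0 : ℝ) < Fintype.card κ := mod_cast Fintype.card_pos_iff.2 ⟨τ 0⟩
  obtain ⟨n₀, hn₀⟩ := eventually_atTop.1 <| (eventually_ge_atTop N).and <|
    hS.eventually_coveredBy P (div_pos hε (Nat.cast_add_one_pos #P)) (div_pos hε hκ)
  refine ⟨n₀, fun n hn => ?_⟩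
  obtain ⟨hN, 𝒞, hcard, hfew, hcover⟩ := hn₀ n hn
  refine ⟨𝒞.image (cellBox τ), ?_, fun c hc => ?_, ?_, ?_⟩
  · exact Finset.forall_mem_image.2 fun C _ => isSimpleBox_cellBox hτ C
  · obtain ⟨C, hC, hcC⟩ := hcover _ (Ssee.cellGraph_mem_indepSets (fun x => (hP x).2) hc)
    exact mem_iUnion₂.2 ⟨_, Finset.mem_image_of_mem _ hC,
      mem_cellBox_of_cellGraph_subset hc.1 hcC⟩
  · refine Finset.forall_mem_image.2 fun C hC => ?_
    refine (Ssee.expProj_cellBox_le hN hbcube (fun x => (hP x).1) (by positivity)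
      (hfew C hC)).trans_lt ?_
    rw [div_mul_eq_mul_div, div_lt_iff₀ (by positivity)]
    linarith
  · refine (Nat.cast_le.2 Finset.card_image_le).trans (hcard.trans_eq ?_)
    rw [Fintype.card_prod, Nat.cast_mul, mul_comm (Fintype.card (S.V n) : ℝ), ← mul_assoc,
      div_mul_cancel₀ _ hκ.ne']

end
end

section
/- Let V be a good ssee and let P be a hereditary property of [0,1]-decorations of V. Suppose in addition that: (a) the limit π(P) := lim_{n→∞} ex(V_n, P_n)/|V_n| exists; and (b) for all ε > 0 there exist η > 0 and positive integers N ≤ n₀ such that if n ≥ n₀ then for every box b in V_n, E_φ vol(b_{↓φ} \ P_N) < η implies Ent(b) > (π(P) − ε)|V_n|, where φ is uniform on binom(V_n,V_N). Then vol(P_n) = e^{−(π(P)+o(1))|V_n|}, i.e. (−log vol(P_n))/|V_n| → π(P) as n → ∞. -/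
open MeasureTheory Filter Set

noncomputable section

/-!
The upper bound on `vol(P_n)` is a container argument in a product probability space. Let `Q` be the
property, let `e` range over the embeddings, and let `B e` be the points whose restriction along `e`
is forbidden, so that `Q` misses every `B e`. Fix a set `T` of coordinates. A coordinate `i` is
typical at `x` if revealing `x i` on top of the coordinates in `T` keeps a fixed fraction of the
marginal of `Q`. The container of `x` is the box whose `i`-th side consists of the typical values of
the `i`-th coordinate, padded by a set of small measure. It depends only on the coordinates of `x`
in `T`.

Where coordinates of an edge are typical given `T` but stop being so once the rest of the edge is
revealed, the energy `∫ u w / (u + w)` of the marginals `u`, `w` before and after revealing one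
coordinate drops. Since few pairs of embeddings overlap, the number of edges inside a sparse random
set concentrates, and so an average edge loses little energy for a suitable sparse `T`. As the
marginal of `Q` vanishes on `B e`, a typical container then meets few forbidden configurations, and
supersaturation bounds its volume.

There is no union bound over containers: weighting each atypical coordinate by a small factor turns
the indicator of the container of `x` into a function of `x` whose mean over the fibres of `T` is at
most `(1 + κ) ^ |V_n|` times the volume of the container, while it is not too small on half of `Q`.

Conversely, a box contained in `P_n` up to a null set bounds `vol(P_n)` from below.
-/

namespace ProductContainer

section ParallelSum

variable {t u w : ℝ}

/-- The parallel sum of two nonnegative reals. By `add_eq_parallelSum_add_parallelDefect` it is the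
minimum of `(1 - t) ^ 2 * u + t ^ 2 * w` over `t`; it takes the value `0` at `u = w = 0`. -/
def parallelSum (u w : ℝ) : ℝ := u * w / (u + w)

/-- The minimiser of `(1 - t) ^ 2 * u + t ^ 2 * w` over `t`, with the value `0` at `u = w = 0`. -/
def parallelWeight (u w : ℝ) : ℝ := u / (u + w)

/-- The amount by which `(1 - t) ^ 2 * u + t ^ 2 * w` exceeds its minimum over `t`. -/
def parallelDefect (t u w : ℝ) : ℝ := ((1 - t) * u - t * w) ^ 2 / (u + w)

lemma parallelSum_nonneg (hu : 0 ≤ u) (hw : 0 ≤ w) : 0 ≤ parallelSum u w :=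
  div_nonneg (mul_nonneg hu hw) (add_nonneg hu hw)

lemma parallelSum_le_left (hu : 0 ≤ u) (hw : 0 ≤ w) : parallelSum u w ≤ u :=
  div_le_of_le_mul₀ (add_nonneg hu hw) hu (by gcongr; linarith)

lemma parallelWeight_mem_Icc (hu : 0 ≤ u) (hw : 0 ≤ w) : parallelWeight u w ∈ Icc 0 1 :=
  ⟨div_nonneg hu (add_nonneg hu hw), div_le_one_of_le₀ (by linarith) (add_nonneg hu hw)⟩

lemma parallelDefect_nonneg (hu : 0 ≤ u) (hw : 0 ≤ w) : 0 ≤ parallelDefect t u w :=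
  div_nonneg (sq_nonneg _) (add_nonneg hu hw)

lemma add_eq_parallelSum_add_parallelDefect (hu : 0 ≤ u) (hw : 0 ≤ w) (t : ℝ) :
    (1 - t) ^ 2 * u + t ^ 2 * w = parallelSum u w + parallelDefect t u w := by
  rcases (add_nonneg hu hw).eq_or_lt with h | h
  · obtain ⟨rfl, rfl⟩ := (add_eq_zero_iff_of_nonneg hu hw).1 h.symm
    simp [parallelSum, parallelDefect]
  · unfold parallelSum parallelDefect
    field_simp
    ring

lemma one_sub_parallelWeight_mul (hu : 0 ≤ u) (hw : 0 ≤ w) :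
    (1 - parallelWeight u w) * u = parallelWeight u w * w := by
  rcases (add_nonneg hu hw).eq_or_lt with h | h
  · obtain ⟨rfl, rfl⟩ := (add_eq_zero_iff_of_nonneg hu hw).1 h.symm
    simp
  · unfold parallelWeight
    field_simp
    ring

lemma parallelSum_eq_parallelWeight (hu : 0 ≤ u) (hw : 0 ≤ w) :
    parallelSum u w = (1 - parallelWeight u w) ^ 2 * u + parallelWeight u w ^ 2 * w := by
  simp [add_eq_parallelSum_add_parallelDefect hu hw, parallelDefect,
    one_sub_parallelWeight_mul hu hw]

lemma mul_parallelWeight_le_one_sub {γ : ℝ} (hu : 0 ≤ u) (hw0 : 0 ≤ w) (hw : γ * u ≤ w) :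
    γ * parallelWeight u w ≤ 1 - parallelWeight u w := by
  rcases (add_nonneg hu hw0).eq_or_lt with h | h
  · simp [parallelWeight, ← h]
  · rw [parallelWeight, one_sub_div h.ne', add_sub_cancel_left, ← mul_div_assoc]
    gcongr

/-- If the weight is adapted to a pair with `w ≥ γ u`, it is far from optimal for a pair with
`w ≤ (γ / 2) u`. -/
lemma le_parallelDefect {γ u' w' : ℝ} (hγ : 0 < γ) (hγ1 : γ ≤ 1) (hu : 0 ≤ u) (hw : γ * u ≤ w)
    (hu' : 0 ≤ u') (hw' : 0 ≤ w') (hw'u' : w' ≤ γ / 2 * u') :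
    γ ^ 2 / 24 * u' ≤ parallelDefect (parallelWeight u w) u' w' := by
  have hw0 : 0 ≤ w := (mul_nonneg hγ.le hu).trans hw
  have hmul := mul_parallelWeight_le_one_sub hu hw0 hw
  have ht0 := (parallelWeight_mem_Icc hu hw0).1
  set t := parallelWeight u w
  have hhalf : γ / 2 ≤ 1 - t := by nlinarith
  rcases hu'.eq_or_lt with rfl | hu'
  · simpa using parallelDefect_nonneg le_rfl hw'
  have hdiff : γ / 4 * u' ≤ (1 - t) * u' - t * w' :=
    calc γ / 4 * u' ≤ (1 - t) * u' - (1 - t) / 2 * u' := by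
          nlinarith [mul_le_mul_of_nonneg_right hhalf hu'.le]
      _ ≤ (1 - t) * u' - t * (γ / 2 * u') := by nlinarith
      _ ≤ (1 - t) * u' - t * w' := by gcongr
  rw [parallelDefect, le_div_iff₀ (by positivity)]
  calc γ ^ 2 / 24 * u' * (u' + w') ≤ γ ^ 2 / 24 * u' * (3 / 2 * u') := by gcongr; nlinarith
    _ = (γ / 4 * u') ^ 2 := by ring
    _ ≤ ((1 - t) * u' - t * w') ^ 2 := by gcongr

end ParallelSum

section BddMeasurable

variable {X Y : Type*} [MeasurableSpace X] [MeasurableSpace Y] {f g : X → ℝ}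

/-- A bounded measurable real function. The class is used because its members are integrable against
every finite measure and closed under sums, products and marginalisation. -/
structure BddMeasurable (f : X → ℝ) : Prop where
  measurable : Measurable f
  bounded : ∃ C, ∀ x, |f x| ≤ C

namespace BddMeasurable

lemma integrable (hf : BddMeasurable f) (ν : Measure X) [IsFiniteMeasure ν] : Integrable f ν :=
  let ⟨C, hC⟩ := hf.bounded
  .of_bound hf.measurable.aestronglyMeasurable C (.of_forall hC)

lemma const (c : ℝ) : BddMeasurable fun _ : X => c :=
  ⟨measurable_const, |c|, fun _ => le_rfl⟩

lemma add (hf : BddMeasurable f) (hg : BddMeasurable g) : BddMeasurable fun x => f x + g x :=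
  let ⟨C, hC⟩ := hf.bounded
  let ⟨D, hD⟩ := hg.bounded
  ⟨hf.measurable.add hg.measurable, C + D,
    fun x => (abs_add_le _ _).trans (add_le_add (hC x) (hD x))⟩

lemma mul (hf : BddMeasurable f) (hg : BddMeasurable g) : BddMeasurable fun x => f x * g x :=
  let ⟨C, hC⟩ := hf.bounded
  let ⟨D, hD⟩ := hg.bounded
  ⟨hf.measurable.mul hg.measurable, C * D, fun x => (abs_mul _ _).trans_le
    (mul_le_mul (hC x) (hD x) (abs_nonneg _) ((abs_nonneg _).trans (hC x)))⟩

lemma sub (hf : BddMeasurable f) (hg : BddMeasurable g) : BddMeasurable fun x => f x - g x := by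
  simpa [sub_eq_add_neg] using hf.add ((const (-1)).mul hg)

lemma sq (hf : BddMeasurable f) : BddMeasurable fun x => f x ^ 2 := by
  simpa [pow_two] using hf.mul hf

lemma comp (hf : BddMeasurable f) {h : Y → X} (hh : Measurable h) :
    BddMeasurable fun y => f (h y) :=
  let ⟨C, hC⟩ := hf.bounded
  ⟨hf.measurable.comp hh, C, fun _ => hC _⟩

lemma finset_sum {α : Type*} {E : Finset α} {F : α → X → ℝ} (hF : ∀ e ∈ E, BddMeasurable (F e)) :
    BddMeasurable fun x => ∑ e ∈ E, F e x := by
  classical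
  induction E using Finset.induction_on with
  | empty => simpa using const 0
  | insert e E he ih =>
    simpa [Finset.sum_insert he] using (hF e (Finset.mem_insert_self e E)).add
      (ih fun e' he' => hF e' (Finset.mem_insert_of_mem he'))

lemma of_mem_Icc (hf : Measurable f) {C : ℝ} (h : ∀ x, f x ∈ Icc 0 C) : BddMeasurable f :=
  ⟨hf, C, fun x => (abs_of_nonneg (h x).1).trans_le (h x).2⟩

lemma indicator_one {s : Set X} (hs : MeasurableSet s) :
    BddMeasurable (s.indicator (1 : X → ℝ)) :=
  .of_mem_Icc (C := 1) (measurable_one.indicator hs) fun x =>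
    ⟨indicator_nonneg (fun _ _ => zero_le_one) x, indicator_le_self' (fun _ _ => zero_le_one) x⟩

end BddMeasurable

end BddMeasurable

section AverageOutside

variable {ι : Type*} [DecidableEq ι] {Ω : ι → Type*} [∀ i, MeasurableSpace (Ω i)]

lemma measurable_piecewise_prod (T : Finset ι) :
    Measurable fun p : (∀ i, Ω i) × (∀ i, Ω i) => T.piecewise p.1 p.2 := by
  refine measurable_pi_lambda _ fun i => ?_
  by_cases hi : i ∈ T
  · simpa only [Finset.piecewise, hi, if_true] using by fun_prop
  · simpa only [Finset.piecewise, hi, if_false] using by fun_prop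

variable [Fintype ι] (μ : ∀ i, Measure (Ω i))

/-- The conditional expectation of `f` given the coordinates in `T`, defined pointwise by
averaging over the coordinates outside `T`. -/
def averageOutside (T : Finset ι) (f : (∀ i, Ω i) → ℝ) (x : ∀ i, Ω i) : ℝ :=
  ∫ y, f (T.piecewise x y) ∂Measure.pi μ

variable {μ} {f g : (∀ i, Ω i) → ℝ}

lemma dependsOn_averageOutside (T : Finset ι) : DependsOn (averageOutside μ T f) (T : Set ι) := by
  intro x x' h
  have : ∀ y, T.piecewise x y = T.piecewise x' y := fun y =>
    T.piecewise_congr (fun i hi => h i hi) fun _ _ => rfl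
  simp [averageOutside, this]

lemma averageOutside_mul_of_dependsOn {T : Finset ι} (hg : DependsOn g (T : Set ι))
    (x : ∀ i, Ω i) :
    averageOutside μ T (fun y => g y * f y) x = g x * averageOutside μ T f x := by
  have : ∀ y, g (T.piecewise x y) = g x := fun y => hg fun i hi => T.piecewise_eq_of_mem x y hi
  simp only [averageOutside, this, integral_const_mul]

variable (μ) [∀ i, IsProbabilityMeasure (μ i)]

lemma measurePreserving_piecewise (T : Finset ι) :
    MeasurePreserving (fun p : (∀ i, Ω i) × (∀ i, Ω i) => T.piecewise p.1 p.2)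
      ((Measure.pi μ).prod (Measure.pi μ)) (Measure.pi μ) := by
  refine ⟨measurable_piecewise_prod T, (Measure.pi_eq fun s hs => ?_).symm⟩
  have hpre : (fun p : (∀ i, Ω i) × (∀ i, Ω i) => T.piecewise p.1 p.2) ⁻¹' univ.pi s =
      (univ.pi fun i => if i ∈ T then s i else univ) ×ˢ
        (univ.pi fun i => if i ∈ T then univ else s i) := by
    ext p
    simp only [mem_preimage, Set.mem_pi, mem_univ, true_imp_iff, mem_prod, ← forall_and]
    refine forall_congr' fun i => ?_
    by_cases hi : i ∈ T <;> simp [hi]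
  rw [Measure.map_apply (measurable_piecewise_prod T) (.univ_pi hs), hpre, Measure.prod_prod,
    Measure.pi_pi, Measure.pi_pi, ← Finset.prod_mul_distrib]
  refine Finset.prod_congr rfl fun i _ => ?_
  by_cases hi : i ∈ T <;> simp [hi]

variable {μ}

lemma bddMeasurable_averageOutside (hf : BddMeasurable f) (T : Finset ι) :
    BddMeasurable (averageOutside μ T f) := by
  have hcomp := (hf.comp (measurable_piecewise_prod T)).measurable.stronglyMeasurable
  refine ⟨(hcomp.integral_prod_right' (ν := Measure.pi μ)).measurable, ?_⟩
  obtain ⟨C, hC⟩ := hf.bounded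
  refine ⟨C, fun x => ?_⟩
  simpa [averageOutside] using norm_integral_le_of_norm_le_const (μ := Measure.pi μ)
    (f := fun y => f (T.piecewise x y)) (.of_forall fun y => hC (T.piecewise x y))

lemma averageOutside_mono (hf : BddMeasurable f) (hg : BddMeasurable g) (hfg : f ≤ g)
    (T : Finset ι) : averageOutside μ T f ≤ averageOutside μ T g := fun x =>
  have hx : Measurable fun y : ∀ i, Ω i => T.piecewise x y :=
    (measurable_piecewise_prod T).comp measurable_prodMk_left
  integral_mono ((hf.comp hx).integrable _) ((hg.comp hx).integrable _) fun _ => hfg _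

lemma averageOutside_const (T : Finset ι) (c : ℝ) (x : ∀ i, Ω i) :
    averageOutside μ T (fun _ => c) x = c := by
  simp [averageOutside]

lemma integral_averageOutside (hf : BddMeasurable f) (T : Finset ι) :
    ∫ x, averageOutside μ T f x ∂Measure.pi μ = ∫ x, f x ∂Measure.pi μ := by
  have hmp := measurePreserving_piecewise μ T
  simp only [averageOutside]
  rw [← integral_prod (fun p : (∀ i, Ω i) × (∀ i, Ω i) => f (T.piecewise p.1 p.2))
    ((hf.comp hmp.measurable).integrable _), ← integral_map hmp.measurable.aemeasurable
    hf.measurable.aestronglyMeasurable, hmp.map_eq]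

lemma averageOutside_averageOutside (hf : BddMeasurable f) (T T' : Finset ι) (x : ∀ i, Ω i) :
    averageOutside μ T (averageOutside μ T' f) x = averageOutside μ (T ∩ T') f x := by
  have hx : Measurable fun y : ∀ i, Ω i => (T ∩ T').piecewise x y :=
    (measurable_piecewise_prod _).comp measurable_prodMk_left
  have hpw : ∀ y z : ∀ i, Ω i, T'.piecewise (T.piecewise x y) z =
      (T ∩ T').piecewise x (T'.piecewise y z) := by
    intro y z
    ext i
    by_cases hi : i ∈ T <;> by_cases hi' : i ∈ T' <;> simp [hi, hi']
  simp only [averageOutside, hpw]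
  exact integral_averageOutside (hf.comp hx) T'

lemma integral_mul_averageOutside {T : Finset ι} (hf : BddMeasurable f) (hg : BddMeasurable g)
    (hgT : DependsOn g (T : Set ι)) :
    ∫ x, g x * averageOutside μ T f x ∂Measure.pi μ = ∫ x, g x * f x ∂Measure.pi μ := by
  simp only [← averageOutside_mul_of_dependsOn hgT]
  exact integral_averageOutside (hg.mul hf) T

lemma integral_mul_averageOutside_inter {T : Finset ι} (hf : BddMeasurable f)
    (hg : BddMeasurable g) (hgT : DependsOn g (T : Set ι)) (T' : Finset ι) :
    ∫ x, g x * averageOutside μ (T ∩ T') f x ∂Measure.pi μ =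
      ∫ x, g x * averageOutside μ T' f x ∂Measure.pi μ := by
  simp only [← averageOutside_averageOutside hf]
  exact integral_mul_averageOutside (bddMeasurable_averageOutside hf T') hg hgT

lemma setIntegral_eq_integral_indicator_one_mul {X : Type*} [MeasurableSpace X] (ν : Measure X)
    {s : Set X} (hs : MeasurableSet s) (f : X → ℝ) :
    ∫ x in s, f x ∂ν = ∫ x, s.indicator 1 x * f x ∂ν := by
  rw [← integral_indicator hs]
  congr with x
  by_cases hx : x ∈ s <;> simp [hx]

lemma setIntegral_averageOutside {T : Finset ι} {s : Set (∀ i, Ω i)} (hf : BddMeasurable f)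
    (hs : MeasurableSet s) (hsT : DependsOn (· ∈ s) (T : Set ι)) :
    ∫ x in s, averageOutside μ T f x ∂Measure.pi μ = ∫ x in s, f x ∂Measure.pi μ := by
  simp only [setIntegral_eq_integral_indicator_one_mul _ hs]
  refine integral_mul_averageOutside hf (.indicator_one hs) fun x y hxy => ?_
  have hiff : x ∈ s ↔ y ∈ s := iff_of_eq (hsT hxy)
  classical simp [indicator_apply, hiff]

lemma setIntegral_averageOutside_indicator_one_comm {s s' : Set (∀ i, Ω i)}
    (hs : MeasurableSet s) (hs' : MeasurableSet s') (T : Finset ι) :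
    ∫ x in s, averageOutside μ T (s'.indicator 1) x ∂Measure.pi μ =
      ∫ x in s', averageOutside μ T (s.indicator 1) x ∂Measure.pi μ := by
  have hself : ∀ {s s' : Set (∀ i, Ω i)}, MeasurableSet s → MeasurableSet s' →
      ∫ x in s, averageOutside μ T (s'.indicator 1) x ∂Measure.pi μ =
        ∫ x, averageOutside μ T (s'.indicator 1) x * averageOutside μ T (s.indicator 1) x
          ∂Measure.pi μ := fun hs hs' => by
    rw [setIntegral_eq_integral_indicator_one_mul _ hs, integral_mul_averageOutside
      (.indicator_one hs) (bddMeasurable_averageOutside (.indicator_one hs') T)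
      (dependsOn_averageOutside T)]
    simp only [mul_comm]
  rw [hself hs hs', hself hs' hs]
  simp only [mul_comm]

end AverageOutside

section Energy

variable {ι : Type*} [Fintype ι] [DecidableEq ι] {Ω : ι → Type*} [∀ i, MeasurableSpace (Ω i)]
  (μ : ∀ i, Measure (Ω i)) (Q : Set (∀ i, Ω i))

/-- The conditional probability of `Q` given the coordinates in `T`. -/
def marginal (T : Finset ι) : (∀ i, Ω i) → ℝ := averageOutside μ T (Q.indicator 1)

/-- The potential of the energy-increment argument: it decreases as `T` grows, and strictly so
where the effect of revealing the coordinate `i` on the marginal of `Q` changes with `T`. -/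
def energy (i : ι) (T : Finset ι) : ℝ :=
  ∫ x, parallelSum (marginal μ Q T x) (marginal μ Q (insert i T) x) ∂Measure.pi μ

/-- The set of points at which the coordinate `i` is `γ`-typical for `Q` given the coordinates in
`T`: revealing `i` in addition keeps at least a `γ`-fraction of the marginal of `Q`. -/
def typicalAt (γ : ℝ) (i : ι) (T : Finset ι) : Set (∀ i, Ω i) :=
  {x | γ * marginal μ Q T x ≤ marginal μ Q (insert i T) x}

lemma dependsOn_marginal (T : Finset ι) : DependsOn (marginal μ Q T) (T : Set ι) :=
  dependsOn_averageOutside T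

lemma dependsOn_typicalAt (γ : ℝ) (i : ι) (T : Finset ι) :
    DependsOn (· ∈ typicalAt μ Q γ i T) (insert i T : Finset ι) := fun x y hxy => by
  simp only [typicalAt, Set.mem_ofPred_eq, dependsOn_marginal μ Q (insert i T) hxy,
    dependsOn_marginal μ Q T fun j hj => hxy j (Finset.mem_insert_of_mem hj)]

variable {Q} [∀ i, IsProbabilityMeasure (μ i)]

lemma bddMeasurable_marginal (hQ : MeasurableSet Q) (T : Finset ι) :
    BddMeasurable (marginal μ Q T) :=
  bddMeasurable_averageOutside (.indicator_one hQ) T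

lemma marginal_mem_Icc (hQ : MeasurableSet Q) (T : Finset ι) (x : ∀ i, Ω i) :
    marginal μ Q T x ∈ Icc 0 1 := by
  constructor
  · exact integral_nonneg fun _ => indicator_nonneg (fun _ _ => zero_le_one) _
  · rw [← averageOutside_const (μ := μ) T 1 x]
    exact averageOutside_mono (.indicator_one hQ) (.const 1)
      (indicator_le_self' fun _ _ => zero_le_one) T x

lemma setIntegral_marginal (hQ : MeasurableSet Q) {T : Finset ι} {s : Set (∀ i, Ω i)}
    (hs : MeasurableSet s) (hsT : DependsOn (· ∈ s) (T : Set ι)) :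
    ∫ x in s, marginal μ Q T x ∂Measure.pi μ = (Measure.pi μ).real (s ∩ Q) := by
  rw [marginal, setIntegral_averageOutside (.indicator_one hQ) hs hsT, integral_indicator_one hQ,
    measureReal_restrict_apply hQ, inter_comm]

lemma integral_marginal (hQ : MeasurableSet Q) (T : Finset ι) :
    ∫ x, marginal μ Q T x ∂Measure.pi μ = (Measure.pi μ).real Q := by
  rw [marginal, integral_averageOutside (.indicator_one hQ), integral_indicator_one hQ]

lemma bddMeasurable_parallelWeight_marginal (hQ : MeasurableSet Q) (T T' : Finset ι) :
    BddMeasurable fun x => parallelWeight (marginal μ Q T x) (marginal μ Q T' x) :=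
  have hT := (bddMeasurable_marginal μ hQ T).measurable
  have hT' := (bddMeasurable_marginal μ hQ T').measurable
  .of_mem_Icc (hT.div (hT.add hT')) fun x =>
    parallelWeight_mem_Icc (marginal_mem_Icc μ hQ T x).1 (marginal_mem_Icc μ hQ T' x).1

lemma bddMeasurable_parallelSum_marginal (hQ : MeasurableSet Q) (T T' : Finset ι) :
    BddMeasurable fun x => parallelSum (marginal μ Q T x) (marginal μ Q T' x) :=
  have hT := bddMeasurable_marginal μ hQ T
  have hT' := bddMeasurable_marginal μ hQ T'
  .of_mem_Icc ((hT.mul hT').measurable.div (hT.add hT').measurable) fun x =>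
    have hu := marginal_mem_Icc μ hQ T x
    have hw := marginal_mem_Icc μ hQ T' x
    ⟨parallelSum_nonneg hu.1 hw.1, (parallelSum_le_left hu.1 hw.1).trans hu.2⟩

lemma energy_mem_Icc (hQ : MeasurableSet Q) (i : ι) (T : Finset ι) :
    energy μ Q i T ∈ Icc 0 ((Measure.pi μ).real Q) := by
  have hpos := fun T x => (marginal_mem_Icc μ hQ T x).1
  refine ⟨integral_nonneg fun x => parallelSum_nonneg (hpos _ x) (hpos _ x), ?_⟩
  calc energy μ Q i T ≤ ∫ x, marginal μ Q T x ∂Measure.pi μ :=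
        integral_mono ((bddMeasurable_parallelSum_marginal μ hQ _ _).integrable _)
          ((bddMeasurable_marginal μ hQ T).integrable _)
          fun x => parallelSum_le_left (hpos _ x) (hpos _ x)
    _ = (Measure.pi μ).real Q := integral_marginal μ hQ T

variable {i : ι} {T T' : Finset ι}

lemma bddMeasurable_parallelDefect_marginal (hQ : MeasurableSet Q) (i : ι) (T T' : Finset ι) :
    BddMeasurable fun x => parallelDefect
      (parallelWeight (marginal μ Q T x) (marginal μ Q (insert i T) x))
      (marginal μ Q T' x) (marginal μ Q (insert i T') x) := by
  have ht := bddMeasurable_parallelWeight_marginal μ hQ T (insert i T)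
  have hpos := fun T x => (marginal_mem_Icc μ hQ T x).1
  simpa only [add_eq_parallelSum_add_parallelDefect (hpos _ _) (hpos _ _), add_sub_cancel_left]
    using ((((BddMeasurable.const 1).sub ht).sq.mul (bddMeasurable_marginal μ hQ T')).add
    (ht.sq.mul (bddMeasurable_marginal μ hQ (insert i T')))).sub
    (bddMeasurable_parallelSum_marginal μ hQ T' (insert i T'))

/-- The weight that is optimal for `T` depends only on the coordinates in `insert i T`, so it can
be tested against the marginals for `T'` with the same outcome as against those for `T`. -/
lemma energy_sub_energy (hQ : MeasurableSet Q) (hTT' : T ⊆ T') (hi : i ∈ T' → i ∈ T) :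
    energy μ Q i T - energy μ Q i T' = ∫ x, parallelDefect
      (parallelWeight (marginal μ Q T x) (marginal μ Q (insert i T) x))
      (marginal μ Q T' x) (marginal μ Q (insert i T') x) ∂Measure.pi μ := by
  set t : (∀ i, Ω i) → ℝ := fun x => parallelWeight (marginal μ Q T x) (marginal μ Q (insert i T) x)
    with ht_def
  have ht : BddMeasurable t := bddMeasurable_parallelWeight_marginal μ hQ T (insert i T)
  have ht' : BddMeasurable fun x => (1 - t x) := (BddMeasurable.const 1).sub ht
  have htU : DependsOn t (insert i T : Finset ι) := fun x y hxy => by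
    rw [ht_def]
    simp only [dependsOn_marginal μ Q T fun j hj => hxy j (Finset.mem_insert_of_mem hj),
      dependsOn_marginal μ Q (insert i T) hxy]
  have hq := bddMeasurable_marginal μ hQ
  have hpos := fun T x => (marginal_mem_Icc μ hQ T x).1
  have htransfer : ∀ {g : (∀ i, Ω i) → ℝ} {U U' : Finset ι}, BddMeasurable g →
      DependsOn g (insert i T : Finset ι) → insert i T ∩ U' = U →
      ∫ x, g x * marginal μ Q U x ∂Measure.pi μ = ∫ x, g x * marginal μ Q U' x ∂Measure.pi μ := by
    rintro g _ U' hg hgU rfl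
    exact integral_mul_averageOutside_inter (.indicator_one hQ) hg hgU U'
  have hinter : insert i T ∩ T' = T := by grind
  have hinter' : insert i T ∩ insert i T' = insert i T := by grind
  have henergy : energy μ Q i T = ∫ x, ((1 - t x) ^ 2 * marginal μ Q T' x +
      t x ^ 2 * marginal μ Q (insert i T') x) ∂Measure.pi μ := by
    simp only [energy, parallelSum_eq_parallelWeight (hpos _ _) (hpos _ _)]
    rw [integral_add ((ht'.sq.mul (hq _)).integrable _) ((ht.sq.mul (hq _)).integrable _),
      integral_add ((ht'.sq.mul (hq _)).integrable _) ((ht.sq.mul (hq _)).integrable _),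
      ← htransfer ht'.sq (fun x y hxy => by simp only [htU hxy]) hinter,
      ← htransfer ht.sq (fun x y hxy => by simp only [htU hxy]) hinter']
  have hsum := bddMeasurable_parallelSum_marginal μ hQ T' (insert i T')
  have hdefect := bddMeasurable_parallelDefect_marginal μ hQ i T T'
  simp only [henergy, add_eq_parallelSum_add_parallelDefect (hpos _ _) (hpos _ _)]
  rw [integral_add (hsum.integrable _) (hdefect.integrable _), energy, add_sub_cancel_left]

lemma energy_le_energy (hQ : MeasurableSet Q) (hTT' : T ⊆ T') (hi : i ∈ T' → i ∈ T) :
    energy μ Q i T' ≤ energy μ Q i T := by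
  rw [← sub_nonneg, energy_sub_energy μ hQ hTT' hi]
  exact integral_nonneg fun x =>
    parallelDefect_nonneg (marginal_mem_Icc μ hQ _ x).1 (marginal_mem_Icc μ hQ _ x).1

lemma measurableSet_typicalAt (hQ : MeasurableSet Q) (γ : ℝ) (i : ι) (T : Finset ι) :
    MeasurableSet (typicalAt μ Q γ i T) :=
  measurableSet_le ((bddMeasurable_marginal μ hQ T).measurable.const_mul γ)
    (bddMeasurable_marginal μ hQ (insert i T)).measurable

variable {γ : ℝ}

lemma setIntegral_marginal_typicalAt_diff_le (hQ : MeasurableSet Q) (hγ : 0 < γ) (hγ1 : γ ≤ 1)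
    (hTT' : T ⊆ T') (hi : i ∈ T' → i ∈ T) :
    ∫ x in typicalAt μ Q γ i T \ typicalAt μ Q (γ / 2) i T', marginal μ Q T' x ∂Measure.pi μ ≤
      24 / γ ^ 2 * (energy μ Q i T - energy μ Q i T') := by
  set D := typicalAt μ Q γ i T \ typicalAt μ Q (γ / 2) i T'
  have hD : MeasurableSet D :=
    (measurableSet_typicalAt μ hQ _ _ _).diff (measurableSet_typicalAt μ hQ _ _ _)
  have hpos := fun T x => (marginal_mem_Icc μ hQ T x).1
  have hdefect := (bddMeasurable_parallelDefect_marginal μ hQ i T T').integrable (Measure.pi μ)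
  have hq := (bddMeasurable_marginal μ hQ T').integrable (Measure.pi μ)
  rw [energy_sub_energy μ hQ hTT' hi, ← integral_const_mul]
  calc ∫ x in D, marginal μ Q T' x ∂Measure.pi μ
      ≤ ∫ x in D, 24 / γ ^ 2 * parallelDefect
          (parallelWeight (marginal μ Q T x) (marginal μ Q (insert i T) x))
          (marginal μ Q T' x) (marginal μ Q (insert i T') x) ∂Measure.pi μ := by
        refine setIntegral_mono_on hq.integrableOn (hdefect.const_mul _).integrableOn hD
          fun x hx => ?_
        have hle := le_parallelDefect hγ hγ1 (hpos T x) hx.1 (hpos T' x) (hpos _ x)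
          (not_le.1 hx.2).le
        calc marginal μ Q T' x = 24 / γ ^ 2 * (γ ^ 2 / 24 * marginal μ Q T' x) := by field_simp
          _ ≤ _ := by gcongr
    _ ≤ _ := setIntegral_le_integral (hdefect.const_mul _) (.of_forall fun x =>
        mul_nonneg (by positivity) (parallelDefect_nonneg (hpos _ x) (hpos _ x)))

end Energy

section TypicalPart

variable {ι : Type*} [Fintype ι] [DecidableEq ι] {Ω : ι → Type*} [∀ i, MeasurableSpace (Ω i)]
  (μ : ∀ i, Measure (Ω i)) (Q : Set (∀ i, Ω i)) {B : Set (∀ i, Ω i)} {γ : ℝ} {S T : Finset ι}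

/-- The points of `B` at which every coordinate in `S` is `γ`-typical for `Q` given the coordinates
in `T`. -/
def typicalPart (γ : ℝ) (B : Set (∀ i, Ω i)) (S T : Finset ι) : Set (∀ i, Ω i) :=
  B ∩ ⋂ i ∈ S, typicalAt μ Q γ i T

lemma typicalPart_subset (γ : ℝ) (S T : Finset ι) : typicalPart μ Q γ B S T ⊆ B :=
  inter_subset_left

lemma dependsOn_typicalPart (γ : ℝ) (hB : DependsOn (· ∈ B) (S : Set ι)) (T : Finset ι) :
    DependsOn (· ∈ typicalPart μ Q γ B S T) (T ∪ S : Finset ι) := by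
  intro x y hxy
  have hBxy : (x ∈ B) = (y ∈ B) := hB fun i hi => hxy i (Finset.mem_union_right T hi)
  have htyp : ∀ i ∈ S, (x ∈ typicalAt μ Q γ i T) = (y ∈ typicalAt μ Q γ i T) := fun i hi =>
    dependsOn_typicalAt μ Q γ i T fun j hj => hxy j (by
      rcases Finset.mem_insert.1 hj with rfl | hj
      · exact Finset.mem_union_right T hi
      · exact Finset.mem_union_left S hj)
  simp +contextual only [typicalPart, mem_inter_iff, hBxy, mem_iInter₂, htyp]

variable {Q} [∀ i, IsProbabilityMeasure (μ i)]

lemma measurableSet_typicalPart (hQ : MeasurableSet Q) (γ : ℝ) (hB : MeasurableSet B)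
    (S T : Finset ι) : MeasurableSet (typicalPart μ Q γ B S T) :=
  hB.inter (.biInter S.countable_toSet fun i _ => measurableSet_typicalAt μ hQ γ i T)

lemma setIntegral_marginal_le_setIntegral_marginal_insert (hQ : MeasurableSet Q) (hγ : 0 < γ)
    (hγ1 : γ ≤ 1) {i : ι} {T' : Finset ι} {G : Set (∀ i, Ω i)} (hG : MeasurableSet G)
    (hGi : G ⊆ typicalAt μ Q γ i T) (hTT' : T ⊆ T') (hi : i ∈ T' → i ∈ T) :
    ∫ x in G, marginal μ Q T' x ∂Measure.pi μ ≤
      2 / γ * ∫ x in G, marginal μ Q (insert i T') x ∂Measure.pi μ +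
        24 / γ ^ 2 * (energy μ Q i T - energy μ Q i T') := by
  set D := typicalAt μ Q γ i T \ typicalAt μ Q (γ / 2) i T'
  have hD : MeasurableSet D :=
    (measurableSet_typicalAt μ hQ _ _ _).diff (measurableSet_typicalAt μ hQ _ _ _)
  have hpos := fun T x => (marginal_mem_Icc μ hQ T x).1
  have hq := fun T => (bddMeasurable_marginal μ hQ T).integrable (Measure.pi μ)
  have hpointwise : ∀ x ∈ G,
      marginal μ Q T' x ≤
        2 / γ * marginal μ Q (insert i T') x + D.indicator (marginal μ Q T') x := by
    intro x hx
    by_cases hxi : x ∈ typicalAt μ Q (γ / 2) i T'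
    · calc marginal μ Q T' x = 2 / γ * (γ / 2 * marginal μ Q T' x) := by field_simp
        _ ≤ 2 / γ * marginal μ Q (insert i T') x := by gcongr; exact hxi
        _ ≤ _ := le_add_of_nonneg_right (indicator_nonneg (fun y _ => hpos T' y) x)
    · rw [indicator_of_mem (show x ∈ D from ⟨hGi hx, hxi⟩)]
      exact le_add_of_nonneg_left (mul_nonneg (by positivity) (hpos _ x))
  calc ∫ x in G, marginal μ Q T' x ∂Measure.pi μ
      ≤ ∫ x in G, (2 / γ * marginal μ Q (insert i T') x + D.indicator (marginal μ Q T') x)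
          ∂Measure.pi μ :=
        setIntegral_mono_on (hq T').integrableOn
          (((hq _).const_mul _).add ((hq T').indicator hD)).integrableOn hG hpointwise
    _ = 2 / γ * ∫ x in G, marginal μ Q (insert i T') x ∂Measure.pi μ +
          ∫ x in G, D.indicator (marginal μ Q T') x ∂Measure.pi μ := by
        rw [integral_add ((hq _).const_mul _).integrableOn ((hq T').indicator hD).integrableOn,
          integral_const_mul]
    _ ≤ 2 / γ * ∫ x in G, marginal μ Q (insert i T') x ∂Measure.pi μ +
          ∫ x in D, marginal μ Q T' x ∂Measure.pi μ := by
        rw [← integral_indicator hD]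
        exact add_le_add_right (setIntegral_le_integral ((hq T').indicator hD)
          (.of_forall fun x => indicator_nonneg (fun y _ => hpos T' y) x)) _
    _ ≤ _ := by
        gcongr
        exact setIntegral_marginal_typicalAt_diff_le μ hQ hγ hγ1 hTT' hi

lemma setIntegral_marginal_typicalPart_le_of_subset (hQ : MeasurableSet Q) (hγ : 0 < γ)
    (hγ1 : γ ≤ 1) (hB : MeasurableSet B) {F : Finset ι} (hF : F ⊆ S) :
    ∫ x in typicalPart μ Q γ B S T, marginal μ Q T x ∂Measure.pi μ ≤
      (2 / γ) ^ F.card * (∫ x in typicalPart μ Q γ B S T, marginal μ Q (T ∪ F) x ∂Measure.pi μ +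
        24 / γ ^ 2 * ∑ i ∈ F, (energy μ Q i T - energy μ Q i (T ∪ S.erase i))) := by
  induction F using Finset.induction_on with
  | empty => simp
  | insert i F hiF ih =>
    obtain ⟨hiS, hFS⟩ := Finset.insert_subset_iff.1 hF
    set G := typicalPart μ Q γ B S T
    set Δ : ι → ℝ := fun i => energy μ Q i T - energy μ Q i (T ∪ S.erase i)
    have hΔ : ∀ j, 0 ≤ Δ j := fun j =>
      sub_nonneg.2 (energy_le_energy μ hQ Finset.subset_union_left (by simp))
    have hstep : ∫ x in G, marginal μ Q (T ∪ F) x ∂Measure.pi μ ≤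
        2 / γ * ∫ x in G, marginal μ Q (T ∪ insert i F) x ∂Measure.pi μ + 24 / γ ^ 2 * Δ i := by
      rw [Finset.union_insert]
      refine (setIntegral_marginal_le_setIntegral_marginal_insert μ hQ hγ hγ1
        (measurableSet_typicalPart μ hQ γ hB S T) (i := i) (T := T)
        (fun x hx => mem_iInter₂.1 hx.2 i hiS) Finset.subset_union_left (by grind)).trans ?_
      gcongr
      exact sub_le_sub_left (energy_le_energy μ hQ
        (Finset.union_subset_union_right (Finset.subset_erase.2 ⟨hFS, hiF⟩)) (by grind)) _
    have hsum : 24 / γ ^ 2 * ∑ j ∈ insert i F, Δ j ≤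
        2 / γ * (24 / γ ^ 2 * ∑ j ∈ insert i F, Δ j) :=
      le_mul_of_one_le_left (mul_nonneg (by positivity) (Finset.sum_nonneg fun j _ => hΔ j))
        ((one_le_div hγ).2 (by linarith))
    calc ∫ x in G, marginal μ Q T x ∂Measure.pi μ
        ≤ (2 / γ) ^ F.card * (∫ x in G, marginal μ Q (T ∪ F) x ∂Measure.pi μ +
            24 / γ ^ 2 * ∑ j ∈ F, Δ j) := ih hFS
      _ ≤ (2 / γ) ^ F.card * (2 / γ * ∫ x in G, marginal μ Q (T ∪ insert i F) x ∂Measure.pi μ +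
            24 / γ ^ 2 * ∑ j ∈ insert i F, Δ j) := by
          rw [Finset.sum_insert hiF, mul_add (24 / γ ^ 2), ← add_assoc]
          gcongr
      _ ≤ (2 / γ) ^ F.card * (2 / γ * ∫ x in G, marginal μ Q (T ∪ insert i F) x ∂Measure.pi μ +
            2 / γ * (24 / γ ^ 2 * ∑ j ∈ insert i F, Δ j)) := by
          exact mul_le_mul_of_nonneg_left (add_le_add_right hsum _) (by positivity)
      _ = _ := by rw [Finset.card_insert_of_notMem hiF]; ring

/-- Revealing the coordinates in `S` one at a time, the marginal of `Q` either survives up to a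
factor `2 / γ` or the energy drops; it cannot survive all of `S` because `Q` misses `B`. -/
lemma setIntegral_marginal_typicalPart_le (hQ : MeasurableSet Q) (hγ : 0 < γ) (hγ1 : γ ≤ 1)
    (hB : MeasurableSet B) (hBS : DependsOn (· ∈ B) (S : Set ι)) (hBQ : Disjoint B Q)
    (T : Finset ι) :
    ∫ x in typicalPart μ Q γ B S T, marginal μ Q T x ∂Measure.pi μ ≤
      (2 / γ) ^ S.card *
        (24 / γ ^ 2 * ∑ i ∈ S, (energy μ Q i T - energy μ Q i (T ∪ S.erase i))) := by
  have hzero : ∫ x in typicalPart μ Q γ B S T, marginal μ Q (T ∪ S) x ∂Measure.pi μ = 0 := by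
    rw [setIntegral_marginal μ hQ (measurableSet_typicalPart μ hQ γ hB S T)
      (dependsOn_typicalPart μ Q γ hBS T),
      (hBQ.mono_left (typicalPart_subset μ Q γ S T)).inter_eq, measureReal_empty]
  simpa only [hzero, zero_add] using setIntegral_marginal_typicalPart_le_of_subset (S := S) (T := T)
    μ hQ hγ hγ1 hB Subset.rfl

end TypicalPart

section BernoulliMean

variable {ι : Type*}

/-- The indicator function of the event `S ⊆ T` for a random set `T`. -/
def subsetIndicator (S : Finset ι) : Finset ι → ℝ := {T | S ⊆ T}.indicator 1

lemma subsetIndicator_mul_subsetIndicator [DecidableEq ι] (S S' : Finset ι) :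
    subsetIndicator S * subsetIndicator S' = subsetIndicator (S ∪ S') := by
  ext T
  by_cases hS : S ⊆ T <;> by_cases hS' : S' ⊆ T <;>
    simp [subsetIndicator, Finset.union_subset_iff, hS, hS']

variable [Fintype ι] {τ : ℝ} {F G : Finset ι → ℝ}

/-- The expectation of `F T`, where `T` is the random subset of `ι` containing each element
independently with probability `τ`. -/
def bernoulliMean (τ : ℝ) : (Finset ι → ℝ) →ₗ[ℝ] ℝ :=
  ∑ T, (τ ^ T.card * (1 - τ) ^ (Fintype.card ι - T.card)) • LinearMap.proj T

lemma bernoulliMean_apply (τ : ℝ) (F : Finset ι → ℝ) :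
    bernoulliMean τ F = ∑ T, τ ^ T.card * (1 - τ) ^ (Fintype.card ι - T.card) * F T := by
  simp [bernoulliMean]

lemma bernoulliMean_one (τ : ℝ) : bernoulliMean τ (1 : Finset ι → ℝ) = 1 := by
  simp [bernoulliMean_apply, Fintype.sum_pow_mul_eq_add_pow]

lemma bernoulliMean_mono (hτ0 : 0 ≤ τ) (hτ1 : τ ≤ 1) (h : F ≤ G) :
    bernoulliMean τ F ≤ bernoulliMean τ G := by
  simp only [bernoulliMean_apply]
  have : 0 ≤ 1 - τ := sub_nonneg.2 hτ1
  gcongr with T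
  exact h T

lemma exists_le_bernoulliMean (hτ0 : 0 ≤ τ) (hτ1 : τ ≤ 1) (F : Finset ι → ℝ) :
    ∃ T, F T ≤ bernoulliMean τ F := by
  obtain ⟨T, hT⟩ := Finite.exists_min F
  refine ⟨T, ?_⟩
  simpa [bernoulliMean_one] using bernoulliMean_mono hτ0 hτ1 (F := F T • 1) (G := F)
    fun T' => by simpa using hT T'

lemma bernoulliMean_abs_le_sqrt (hτ0 : 0 ≤ τ) (hτ1 : τ ≤ 1) (F : Finset ι → ℝ) :
    bernoulliMean τ |F| ≤ √(bernoulliMean τ (F ^ 2)) := by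
  set m := bernoulliMean τ |F|
  have hsq : (|F| - m • 1) ^ 2 = F ^ 2 - (2 * m) • |F| + m ^ 2 • 1 := by
    ext T
    simp only [Pi.add_apply, Pi.sub_apply, Pi.pow_apply, Pi.smul_apply, Pi.one_apply, Pi.abs_apply,
      smul_eq_mul, sub_sq, sq_abs]
    ring
  have hnonneg : 0 ≤ bernoulliMean τ ((|F| - m • 1) ^ 2) := by
    rw [← map_zero (bernoulliMean (ι := ι) τ)]
    exact bernoulliMean_mono hτ0 hτ1 fun T => sq_nonneg _
  rw [hsq, map_add, map_sub, map_smul, map_smul, bernoulliMean_one] at hnonneg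
  refine Real.le_sqrt_of_sq_le ?_
  simp only [smul_eq_mul] at hnonneg
  linarith

lemma bernoulliMean_subsetIndicator_singleton_mul [DecidableEq ι] (τ : ℝ) (i : ι)
    (F : Finset ι → ℝ) :
    bernoulliMean τ (subsetIndicator {i} * F) = τ * bernoulliMean τ fun T => F (insert i T) := by
  have hsplit : ∀ g : Finset ι → ℝ, ∑ T, g T =
      ∑ T ∈ (Finset.univ.erase i).powerset, (g T + g (insert i T)) := by
    intro g
    rw [← Finset.powerset_univ, ← Finset.insert_erase (Finset.mem_univ i),
      Finset.sum_powerset_insert (Finset.notMem_erase i _), Finset.sum_add_distrib]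
    simp
  rw [bernoulliMean_apply, bernoulliMean_apply, hsplit, hsplit, Finset.mul_sum]
  refine Finset.sum_congr rfl fun T hT => ?_
  have hi : i ∉ T := fun h => Finset.notMem_erase i _ (Finset.mem_powerset.1 hT h)
  obtain ⟨k, hk⟩ : ∃ k, Fintype.card ι = T.card + 1 + k :=
    Nat.exists_eq_add_of_le (Finset.card_insert_of_notMem hi ▸ Finset.card_le_univ (insert i T))
  simp only [subsetIndicator, Pi.mul_apply, indicator, Set.mem_ofPred_eq,
    Finset.singleton_subset_iff, hi, if_false, Finset.mem_insert_self, if_true, Pi.one_apply,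
    Finset.insert_idem, Finset.card_insert_of_notMem hi, hk,
    show T.card + 1 + k - T.card = k + 1 by omega, Nat.add_sub_cancel_left]
  ring

lemma bernoulliMean_subsetIndicator_mul [DecidableEq ι] (τ : ℝ) (S : Finset ι)
    (F : Finset ι → ℝ) :
    bernoulliMean τ (subsetIndicator S * F) =
      τ ^ S.card * bernoulliMean τ fun T => F (T ∪ S) := by
  induction S using Finset.induction_on generalizing F with
  | empty =>
    have : subsetIndicator ∅ = (1 : Finset ι → ℝ) := by ext; simp [subsetIndicator]
    simp [this]
  | insert i S hi ih =>
    have hunion : ∀ T, F (T ∪ insert i S) = F (insert i (T ∪ S)) := by simp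
    rw [Finset.card_insert_of_notMem hi, pow_succ', mul_assoc, funext hunion,
      ← ih fun T => F (insert i T), Finset.insert_eq, ← subsetIndicator_mul_subsetIndicator,
      mul_assoc, bernoulliMean_subsetIndicator_singleton_mul]
    congr 2
    ext T
    simp [subsetIndicator, indicator, Finset.subset_insert_iff_of_notMem hi]

lemma bernoulliMean_subsetIndicator (τ : ℝ) (S : Finset ι) :
    bernoulliMean τ (subsetIndicator S) = τ ^ S.card := by
  classical
  simpa [← Pi.one_def, bernoulliMean_one] using bernoulliMean_subsetIndicator_mul τ S 1

lemma bernoulliMean_centered_mul_centered_of_disjoint (τ : ℝ) {A B : Finset ι}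
    (hAB : Disjoint A B) :
    bernoulliMean τ ((subsetIndicator A - τ ^ A.card • 1) * (subsetIndicator B - τ ^ B.card • 1)) =
      0 := by
  classical
  have hexpand : (subsetIndicator A - τ ^ A.card • 1) * (subsetIndicator B - τ ^ B.card • 1) =
      subsetIndicator (A ∪ B) - τ ^ B.card • subsetIndicator A - τ ^ A.card • subsetIndicator B +
        (τ ^ A.card * τ ^ B.card) • 1 := by
    rw [← subsetIndicator_mul_subsetIndicator]
    ext T
    simp only [Pi.add_apply, Pi.sub_apply, Pi.mul_apply, Pi.smul_apply, Pi.one_apply, smul_eq_mul]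
    ring
  simp only [hexpand, map_add, map_sub, map_smul, bernoulliMean_subsetIndicator, bernoulliMean_one,
    Finset.card_union_of_disjoint hAB, smul_eq_mul]
  ring

lemma bernoulliMean_centered_mul_centered_le_one (hτ0 : 0 ≤ τ) (hτ1 : τ ≤ 1) (A B : Finset ι) :
    bernoulliMean τ ((subsetIndicator A - τ ^ A.card • 1) * (subsetIndicator B - τ ^ B.card • 1)) ≤
      1 := by
  have habs : ∀ A T : Finset ι, |(subsetIndicator A - τ ^ A.card • 1) T| ≤ 1 := by
    intro A T
    have h0 : 0 ≤ τ ^ A.card := pow_nonneg hτ0 _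
    have h1 : τ ^ A.card ≤ 1 := pow_le_one₀ hτ0 hτ1
    by_cases hAT : A ⊆ T
    · have : (subsetIndicator A - τ ^ A.card • 1) T = 1 - τ ^ A.card := by
        simp [subsetIndicator, hAT]
      exact this ▸ abs_le.2 ⟨by linarith, by linarith⟩
    · have : (subsetIndicator A - τ ^ A.card • 1) T = -τ ^ A.card := by
        simp [subsetIndicator, hAT]
      exact this ▸ abs_le.2 ⟨by linarith, by linarith⟩
  rw [← bernoulliMean_one (ι := ι) τ]
  refine bernoulliMean_mono hτ0 hτ1 fun T => (le_abs_self _).trans ?_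
  rw [Pi.mul_apply, abs_mul]
  exact mul_le_one₀ (habs A T) (abs_nonneg _) (habs B T)

variable [DecidableEq ι] {α : Type*} {E : Finset α} {S : α → Finset ι} {s : ℕ}

lemma bernoulliMean_sq_sum_centered_le (hτ0 : 0 ≤ τ) (hτ1 : τ ≤ 1)
    (hS : ∀ e ∈ E, (S e).card = s) :
    bernoulliMean τ ((∑ e ∈ E, (subsetIndicator (S e) - τ ^ s • 1)) ^ 2) ≤
      ((E ×ˢ E).filter fun p => ¬ Disjoint (S p.1) (S p.2)).card := by
  rw [sq, Finset.sum_mul_sum, ← Finset.sum_product', map_sum, Finset.card_filter, Nat.cast_sum]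
  refine Finset.sum_le_sum fun p hp => ?_
  obtain ⟨hp1, hp2⟩ := Finset.mem_product.1 hp
  nth_rewrite 1 [← hS _ hp1]
  rw [← hS _ hp2]
  by_cases hdisj : Disjoint (S p.1) (S p.2)
  · simp [hdisj, bernoulliMean_centered_mul_centered_of_disjoint]
  · simpa [hdisj] using bernoulliMean_centered_mul_centered_le_one hτ0 hτ1 (S p.1) (S p.2)

/-- The sum on the left is, up to the factor `-τ ^ s`, the covariance of `F` with the number of sets
`S e` contained in the random set. -/
lemma sum_bernoulliMean_sub_union_le (hτ0 : 0 < τ) (hτ1 : τ ≤ 1) (hS : ∀ e ∈ E, (S e).card = s)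
    {c : ℝ} (hF : ∀ T, F T ∈ Icc 0 c) :
    ∑ e ∈ E, bernoulliMean τ (fun T => F T - F (T ∪ S e)) ≤
      c / τ ^ s * √((E ×ˢ E).filter fun p => ¬ Disjoint (S p.1) (S p.2)).card := by
  set Z : Finset ι → ℝ := ∑ e ∈ E, (subsetIndicator (S e) - τ ^ s • 1)
  have hterm : ∀ e ∈ E, bernoulliMean τ (fun T => F T - F (T ∪ S e)) =
      -(τ ^ s)⁻¹ * bernoulliMean τ ((subsetIndicator (S e) - τ ^ s • 1) * F) := by
    intro e he
    have hsub := map_sub (bernoulliMean τ) F fun T => F (T ∪ S e)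
    rw [sub_mul, smul_mul_assoc, one_mul, map_sub, map_smul, bernoulliMean_subsetIndicator_mul,
      hS e he, smul_eq_mul, ← mul_sub, neg_mul, inv_mul_cancel_left₀ (by positivity), neg_sub]
    exact hsub
  have hc : 0 ≤ c := (hF ∅).1.trans (hF ∅).2
  calc ∑ e ∈ E, bernoulliMean τ (fun T => F T - F (T ∪ S e))
      = (τ ^ s)⁻¹ * bernoulliMean τ (-(Z * F)) := by
        rw [Finset.sum_congr rfl hterm, ← Finset.mul_sum, ← map_sum, ← Finset.sum_mul, map_neg,
          neg_mul_comm]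
    _ ≤ (τ ^ s)⁻¹ * bernoulliMean τ (c • |Z|) := by
        gcongr
        refine bernoulliMean_mono hτ0.le hτ1 fun T => ?_
        calc -(Z T * F T) ≤ |Z T * F T| := neg_le_abs _
          _ = F T * |Z T| := by rw [abs_mul, abs_of_nonneg (hF T).1, mul_comm]
          _ ≤ c * |Z T| := by gcongr; exact (hF T).2
    _ ≤ (τ ^ s)⁻¹ * (c * √((E ×ˢ E).filter fun p => ¬ Disjoint (S p.1) (S p.2)).card) := by
        rw [map_smul, smul_eq_mul]
        gcongr
        exact (bernoulliMean_abs_le_sqrt hτ0.le hτ1 Z).trans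
          (Real.sqrt_le_sqrt (bernoulliMean_sq_sum_centered_le hτ0.le hτ1 hS))
    _ = _ := by ring

/-- The number of ordered pairs of edges of the hypergraph `(S e)_{e ∈ E}`, equal edges included,
that share at least two vertices. -/
def overlapCount (E : Finset α) (S : α → Finset ι) : ℕ :=
  ((E ×ˢ E).filter fun p => 1 < (S p.1 ∩ S p.2).card).card

lemma sum_card_not_disjoint_erase_le {r : ℕ} (hS : ∀ e ∈ E, (S e).card = r) :
    ∑ i, (((E.filter (i ∈ S ·)) ×ˢ (E.filter (i ∈ S ·))).filter
      fun p => ¬ Disjoint ((S p.1).erase i) ((S p.2).erase i)).card ≤ r * overlapCount E S := by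
  set R : ι → α × α → Prop := fun i p =>
    i ∈ S p.1 ∩ S p.2 ∧ ¬ Disjoint ((S p.1).erase i) ((S p.2).erase i)
  have hbound : ∀ p ∈ E ×ˢ E, (Finset.univ.filter (R · p)).card ≤
      if 1 < (S p.1 ∩ S p.2).card then r else 0 := by
    intro p hp
    split_ifs with hcard
    · rw [← hS _ (Finset.mem_product.1 hp).1]
      exact Finset.card_le_card fun i hi => by simp_all [R]
    · refine (Finset.card_eq_zero.2 (Finset.filter_eq_empty_iff.2 ?_)).le
      rintro i - ⟨hi, hndisj⟩
      obtain ⟨j, hj, hj'⟩ := Finset.not_disjoint_iff.1 hndisj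
      exact hcard (Finset.one_lt_card.2 ⟨i, hi, j, by grind, by grind⟩)
  calc ∑ i, _ = ∑ i, ((E ×ˢ E).filter (R i)).card := by
        refine Finset.sum_congr rfl fun i _ => congrArg Finset.card ?_
        ext p
        simp only [R, Finset.mem_filter, Finset.mem_product, Finset.mem_inter]
        tauto
    _ = ∑ p ∈ E ×ˢ E, (Finset.univ.filter (R · p)).card :=
        Finset.sum_card_bipartiteAbove_eq_sum_card_bipartiteBelow R
    _ ≤ ∑ p ∈ E ×ˢ E, if 1 < (S p.1 ∩ S p.2).card then r else 0 := Finset.sum_le_sum hbound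
    _ = r * overlapCount E S := by
        rw [← Finset.sum_filter, Finset.sum_const, overlapCount, smul_eq_mul, mul_comm]

lemma sum_sum_bernoulliMean_sub_union_erase_le (hτ0 : 0 < τ) (hτ1 : τ ≤ 1) {r : ℕ}
    (hS : ∀ e ∈ E, (S e).card = r) {F : ι → Finset ι → ℝ} {c : ℝ} (hc : 0 ≤ c)
    (hF : ∀ i T, F i T ∈ Icc 0 c) :
    ∑ e ∈ E, ∑ i ∈ S e, bernoulliMean τ (fun T => F i T - F i (T ∪ (S e).erase i)) ≤
      c / τ ^ (r - 1) * √(Fintype.card ι * (r * overlapCount E S)) := by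
  set N : ι → ℕ := fun i => (((E.filter (i ∈ S ·)) ×ˢ (E.filter (i ∈ S ·))).filter
      fun p => ¬ Disjoint ((S p.1).erase i) ((S p.2).erase i)).card
  have hN : ∑ i, (N i : ℝ) ≤ r * overlapCount E S := by
    exact_mod_cast sum_card_not_disjoint_erase_le hS
  calc ∑ e ∈ E, ∑ i ∈ S e, bernoulliMean τ (fun T => F i T - F i (T ∪ (S e).erase i))
      = ∑ i, ∑ e ∈ E.filter (i ∈ S ·),
          bernoulliMean τ (fun T => F i T - F i (T ∪ (S e).erase i)) :=
        Finset.sum_comm' (by simp)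
    _ ≤ ∑ i, c / τ ^ (r - 1) * √(N i) := by
        refine Finset.sum_le_sum fun i _ => sum_bernoulliMean_sub_union_le hτ0 hτ1 ?_ (hF i)
        intro e he
        obtain ⟨heE, hie⟩ := Finset.mem_filter.1 he
        rw [Finset.card_erase_of_mem hie, hS e heE]
    _ ≤ c / τ ^ (r - 1) * √(Fintype.card ι * ∑ i, (N i : ℝ)) := by
        rw [← Finset.mul_sum]
        gcongr
        refine Real.le_sqrt_of_sq_le (sq_sum_le_card_mul_sum_sq.trans_eq ?_)
        simp [Finset.card_univ]
    _ ≤ _ := by gcongr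

end BernoulliMean

section RevealedSet

variable {ι : Type*} [Fintype ι] [DecidableEq ι] {α : Type*} {E : Finset α} {S : α → Finset ι}
  {r : ℕ}

lemma bernoulliMean_card_filter_not_disjoint_le {τ : ℝ} (hτ0 : 0 ≤ τ) (hτ1 : τ ≤ 1)
    (hS : ∀ e ∈ E, (S e).card = r) :
    bernoulliMean τ (fun T => ((E.filter fun e => ¬ Disjoint (S e) T).card : ℝ)) ≤
      E.card * (r * τ) := by
  calc bernoulliMean τ (fun T => ((E.filter fun e => ¬ Disjoint (S e) T).card : ℝ))
      ≤ bernoulliMean τ (∑ e ∈ E, ∑ i ∈ S e, subsetIndicator {i}) := by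
        refine bernoulliMean_mono hτ0 hτ1 fun T => ?_
        rw [Finset.card_filter, Nat.cast_sum]
        simp only [Finset.sum_apply]
        refine Finset.sum_le_sum fun e _ => ?_
        have hnonneg : ∀ i ∈ S e, 0 ≤ subsetIndicator {i} T := fun i _ =>
          indicator_nonneg (fun _ _ => zero_le_one) T
        split_ifs with hST
        · simpa using Finset.sum_nonneg hnonneg
        · obtain ⟨i, hi, hiT⟩ := Finset.not_disjoint_iff.1 hST
          have hone : subsetIndicator {i} T = 1 := by simp [subsetIndicator, hiT]
          simpa only [Nat.cast_one, ← hone] using Finset.single_le_sum hnonneg hi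
    _ = E.card * (r * τ) := by
        simp +contextual [map_sum, bernoulliMean_subsetIndicator, hS]

variable {Ω : ι → Type*} [∀ i, MeasurableSpace (Ω i)] (μ : ∀ i, Measure (Ω i))
  [∀ i, IsProbabilityMeasure (μ i)] {Q : Set (∀ i, Ω i)} {B : α → Set (∀ i, Ω i)} {γ τ : ℝ}

/-- A random set `T` of coordinates meets few edges, and on average little energy is lost by
revealing an edge on top of `T`. -/
lemma exists_card_add_sum_setIntegral_marginal_typicalPart_le (hQ : MeasurableSet Q)
    (hS : ∀ e ∈ E, (S e).card = r) (hB : ∀ e ∈ E, MeasurableSet (B e))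
    (hBS : ∀ e ∈ E, DependsOn (· ∈ B e) (S e : Set ι)) (hBQ : ∀ e ∈ E, Disjoint (B e) Q)
    (hγ : 0 < γ) (hγ1 : γ ≤ 1) (hτ0 : 0 < τ) (hτ1 : τ ≤ 1) :
    ∃ T : Finset ι, (Measure.pi μ).real Q * (E.filter fun e => ¬ Disjoint (S e) T).card +
        ∑ e ∈ E, ∫ x in typicalPart μ Q γ (B e) (S e) T, marginal μ Q T x ∂Measure.pi μ ≤
      (Measure.pi μ).real Q * (E.card * (r * τ) + (2 / γ) ^ r * (24 / γ ^ 2) *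
        (1 / τ ^ (r - 1) * √(Fintype.card ι * (r * overlapCount E S)))) := by
  set m := (Measure.pi μ).real Q
  set touched : Finset ι → ℝ := fun T => (E.filter fun e => ¬ Disjoint (S e) T).card
  set drop : α → ι → Finset ι → ℝ := fun e i T =>
    energy μ Q i T - energy μ Q i (T ∪ (S e).erase i)
  obtain ⟨T, hT⟩ := exists_le_bernoulliMean hτ0.le hτ1
    (m • touched + ((2 / γ) ^ r * (24 / γ ^ 2)) • ∑ e ∈ E, ∑ i ∈ S e, drop e i)
  refine ⟨T, ?_⟩
  calc m * touched T +
        ∑ e ∈ E, ∫ x in typicalPart μ Q γ (B e) (S e) T, marginal μ Q T x ∂Measure.pi μ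
      ≤ m * touched T + ∑ e ∈ E, (2 / γ) ^ r * (24 / γ ^ 2 * ∑ i ∈ S e, drop e i T) := by
        gcongr with e he
        simpa only [hS e he] using setIntegral_marginal_typicalPart_le μ hQ hγ hγ1 (hB e he)
          (hBS e he) (hBQ e he) T
    _ = (m • touched + ((2 / γ) ^ r * (24 / γ ^ 2)) • ∑ e ∈ E, ∑ i ∈ S e, drop e i) T := by
        simp only [Pi.add_apply, Pi.smul_apply, Finset.sum_apply, smul_eq_mul, Finset.mul_sum,
          mul_assoc]
    _ ≤ m * bernoulliMean τ touched +
          (2 / γ) ^ r * (24 / γ ^ 2) * ∑ e ∈ E, ∑ i ∈ S e, bernoulliMean τ (drop e i) := by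
        simpa only [map_add, map_smul, map_sum, smul_eq_mul] using hT
    _ ≤ m * (E.card * (r * τ)) + (2 / γ) ^ r * (24 / γ ^ 2) *
          (m / τ ^ (r - 1) * √(Fintype.card ι * (r * overlapCount E S))) := by
        gcongr
        · exact bernoulliMean_card_filter_not_disjoint_le hτ0.le hτ1 hS
        · exact sum_sum_bernoulliMean_sub_union_erase_le hτ0 hτ1 hS measureReal_nonneg
            (energy_mem_Icc μ hQ)
    _ = _ := by ring

end RevealedSet

section BoxWeight

variable {ι : Type*} [Fintype ι] {Ω : ι → Type*} {κ : ℝ} {A : ∀ i, Set (Ω i)}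

/-- A relaxation of the indicator function of the box `∏ i, A i`: every coordinate outside the box
costs a factor `κ ^ 2`. -/
def boxWeight (κ : ℝ) (A : ∀ i, Set (Ω i)) (x : ∀ i, Ω i) : ℝ :=
  ∏ i, ((A i).indicator 1 (x i) + κ ^ 2 * (A i)ᶜ.indicator 1 (x i))

lemma boxWeight_eq_rpow (hκ : 0 < κ) (x : ∀ i, Ω i) :
    boxWeight κ A x = (κ ^ 2) ^ ∑ i, (A i)ᶜ.indicator (1 : Ω i → ℝ) (x i) := by
  rw [Real.rpow_sum_of_pos (by positivity), boxWeight]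
  refine Finset.prod_congr rfl fun i _ => ?_
  by_cases hx : x i ∈ A i <;> simp [hx]

lemma boxWeight_mem_Icc (hκ : 0 < κ) (hκ1 : κ ≤ 1) (x : ∀ i, Ω i) :
    boxWeight κ A x ∈ Icc 0 1 := by
  rw [boxWeight_eq_rpow hκ]
  exact ⟨by positivity, Real.rpow_le_one (by positivity) (pow_le_one₀ hκ.le hκ1)
    (Finset.sum_nonneg fun i _ => indicator_nonneg (fun _ _ => zero_le_one) _)⟩

variable [∀ i, MeasurableSpace (Ω i)] (μ : ∀ i, Measure (Ω i)) [∀ i, IsProbabilityMeasure (μ i)]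

lemma integral_boxWeight_le (hκ : 0 ≤ κ) (hA : ∀ i, MeasurableSet (A i))
    (hκA : ∀ i, κ ≤ (μ i).real (A i)) :
    ∫ x, boxWeight κ A x ∂Measure.pi μ ≤
      (1 + κ) ^ Fintype.card ι * (Measure.pi μ).real (univ.pi A) := by
  have hcoord : ∀ i, ∫ a, ((A i).indicator 1 a + κ ^ 2 * (A i)ᶜ.indicator 1 a) ∂μ i =
      (μ i).real (A i) + κ ^ 2 * (μ i).real (A i)ᶜ := fun i => by
    have hint : ∀ s : Set (Ω i), MeasurableSet s → Integrable (s.indicator (1 : Ω i → ℝ)) (μ i) :=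
      fun s hs => (BddMeasurable.indicator_one hs).integrable _
    rw [integral_add (hint _ (hA i)) ((hint _ (hA i).compl).const_mul _), integral_const_mul,
      integral_indicator_one (hA i), integral_indicator_one (hA i).compl]
  calc ∫ x, boxWeight κ A x ∂Measure.pi μ
      = ∏ i, ((μ i).real (A i) + κ ^ 2 * (μ i).real (A i)ᶜ) := by
        simp only [boxWeight, ← hcoord]
        exact integral_fintype_prod_eq_prod
          (fun i a => (A i).indicator 1 a + κ ^ 2 * (A i)ᶜ.indicator 1 a)
    _ ≤ ∏ i, (1 + κ) * (μ i).real (A i) := by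
        refine Finset.prod_le_prod (fun i _ => by positivity) fun i _ => ?_
        have hsq : κ ^ 2 ≤ κ * (μ i).real (A i) := by rw [sq]; gcongr; exact hκA i
        have hcompl : κ ^ 2 * (μ i).real (A i)ᶜ ≤ κ ^ 2 :=
          mul_le_of_le_one_right (by positivity) measureReal_le_one
        linarith
    _ = (1 + κ) ^ Fintype.card ι * (Measure.pi μ).real (univ.pi A) := by
        simp [Finset.prod_mul_distrib, measureReal_def, Measure.pi_pi, ENNReal.toReal_prod]

end BoxWeight

section Container

variable {ι : Type*} [Fintype ι] [DecidableEq ι] {Ω : ι → Type*} [∀ i, MeasurableSpace (Ω i)]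
  (μ : ∀ i, Measure (Ω i)) (Q : Set (∀ i, Ω i)) (γ : ℝ) (C : ∀ i, Set (Ω i)) {T : Finset ι}

/-- The sides of the container assigned to `x`, which depends only on the coordinates of `x` in
`T`: the values typical for `Q`, padded by `C i` to keep the measure of the sides bounded below. -/
def container (T : Finset ι) (x : ∀ i, Ω i) (i : ι) : Set (Ω i) :=
  {a | Function.update x i a ∈ typicalAt μ Q γ i T} ∪ C i

variable {C}

lemma container_congr {x y : ∀ i, Ω i} (hxy : ∀ i ∈ T, x i = y i) :
    container μ Q γ C T x = container μ Q γ C T y := by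
  funext i
  have hiff : ∀ a, (Function.update x i a ∈ typicalAt μ Q γ i T) =
      (Function.update y i a ∈ typicalAt μ Q γ i T) := fun a =>
    dependsOn_typicalAt μ Q γ i T fun j hj => by
      rcases eq_or_ne j i with rfl | hji
      · simp
      · simpa [hji] using hxy j (Finset.mem_of_mem_insert_of_ne hj hji)
  simp only [container, hiff]

variable {Q γ} {κ : ℝ}

lemma rpow_le_boxWeight_container (hκ : 0 < κ) (hκ1 : κ ≤ 1) {x : ∀ i, Ω i} {c : ℝ}
    (hx : ∑ i, (typicalAt μ Q γ i T)ᶜ.indicator 1 x ≤ c) :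
    (κ ^ 2) ^ c ≤ boxWeight κ (container μ Q γ C T x) x := by
  rw [boxWeight_eq_rpow hκ]
  refine Real.rpow_le_rpow_of_exponent_ge (by positivity) (pow_le_one₀ hκ.le hκ1) (le_trans ?_ hx)
  refine Finset.sum_le_sum fun i _ => ?_
  by_cases hi : x i ∈ container μ Q γ C T x i
  · rw [indicator_of_notMem (by simpa using hi)]
    exact indicator_nonneg (fun _ _ => zero_le_one) x
  · have hxi : x ∉ typicalAt μ Q γ i T := fun h => hi (Or.inl (by simpa using h))
    simp [hi, hxi]

variable [∀ i, IsProbabilityMeasure (μ i)]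

lemma container_eq_univ (hQ : MeasurableSet Q) (hγ1 : γ ≤ 1) {i : ι} (hi : i ∈ T) (x : ∀ i, Ω i) :
    container μ Q γ C T x i = univ := by
  refine eq_univ_of_forall fun a => Or.inl ?_
  rw [Set.mem_ofPred_eq, typicalAt, Set.mem_ofPred_eq, Finset.insert_eq_of_mem hi]
  exact mul_le_of_le_one_left (marginal_mem_Icc μ hQ T _).1 hγ1

lemma measurableSet_container (hQ : MeasurableSet Q) (hC : ∀ i, MeasurableSet (C i))
    (x : ∀ i, Ω i) (i : ι) : MeasurableSet (container μ Q γ C T x i) :=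
  (measurable_update x (measurableSet_typicalAt μ hQ γ i T)).union (hC i)

lemma measurable_boxWeight_container (hQ : MeasurableSet Q) (hC : ∀ i, MeasurableSet (C i))
    (κ : ℝ) : Measurable fun x => boxWeight κ (container μ Q γ C T x) x := by
  have hmem : ∀ i (x : ∀ i, Ω i), x i ∈ container μ Q γ C T x i ↔
      x ∈ typicalAt μ Q γ i T ∪ (fun y => y i) ⁻¹' C i := fun i x => by simp [container]
  have hmeas : ∀ i, MeasurableSet (typicalAt μ Q γ i T ∪ (fun y => y i) ⁻¹' C i) := fun i =>
    (measurableSet_typicalAt μ hQ γ i T).union (measurable_pi_apply i (hC i))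
  have heq : (fun x => boxWeight κ (container μ Q γ C T x) x) = fun x =>
      ∏ i, ((typicalAt μ Q γ i T ∪ (fun y => y i) ⁻¹' C i).indicator 1 x +
        κ ^ 2 * (typicalAt μ Q γ i T ∪ (fun y => y i) ⁻¹' C i)ᶜ.indicator 1 x) := by
    classical simp only [boxWeight, indicator_apply, mem_compl_iff, hmem, Pi.one_apply]
  rw [heq]
  exact Finset.measurable_prod _ fun i _ => (measurable_one.indicator (hmeas i)).add
    ((measurable_one.indicator (hmeas i).compl).const_mul _)

lemma averageOutside_boxWeight_container_le (hQ : MeasurableSet Q) (hγ1 : γ ≤ 1) (hκ : 0 ≤ κ)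
    (hC : ∀ i, MeasurableSet (C i)) (hκC : ∀ i, (μ i).real (C i) = κ) (x : ∀ i, Ω i) :
    averageOutside μ T (fun y => boxWeight κ (container μ Q γ C T y) y) x ≤
      (1 + κ) ^ Fintype.card ι * (Measure.pi μ).real (univ.pi (container μ Q γ C T x)) := by
  have hpw : ∀ y, boxWeight κ (container μ Q γ C T (T.piecewise x y)) (T.piecewise x y) =
      boxWeight κ (container μ Q γ C T x) y := fun y => by
    rw [container_congr μ Q γ fun i hi => T.piecewise_eq_of_mem x y hi]
    refine Finset.prod_congr rfl fun i _ => ?_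
    by_cases hi : i ∈ T
    · simp [container_eq_univ μ hQ hγ1 hi]
    · simp [hi]
  simp only [averageOutside, hpw]
  refine integral_boxWeight_le μ hκ (measurableSet_container μ hQ hC x) fun i => ?_
  rw [← hκC i]
  exact measureReal_mono subset_union_right

/-- A point of `B` in the container is either in the padding of some side or, with its coordinates
in `T` replaced by those of `x`, in the typical part of `B`. -/
lemma measureReal_inter_container_le {B : Set (∀ i, Ω i)} {S : Finset ι} (hQ : MeasurableSet Q)
    (hB : MeasurableSet B) (hBS : DependsOn (· ∈ B) (S : Set ι)) (hC : ∀ i, MeasurableSet (C i))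
    (hκC : ∀ i, (μ i).real (C i) = κ) (hST : Disjoint S T) (x : ∀ i, Ω i) :
    (Measure.pi μ).real (B ∩ {y | ∀ i ∈ S, y i ∈ container μ Q γ C T x i}) ≤
      S.card * κ + averageOutside μ T ((typicalPart μ Q γ B S T).indicator 1) x := by
  have hnotMem : ∀ i ∈ S, i ∉ T := fun i hi => Finset.disjoint_left.1 hST hi
  set G := {y | T.piecewise x y ∈ typicalPart μ Q γ B S T}
  have hx : Measurable fun y : ∀ i, Ω i => T.piecewise x y :=
    (measurable_piecewise_prod T).comp measurable_prodMk_left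
  have hsub : B ∩ {y | ∀ i ∈ S, y i ∈ container μ Q γ C T x i} ⊆
      (⋃ i ∈ S, Function.eval i ⁻¹' C i) ∪ G := by
    rintro y ⟨hyB, hy⟩
    by_cases hyC : ∃ i ∈ S, y i ∈ C i
    · exact Or.inl (by simpa using hyC)
    refine Or.inr ⟨?_, mem_iInter₂.2 fun i hi => ?_⟩
    · exact (hBS fun i hi => T.piecewise_eq_of_notMem x y (hnotMem i hi)).mpr hyB
    · refine (dependsOn_typicalAt μ Q γ i T fun j hj => ?_).mpr
        ((hy i hi).resolve_right fun h => hyC ⟨i, hi, h⟩)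
      rcases eq_or_ne j i with rfl | hji
      · simp [hnotMem j hi]
      · simp [hji, Finset.mem_of_mem_insert_of_ne hj hji]
  have hG : averageOutside μ T ((typicalPart μ Q γ B S T).indicator 1) x =
      (Measure.pi μ).real G :=
    integral_indicator_one (hx (measurableSet_typicalPart μ hQ γ hB S T))
  have hpad : ∀ i, (Measure.pi μ).real (Function.eval i ⁻¹' C i) = κ := fun i => by
    rw [← hκC i]
    exact (measurePreserving_eval μ i).measureReal_preimage (hC i).nullMeasurableSet
  calc (Measure.pi μ).real (B ∩ {y | ∀ i ∈ S, y i ∈ container μ Q γ C T x i})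
      ≤ (Measure.pi μ).real (⋃ i ∈ S, Function.eval i ⁻¹' C i) + (Measure.pi μ).real G :=
        (measureReal_mono hsub).trans (measureReal_union_le _ _)
    _ ≤ ∑ i ∈ S, (Measure.pi μ).real (Function.eval i ⁻¹' C i) + (Measure.pi μ).real G := by
        gcongr
        exact measureReal_biUnion_finset_le _ _
    _ = _ := by simp [hpad, hG]

end Container

section Counting

section Markov

variable {X : Type*} [MeasurableSpace X] {ν : Measure X} [IsFiniteMeasure ν] {Q : Set X}
  {f g : X → ℝ} {a b : ℝ}

lemma measureReal_inter_le_div_four (hQ : MeasurableSet Q) (hf : BddMeasurable f)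
    (hf0 : ∀ x, 0 ≤ f x) (ha : 0 < a) (h : ∫ x in Q, f x ∂ν ≤ ν.real Q * (a / 4)) :
    ν.real (Q ∩ {x | a ≤ f x}) ≤ ν.real Q / 4 := by
  have hmarkov := mul_meas_ge_le_integral_of_nonneg (μ := ν.restrict Q) (.of_forall hf0)
    (hf.integrable _) a
  rw [measureReal_restrict_apply' hQ, inter_comm] at hmarkov
  refine le_of_mul_le_mul_left (hmarkov.trans (h.trans_eq ?_)) ha
  ring

lemma half_measureReal_le_measureReal_inter (hQ : MeasurableSet Q) (hf : BddMeasurable f)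
    (hg : BddMeasurable g) (hf0 : ∀ x, 0 ≤ f x) (hg0 : ∀ x, 0 ≤ g x) (ha : 0 < a) (hb : 0 < b)
    (hfa : ∫ x in Q, f x ∂ν ≤ ν.real Q * (a / 4)) (hgb : ∫ x in Q, g x ∂ν ≤ ν.real Q * (b / 4)) :
    ν.real Q / 2 ≤ ν.real (Q ∩ {x | f x < a ∧ g x < b}) := by
  have hcover : Q ⊆ Q ∩ {x | f x < a ∧ g x < b} ∪ Q ∩ {x | a ≤ f x} ∪ Q ∩ {x | b ≤ g x} := by
    intro x hx
    simp only [mem_union, mem_inter_iff, hx, true_and, Set.mem_ofPred_eq]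
    grind
  have hle := (measureReal_mono (μ := ν) hcover).trans (measureReal_union_le _ _)
  linarith [measureReal_union_le (μ := ν) (Q ∩ {x | f x < a ∧ g x < b}) (Q ∩ {x | a ≤ f x}),
    measureReal_inter_le_div_four hQ hf hf0 ha hfa, measureReal_inter_le_div_four hQ hg hg0 hb hgb]

end Markov

variable {ι : Type*} [Fintype ι] [DecidableEq ι] {Ω : ι → Type*} [∀ i, MeasurableSpace (Ω i)]
  (μ : ∀ i, Measure (Ω i))

section Load

variable {α : Type*} (Q : Set (∀ i, Ω i)) (γ : ℝ) (E : Finset α) (S : α → Finset ι)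
  (B : α → Set (∀ i, Ω i)) (T : Finset ι)

/-- The expected number of edges `e` such that a random point lies in `B e` and its coordinates in
`S e` lie in the sides `A i`. -/
def boxLoad (A : ∀ i, Set (Ω i)) : ℝ :=
  ∑ e ∈ E, (Measure.pi μ).real (B e ∩ {y | ∀ i ∈ S e, y i ∈ A i})

/-- An upper bound, up to the effect of the padding, for the load of the container of `x`: the
edges meeting `T`, plus the expected number of edges `e` such that the point obtained from `x` by
resampling the coordinates outside `T` is in the typical part of `B e`. -/
def containerLoad (x : ∀ i, Ω i) : ℝ :=
  (E.filter fun e => ¬ Disjoint (S e) T).card +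
    ∑ e ∈ E, averageOutside μ T ((typicalPart μ Q γ (B e) (S e) T).indicator 1) x

lemma dependsOn_containerLoad : DependsOn (containerLoad μ Q γ E S B T) (T : Set ι) :=
  fun x y hxy => by simp only [containerLoad, dependsOn_averageOutside T hxy]

variable {Q γ E S B T} {C : ∀ i, Set (Ω i)} {κ : ℝ} {r : ℕ}

lemma containerLoad_nonneg (x : ∀ i, Ω i) : 0 ≤ containerLoad μ Q γ E S B T x :=
  add_nonneg (Nat.cast_nonneg _) (Finset.sum_nonneg fun _ _ =>
    integral_nonneg fun _ => indicator_nonneg (fun _ _ => zero_le_one) _)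

variable [∀ i, IsProbabilityMeasure (μ i)]

lemma bddMeasurable_containerLoad (hQ : MeasurableSet Q) (hB : ∀ e ∈ E, MeasurableSet (B e)) :
    BddMeasurable (containerLoad μ Q γ E S B T) := by
  refine .add (.const _) ?_
  exact .finset_sum fun e he => bddMeasurable_averageOutside
    (.indicator_one (measurableSet_typicalPart μ hQ γ (hB e he) _ _)) T

lemma setIntegral_containerLoad (hQ : MeasurableSet Q) (hB : ∀ e ∈ E, MeasurableSet (B e)) :
    ∫ x in Q, containerLoad μ Q γ E S B T x ∂Measure.pi μ =
      (Measure.pi μ).real Q * (E.filter fun e => ¬ Disjoint (S e) T).card +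
        ∑ e ∈ E, ∫ x in typicalPart μ Q γ (B e) (S e) T, marginal μ Q T x ∂Measure.pi μ := by
  have hG : ∀ e ∈ E, MeasurableSet (typicalPart μ Q γ (B e) (S e) T) := fun e he =>
    measurableSet_typicalPart μ hQ γ (hB e he) _ _
  have hint : ∀ e ∈ E, Integrable (averageOutside μ T
      ((typicalPart μ Q γ (B e) (S e) T).indicator 1)) ((Measure.pi μ).restrict Q) := fun e he =>
    (bddMeasurable_averageOutside (.indicator_one (hG e he)) T).integrable _
  simp only [containerLoad]
  rw [integral_add (integrable_const _) (integrable_finsetSum _ hint), integral_finsetSum _ hint,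
    setIntegral_const, smul_eq_mul]
  congr 1
  exact Finset.sum_congr rfl fun e he =>
    setIntegral_averageOutside_indicator_one_comm hQ (hG e he) T

lemma boxLoad_container_le (hQ : MeasurableSet Q) (hS : ∀ e ∈ E, (S e).card = r)
    (hB : ∀ e ∈ E, MeasurableSet (B e)) (hBS : ∀ e ∈ E, DependsOn (· ∈ B e) (S e : Set ι))
    (hC : ∀ i, MeasurableSet (C i)) (hκ : 0 ≤ κ) (hκC : ∀ i, (μ i).real (C i) = κ) (x : ∀ i, Ω i) :
    boxLoad μ E S B (container μ Q γ C T x) ≤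
      containerLoad μ Q γ E S B T x + E.card * (r * κ) := by
  set D : α → ℝ := fun e => averageOutside μ T ((typicalPart μ Q γ (B e) (S e) T).indicator 1) x
  have hterm : ∀ e ∈ E, (Measure.pi μ).real (B e ∩ {y | ∀ i ∈ S e, y i ∈ container μ Q γ C T x i}) ≤
      (if ¬ Disjoint (S e) T then 1 else 0) + D e + r * κ := by
    intro e he
    have hD : 0 ≤ D e := integral_nonneg fun _ => indicator_nonneg (fun _ _ => zero_le_one) _
    split_ifs with hST
    · have := measureReal_inter_container_le μ (C := C) (γ := γ) hQ (hB e he) (hBS e he) hC hκC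
        hST x
      rw [hS e he] at this
      linarith
    · linarith [measureReal_le_one (μ := Measure.pi μ)
        (s := B e ∩ {y | ∀ i ∈ S e, y i ∈ container μ Q γ C T x i}), mul_nonneg r.cast_nonneg hκ]
  refine (Finset.sum_le_sum hterm).trans_eq ?_
  simp only [Finset.sum_add_distrib, Finset.sum_const, nsmul_eq_mul, containerLoad,
    Finset.card_filter, Nat.cast_sum, Nat.cast_ite, Nat.cast_one, Nat.cast_zero, D]

end Load

variable {Q : Set (∀ i, Ω i)} {γ κ V : ℝ} {C : ∀ i, Set (Ω i)} {T : Finset ι}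
  [∀ i, IsProbabilityMeasure (μ i)]

lemma setIntegral_sum_indicator_typicalAt_compl_le (hQ : MeasurableSet Q) (hγ : 0 ≤ γ) :
    ∫ x in Q, ∑ i, (typicalAt μ Q γ i T)ᶜ.indicator 1 x ∂Measure.pi μ ≤
      (Measure.pi μ).real Q * (γ * Fintype.card ι) := by
  have hmeas : ∀ i, MeasurableSet (typicalAt μ Q γ i T)ᶜ := fun i =>
    (measurableSet_typicalAt μ hQ γ i T).compl
  have hq := fun T => (bddMeasurable_marginal μ hQ T).integrable (Measure.pi μ)
  have hcoord : ∀ i, ∫ x in Q, (typicalAt μ Q γ i T)ᶜ.indicator 1 x ∂Measure.pi μ ≤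
      γ * (Measure.pi μ).real Q := fun i =>
    calc ∫ x in Q, (typicalAt μ Q γ i T)ᶜ.indicator 1 x ∂Measure.pi μ
        = ∫ x in (typicalAt μ Q γ i T)ᶜ, marginal μ Q (insert i T) x ∂Measure.pi μ := by
          rw [integral_indicator_one (hmeas i), measureReal_restrict_apply (hmeas i),
            setIntegral_marginal μ hQ (hmeas i) fun x y hxy => by
              simpa only [mem_compl_iff] using congrArg Not (dependsOn_typicalAt μ Q γ i T hxy)]
      _ ≤ ∫ x in (typicalAt μ Q γ i T)ᶜ, γ * marginal μ Q T x ∂Measure.pi μ :=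
          setIntegral_mono_on (hq _).integrableOn ((hq T).const_mul γ).integrableOn (hmeas i)
            fun x hx => le_of_not_ge hx
      _ ≤ ∫ x, γ * marginal μ Q T x ∂Measure.pi μ :=
          setIntegral_le_integral ((hq T).const_mul γ)
            (.of_forall fun x => mul_nonneg hγ (marginal_mem_Icc μ hQ T x).1)
      _ = γ * (Measure.pi μ).real Q := by rw [integral_const_mul, integral_marginal μ hQ]
  rw [integral_finsetSum _ fun i _ => (BddMeasurable.indicator_one (hmeas i)).integrable _]
  refine (Finset.sum_le_sum fun i _ => hcoord i).trans_eq ?_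
  simp only [Finset.sum_const, Finset.card_univ, nsmul_eq_mul]
  ring

lemma setIntegral_boxWeight_container_le (hQ : MeasurableSet Q) (hγ1 : γ ≤ 1) (hκ : 0 < κ)
    (hκ1 : κ ≤ 1) (hC : ∀ i, MeasurableSet (C i)) (hκC : ∀ i, (μ i).real (C i) = κ)
    {H : Set (∀ i, Ω i)} (hH : MeasurableSet H) (hHT : DependsOn (· ∈ H) (T : Set ι)) (hV : 0 ≤ V)
    (hHV : ∀ x ∈ H, (Measure.pi μ).real (univ.pi (container μ Q γ C T x)) ≤ V) :
    ∫ x in H, boxWeight κ (container μ Q γ C T x) x ∂Measure.pi μ ≤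
      (1 + κ) ^ Fintype.card ι * V := by
  have hF : BddMeasurable fun x => boxWeight κ (container μ Q γ C T x) x :=
    .of_mem_Icc (measurable_boxWeight_container μ hQ hC κ) fun x => boxWeight_mem_Icc hκ hκ1 x
  calc ∫ x in H, boxWeight κ (container μ Q γ C T x) x ∂Measure.pi μ
      = ∫ x in H, averageOutside μ T (fun y => boxWeight κ (container μ Q γ C T y) y) x
          ∂Measure.pi μ := (setIntegral_averageOutside hF hH hHT).symm
    _ ≤ ∫ x in H, (1 + κ) ^ Fintype.card ι * V ∂Measure.pi μ := by
        refine setIntegral_mono_on ((bddMeasurable_averageOutside hF T).integrable _)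
          (integrable_const _) hH fun x hx => ?_
        refine (averageOutside_boxWeight_container_le μ hQ hγ1 hκ.le hC hκC x).trans ?_
        gcongr
        exact hHV x hx
    _ = (Measure.pi μ).real H * ((1 + κ) ^ Fintype.card ι * V) := by
        rw [setIntegral_const, smul_eq_mul]
    _ ≤ _ := mul_le_of_le_one_left (by positivity) measureReal_le_one

variable {α : Type*} {E : Finset α} {S : α → Finset ι} {B : α → Set (∀ i, Ω i)} {r : ℕ} {τ η : ℝ}

lemma exists_half_measureReal_le_measureReal_inter [Nonempty ι] (hQ : MeasurableSet Q)
    (hE : E.Nonempty) (hS : ∀ e ∈ E, (S e).card = r) (hB : ∀ e ∈ E, MeasurableSet (B e))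
    (hBS : ∀ e ∈ E, DependsOn (· ∈ B e) (S e : Set ι)) (hBQ : ∀ e ∈ E, Disjoint (B e) Q)
    (hγ : 0 < γ) (hγ1 : γ ≤ 1) (hτ0 : 0 < τ) (hτ1 : τ ≤ 1) (hη : 0 < η)
    (hdrop : E.card * (r * τ) + (2 / γ) ^ r * (24 / γ ^ 2) *
      (1 / τ ^ (r - 1) * √(Fintype.card ι * (r * overlapCount E S))) ≤ η * E.card / 4) :
    ∃ T, (Measure.pi μ).real Q / 2 ≤ (Measure.pi μ).real (Q ∩
      {x | containerLoad μ Q γ E S B T x < η * E.card ∧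
        ∑ i, (typicalAt μ Q γ i T)ᶜ.indicator 1 x < γ * Fintype.card ι * 4}) := by
  obtain ⟨T, hT⟩ := exists_card_add_sum_setIntegral_marginal_typicalPart_le μ hQ hS hB hBS hBQ hγ
    hγ1 hτ0 hτ1
  rw [← setIntegral_containerLoad μ hQ hB] at hT
  have hE0 : (0 : ℝ) < E.card := by exact_mod_cast hE.card_pos
  refine ⟨T, half_measureReal_le_measureReal_inter hQ (bddMeasurable_containerLoad μ hQ hB)
    (.finset_sum fun i _ => .indicator_one (measurableSet_typicalAt μ hQ γ i T).compl)
    (containerLoad_nonneg μ)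
    (fun x => Finset.sum_nonneg fun i _ => indicator_nonneg (fun _ _ => zero_le_one) x)
    (mul_pos hη hE0) (by positivity) (hT.trans (by gcongr)) ?_⟩
  simpa using setIntegral_sum_indicator_typicalAt_compl_le μ hQ hγ.le

/-- Half of `Q` consists of points that nearly lie in their own container, and containers have
small load, hence small measure. -/
theorem half_measureReal_mul_rpow_le [Nonempty ι] (hQ : MeasurableSet Q) (hE : E.Nonempty)
    (hS : ∀ e ∈ E, (S e).card = r) (hB : ∀ e ∈ E, MeasurableSet (B e))
    (hBS : ∀ e ∈ E, DependsOn (· ∈ B e) (S e : Set ι)) (hBQ : ∀ e ∈ E, Disjoint (B e) Q)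
    (hγ : 0 < γ) (hγ1 : γ ≤ 1) (hτ0 : 0 < τ) (hτ1 : τ ≤ 1) (hκ : 0 < κ) (hκ1 : κ ≤ 1)
    (hC : ∀ i, MeasurableSet (C i)) (hκC : ∀ i, (μ i).real (C i) = κ) (hη : 0 < η)
    (hκη : r * κ ≤ η)
    (hdrop : E.card * (r * τ) + (2 / γ) ^ r * (24 / γ ^ 2) *
      (1 / τ ^ (r - 1) * √(Fintype.card ι * (r * overlapCount E S))) ≤ η * E.card / 4)
    (hV : 0 ≤ V) (hload : ∀ A : ∀ i, Set (Ω i), (∀ i, MeasurableSet (A i)) →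
      boxLoad μ E S B A < 2 * η * E.card → (Measure.pi μ).real (univ.pi A) ≤ V) :
    (Measure.pi μ).real Q / 2 * (κ ^ 2) ^ (γ * Fintype.card ι * 4) ≤
      (1 + κ) ^ Fintype.card ι * V := by
  obtain ⟨T, hhalf⟩ := exists_half_measureReal_le_measureReal_inter μ hQ hE hS hB hBS hBQ hγ hγ1
    hτ0 hτ1 hη hdrop
  set load := containerLoad μ Q γ E S B T
  set F : (∀ i, Ω i) → ℝ := fun x => boxWeight κ (container μ Q γ C T x) x
  have hF : BddMeasurable F :=
    .of_mem_Icc (measurable_boxWeight_container μ hQ hC κ) fun x => boxWeight_mem_Icc hκ hκ1 x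
  set H := {x | load x < η * E.card}
  set Q' := Q ∩ {x | load x < η * E.card ∧
    ∑ i, (typicalAt μ Q γ i T)ᶜ.indicator 1 x < γ * Fintype.card ι * 4}
  have hH : MeasurableSet H := (bddMeasurable_containerLoad μ hQ hB).measurable measurableSet_Iio
  have hQ' : MeasurableSet Q' := hQ.inter (hH.inter ((BddMeasurable.finset_sum fun i _ =>
    .indicator_one (measurableSet_typicalAt μ hQ γ i T).compl).measurable measurableSet_Iio))
  have hHT : DependsOn (· ∈ H) (T : Set ι) := fun x y hxy => by
    simp only [H, load, Set.mem_ofPred_eq, dependsOn_containerLoad μ Q γ E S B T hxy]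
  have hHV : ∀ x ∈ H, (Measure.pi μ).real (univ.pi (container μ Q γ C T x)) ≤ V := fun x hx => by
    refine hload _ (measurableSet_container μ hQ hC x) ?_
    have hx' : load x < η * E.card := hx
    have hpad : E.card * (r * κ) ≤ E.card * η := by gcongr
    linarith [boxLoad_container_le (γ := γ) (T := T) μ hQ hS hB hBS hC hκ.le hκC x]
  calc (Measure.pi μ).real Q / 2 * (κ ^ 2) ^ (γ * Fintype.card ι * 4)
      ≤ ∫ _ in Q', (κ ^ 2) ^ (γ * Fintype.card ι * 4) ∂Measure.pi μ := by
        rw [setIntegral_const, smul_eq_mul]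
        gcongr
    _ ≤ ∫ x in Q', F x ∂Measure.pi μ := setIntegral_mono_on (integrable_const _) (hF.integrable _)
        hQ' fun x hx => rpow_le_boxWeight_container μ hκ hκ1 hx.2.2.le
    _ ≤ ∫ x in H, F x ∂Measure.pi μ := setIntegral_mono_set (hF.integrable _)
        (.of_forall fun x => (boxWeight_mem_Icc hκ hκ1 x).1) (.of_forall fun x hx => hx.2.1)
    _ ≤ (1 + κ) ^ Fintype.card ι * V :=
        setIntegral_boxWeight_container_le μ hQ hγ1 hκ hκ1 hC hκC hH hHT hV hHV

end Counting

section Cube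

lemma measurableSet_unitCube {ι : Type} [Countable ι] : MeasurableSet (unitCube ι) :=
  .univ_pi fun _ => measurableSet_Icc

variable {ι α : Type} [Fintype ι] [Fintype α] {φ : α → ι} {A : ι → Set ℝ} {κ : ℝ}

/-- The uniform distribution on `[0, 1]`. -/
abbrev unitMeasure : Measure ℝ := volume.restrict (Icc 0 1)

instance : IsProbabilityMeasure unitMeasure := ⟨by simp⟩

lemma unitMeasure_real_Icc (hκ : 0 ≤ κ) (hκ1 : κ ≤ 1) : unitMeasure.real (Icc 0 κ) = κ := by
  rw [measureReal_restrict_apply measurableSet_Icc,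
    inter_eq_self_of_subset_left (Icc_subset_Icc_right hκ1), Real.volume_real_Icc_of_le hκ,
    sub_zero]

lemma pi_unitMeasure : Measure.pi (fun _ : ι => unitMeasure) = volume.restrict (unitCube ι) := by
  rw [unitCube, volume_pi, Measure.restrict_pi_pi]

lemma volume_eq_pi_unitMeasure {Q : Set (ι → ℝ)} (hQ : MeasurableSet Q) (hQc : Q ⊆ unitCube ι) :
    volume Q = Measure.pi (fun _ => unitMeasure) Q := by
  rw [pi_unitMeasure, Measure.restrict_apply hQ, inter_eq_self_of_subset_left hQc]

lemma volume_unitCube_lt_top : volume (unitCube ι) < ⊤ := by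
  rw [volume_eq_pi_unitMeasure measurableSet_unitCube le_rfl]
  exact measure_lt_top _ _

lemma measurePreserving_comp_right {Ω : Type*} [MeasurableSpace Ω] (ν : Measure Ω)
    [IsProbabilityMeasure ν] (hφ : Function.Injective φ) :
    MeasurePreserving (fun y : ι → Ω => y ∘ φ) (Measure.pi fun _ => ν) (Measure.pi fun _ => ν) := by
  have hindep : ProbabilityTheory.iIndepFun (fun i (y : ι → Ω) => y i) (Measure.pi fun _ => ν) :=
    ProbabilityTheory.iIndepFun_pi (X := fun _ => id) fun _ => aemeasurable_id
  refine ⟨by fun_prop, ?_⟩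
  refine ((ProbabilityTheory.iIndepFun_iff_map_fun_eq_pi_map fun j =>
    (measurable_pi_apply (φ j)).aemeasurable).1 (hindep.precomp hφ)).trans ?_
  exact congrArg Measure.pi <| funext fun j => (measurePreserving_eval _ (φ j)).map_eq

lemma projBody_univ_pi_subset (hφ : Function.Injective φ) (A : ι → Set ℝ) :
    projBody φ (univ.pi A) ⊆ {c | ∀ j, c j ∈ A (φ j)} := by
  intro c hc j
  obtain ⟨d, hd⟩ := nonempty_of_measure_ne_zero (ne_of_gt hc)
  have hj : φ j ∈ range φ := ⟨j, rfl⟩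
  have hmem := hd (φ j) (mem_univ _)
  simp only [hj, dif_pos] at hmem
  rwa [hφ hj.choose_spec] at hmem

lemma volume_projBody_univ_pi_sdiff_le [DecidableEq ι] (hφ : Function.Injective φ)
    (hA : ∀ i, MeasurableSet (A i)) (hAc : ∀ i, A i ⊆ Icc 0 1) {R : Set (α → ℝ)}
    (hR : MeasurableSet R) :
    (volume (projBody φ (univ.pi A) \ R)).toReal ≤ (Measure.pi fun _ => unitMeasure).real
      ((fun y => y ∘ φ) ⁻¹' (unitCube α \ R) ∩ {y | ∀ i ∈ Finset.univ.image φ, y i ∈ A i}) := by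
  set D : Set (α → ℝ) := (unitCube α \ R) ∩ univ.pi fun j => A (φ j)
  have hD : MeasurableSet D :=
    (measurableSet_unitCube.diff hR).inter (.univ_pi fun j => hA (φ j))
  have hDc : D ⊆ unitCube α := inter_subset_left.trans sdiff_subset
  have hsub : projBody φ (univ.pi A) \ R ⊆ D := fun c hc => by
    have hcA := projBody_univ_pi_subset hφ A hc.1
    exact ⟨⟨fun j _ => hAc _ (hcA j), hc.2⟩, fun j _ => hcA j⟩
  have hpre : (fun y => y ∘ φ) ⁻¹' (unitCube α \ R) ∩
      {y | ∀ i ∈ Finset.univ.image φ, y i ∈ A i} = (fun y => y ∘ φ) ⁻¹' D := by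
    ext y
    simp [D, Set.mem_pi]
  rw [hpre, measureReal_def,
    (measurePreserving_comp_right unitMeasure hφ).measure_preimage hD.nullMeasurableSet,
    ← volume_eq_pi_unitMeasure hD hDc]
  refine ENNReal.toReal_mono ?_ (measure_mono hsub)
  rw [volume_eq_pi_unitMeasure hD hDc]
  exact measure_ne_top _ _

end Cube

section Image

variable {ι α : Type*} [DecidableEq ι] [Fintype α] {E : Finset (α → ι)}

lemma dependsOn_mem_preimage_comp {Ω : Type*} (φ : α → ι) (R : Set (α → Ω)) :
    DependsOn (· ∈ (fun y : ι → Ω => y ∘ φ) ⁻¹' R) (Finset.univ.image φ : Set ι) := by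
  intro x y hxy
  have hcomp : x ∘ φ = y ∘ φ := funext fun j => hxy _ (by simp)
  simp only [mem_preimage, hcomp]

lemma exists_comp_eq_of_card_le_card_image_inter {φ ψ : α → ι} (hψ : Function.Injective ψ)
    (h : Fintype.card α ≤ (Finset.univ.image φ ∩ Finset.univ.image ψ).card) :
    ∃ f : α → α, φ ∘ f = ψ := by
  have himage : (Finset.univ.image ψ).card = Fintype.card α :=
    Finset.card_image_of_injective _ hψ
  have hinter := Finset.eq_of_subset_of_card_le
    (Finset.inter_subset_right (s₁ := Finset.univ.image φ) (s₂ := Finset.univ.image ψ))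
    (himage.trans_le h)
  have hlift : ∀ a, ∃ b, φ b = ψ a := fun a => by
    simpa using Finset.inter_eq_right.1 hinter (Finset.mem_image_of_mem ψ (Finset.mem_univ a))
  choose f hf using hlift
  exact ⟨f, funext hf⟩

lemma overlapCount_image_le (hE : ∀ φ ∈ E, Function.Injective φ) :
    overlapCount E (fun φ => Finset.univ.image φ) ≤
      ((E ×ˢ E).filter fun p => 1 < (Finset.univ.image p.1 ∩ Finset.univ.image p.2).card ∧
        (Finset.univ.image p.1 ∩ Finset.univ.image p.2).card < Fintype.card α).card +
      Fintype.card α ^ Fintype.card α * E.card := by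
  classical
  set precomps : Finset ((α → ι) × (α → ι)) :=
    (E ×ˢ (Finset.univ : Finset (α → α))).image fun p => (p.1, p.1 ∘ p.2)
  have hprecomps : precomps.card ≤ Fintype.card α ^ Fintype.card α * E.card :=
    Finset.card_image_le.trans_eq (by simp [mul_comm])
  refine le_trans (Finset.card_le_card fun p hp => ?_)
    ((Finset.card_union_le _ precomps).trans (Nat.add_le_add_left hprecomps _))
  obtain ⟨hpE, hlarge⟩ := Finset.mem_filter.1 hp
  rw [Finset.mem_union, Finset.mem_filter]
  refine (lt_or_ge _ _).imp (fun hlt => ⟨hpE, hlarge, hlt⟩) fun hge => ?_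
  obtain ⟨hp1, hp2⟩ := Finset.mem_product.1 hpE
  obtain ⟨f, hf⟩ := exists_comp_eq_of_card_le_card_image_inter (hE _ hp2) hge
  exact Finset.mem_image.2 ⟨(p.1, f), by simp [hp1], Prod.ext rfl hf⟩

lemma overlapCount_image_eq_zero (hα : Fintype.card α ≤ 1) :
    overlapCount E (fun φ => Finset.univ.image φ) = 0 := by
  refine Finset.card_eq_zero.2 (Finset.filter_eq_empty_iff.2 fun p _ => not_lt.2 ?_)
  exact (Finset.card_le_card Finset.inter_subset_left).trans (Finset.card_image_le.trans hα)

end Image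

section Entropy

lemma coe_le_neg_log_iff {a : ℝ} {w : ENNReal} :
    (a : EReal) ≤ -ENNReal.log w ↔ w ≤ ENNReal.ofReal (Real.exp (-a)) := by
  rw [EReal.le_neg, ← EReal.coe_neg, ← ENNReal.log_le_log_iff,
    ENNReal.log_ofReal_of_pos (Real.exp_pos _), Real.log_exp]

lemma neg_log_volume_le_exEnt (S : Ssee) (P : ∀ n, Set (S.V n → ℝ)) (n : ℕ) :
    -ENNReal.log (volume (P n)) ≤ S.exEnt P n := by
  refine le_sInf ?_
  rintro _ ⟨b, -, hb, rfl⟩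
  refine EReal.neg_le_neg_iff.2 (ENNReal.log_le_log_iff.2 ?_)
  calc volume b ≤ volume (b \ P n ∪ P n) := measure_mono (subset_sdiff_union _ _)
    _ ≤ volume (b \ P n) + volume (P n) := measure_union_le _ _
    _ = volume (P n) := by rw [hb, zero_add]

lemma le_exp_of_half_mul_rpow_le {m κ γ ε a : ℝ} {v : ℕ} (hm : 0 ≤ m) (hκ : 0 < κ) (hκε : κ ≤ ε)
    (hγ : 0 ≤ γ) (hγκ : 8 * |Real.log κ| * γ ≤ ε)
    (hv : Real.log 2 ≤ ε * v)
    (h : m / 2 * (κ ^ 2) ^ (γ * v * 4) ≤ (1 + κ) ^ v * Real.exp (-((a - ε) * v))) :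
    m ≤ Real.exp (-((a - 4 * ε) * v)) := by
  have hpad : (1 + κ) ^ v ≤ Real.exp (ε * v) := by
    calc (1 + κ) ^ v ≤ Real.exp κ ^ v := by gcongr; linarith [Real.add_one_le_exp κ]
      _ = Real.exp (κ * v) := by rw [← Real.exp_nat_mul, mul_comm]
      _ ≤ Real.exp (ε * v) := by gcongr
  have hexc : Real.exp (-(ε * v)) ≤ (κ ^ 2) ^ (γ * v * 4) := by
    rw [Real.rpow_def_of_pos (by positivity), Real.log_pow, Real.exp_le_exp]
    push_cast
    refine neg_le.1 ?_
    calc -(2 * Real.log κ * (γ * v * 4)) = 8 * -Real.log κ * γ * v := by ring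
      _ ≤ 8 * |Real.log κ| * γ * v := by gcongr; exact neg_le_abs _
      _ ≤ ε * v := by gcongr
  have htwo : 2 ≤ Real.exp (ε * v) := by
    simpa [Real.exp_log] using Real.exp_le_exp.2 hv
  have hhalf : m / 2 * Real.exp (-(ε * v)) ≤ Real.exp (ε * v) * Real.exp (-((a - ε) * v)) :=
    (mul_le_mul_of_nonneg_left hexc (by positivity)).trans (h.trans (by gcongr))
  calc m = 2 * (m / 2 * Real.exp (-(ε * v))) * Real.exp (ε * v) := by
        rw [Real.exp_neg]
        field_simp
    _ ≤ Real.exp (ε * v) * (Real.exp (ε * v) * Real.exp (-((a - ε) * v))) * Real.exp (ε * v) := by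
        gcongr
    _ = Real.exp (-((a - 4 * ε) * v)) := by
        simp only [← Real.exp_add]
        ring_nf

end Entropy

section Ssee

variable {S : Ssee} {P : ∀ n, Set (S.V n → ℝ)} {N n : ℕ} {η V : ℝ}

lemma eventually_card_mul_overlapCount_le (hS : S.Good) (N : ℕ) {δ : ℝ} (hδ : 0 < δ) :
    ∀ᶠ n in atTop, Fintype.card (S.V n) *
      (overlapCount (S.emb N n) (fun φ => Finset.univ.image φ) : ℝ) ≤ δ * (S.emb N n).card ^ 2 := by
  rcases le_or_gt (Fintype.card (S.V N)) 1 with hN | hN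
  · refine .of_forall fun n => ?_
    rw [overlapCount_image_eq_zero hN, Nat.cast_zero, mul_zero]
    positivity
  set r := Fintype.card (S.V N)
  have hlim : Tendsto (fun n => Fintype.card (S.V n) * (S.interCount N n : ℝ) /
      (S.emb N n).card ^ 2 + (r : ℝ) ^ r * ((S.emb N n).card / (Fintype.card (S.V n) : ℝ))⁻¹)
      atTop (nhds 0) := by
    simpa using (hS.2.2 N hN).add ((hS.2.1 N hN).inv_tendsto_atTop.const_mul ((r : ℝ) ^ r))
  filter_upwards [hlim.eventually_le_const hδ, (hS.2.1 N hN).eventually_gt_atTop 0,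
    eventually_ge_atTop N] with n hn hemb hNn
  have hE : (0 : ℝ) < (S.emb N n).card :=
    (Nat.cast_nonneg _).lt_of_ne' fun h => by simp [h] at hemb
  have hcount : (overlapCount (S.emb N n) (fun φ => Finset.univ.image φ) : ℝ) ≤
      S.interCount N n + (r : ℝ) ^ r * (S.emb N n).card := by
    exact_mod_cast overlapCount_image_le (S.emb_inj N n hNn)
  refine (div_le_iff₀ (by positivity)).1 (le_trans ?_ hn)
  calc Fintype.card (S.V n) * (overlapCount (S.emb N n) (fun φ => Finset.univ.image φ) : ℝ) /
        (S.emb N n).card ^ 2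
      ≤ Fintype.card (S.V n) * (S.interCount N n + (r : ℝ) ^ r * (S.emb N n).card) /
        (S.emb N n).card ^ 2 := by gcongr
    _ = _ := by field_simp

lemma exists_pos_le_one_mul_le {c ε : ℝ} (hc : 0 ≤ c) (hε : 0 < ε) :
    ∃ x, 0 < x ∧ x ≤ 1 ∧ c * x ≤ ε := by
  refine ⟨min 1 (ε / (c + 1)), by positivity, min_le_left _ _, ?_⟩
  calc c * min 1 (ε / (c + 1)) ≤ (c + 1) * (ε / (c + 1)) := by
        gcongr
        · linarith
        · exact min_le_right _ _
    _ = ε := by field_simp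

lemma eventually_card_mul_add_mul_sqrt_overlapCount_le (hS : S.Good) (N r : ℕ) {τ D : ℝ}
    (hD : 0 ≤ D) (hτ : r * τ < η) :
    ∀ᶠ n in atTop, (S.emb N n).card * (r * τ) + D * √(Fintype.card (S.V n) *
      (r * overlapCount (S.emb N n) (fun φ => Finset.univ.image φ))) ≤ η * (S.emb N n).card := by
  obtain ⟨x, hx, -, hDx⟩ := exists_pos_le_one_mul_le hD (sub_pos.2 hτ)
  obtain ⟨δ, hδ, -, hrδ⟩ := exists_pos_le_one_mul_le (c := r) (by positivity) (sq_pos_of_pos hx)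
  filter_upwards [eventually_card_mul_overlapCount_le hS N hδ] with n hn
  set K := overlapCount (S.emb N n) (fun φ => Finset.univ.image φ)
  set e := ((S.emb N n).card : ℝ)
  have hsqrt : √(Fintype.card (S.V n) * (r * K)) ≤ x * e := by
    refine Real.sqrt_le_iff.2 ⟨by positivity, ?_⟩
    calc Fintype.card (S.V n) * (r * K) = r * (Fintype.card (S.V n) * K : ℝ) := by ring
      _ ≤ r * (δ * e ^ 2) := by gcongr
      _ = r * δ * e ^ 2 := by ring
      _ ≤ x ^ 2 * e ^ 2 := by gcongr
      _ = (x * e) ^ 2 := by ring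
  calc e * (r * τ) + D * √(Fintype.card (S.V n) * (r * K)) ≤ e * (r * τ) + D * (x * e) := by gcongr
    _ = e * (r * τ) + D * x * e := by ring
    _ ≤ e * (r * τ) + (η - r * τ) * e := by gcongr
    _ = η * e := by ring

lemma disjoint_preimage_unitCube_sdiff (hP : S.Hereditary P) (hNn : N ≤ n) {φ : S.V N → S.V n}
    (hφ : φ ∈ S.emb N n) : Disjoint ((fun y => y ∘ φ) ⁻¹' (unitCube (S.V N) \ P N)) (P n) :=
  Set.disjoint_left.2 fun _ hxφ hx =>
    (hP.2 N n hNn (mem_iUnion₂.2 ⟨φ, hφ, (hP.1 n).2 hx, hxφ⟩)).2 hx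

lemma pi_unitMeasure_le_of_boxLoad_lt (hPN : MeasurableSet (P N)) (hNn : N ≤ n)
    (hE : (S.emb N n).Nonempty)
    (hbox : ∀ b : Set (S.V n → ℝ), IsBox b →
      S.expProj N n (fun φ => (volume (projBody φ b \ P N)).toReal) < η →
      volume b ≤ ENNReal.ofReal V)
    (hV : 0 ≤ V) {A : S.V n → Set ℝ} (hA : ∀ i, MeasurableSet (A i))
    (hload : boxLoad (fun _ => unitMeasure) (S.emb N n) (fun φ => Finset.univ.image φ)
      (fun φ => (fun y => y ∘ φ) ⁻¹' (unitCube (S.V N) \ P N)) A < η * (S.emb N n).card) :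
    (Measure.pi fun _ => unitMeasure).real (univ.pi A) ≤ V := by
  have hA' : ∀ i, MeasurableSet (A i ∩ Icc 0 1) := fun i => (hA i).inter measurableSet_Icc
  have hexp : S.expProj N n (fun φ =>
      (volume (projBody φ (univ.pi fun i => A i ∩ Icc 0 1) \ P N)).toReal) < η := by
    rw [Ssee.expProj, div_lt_iff₀ (by exact_mod_cast hE.card_pos)]
    refine (Finset.sum_le_sum fun φ hφ => ?_).trans_lt hload
    refine (volume_projBody_univ_pi_sdiff_le (S.emb_inj N n hNn φ hφ) hA'
      (fun i => inter_subset_right) hPN).trans (measureReal_mono ?_)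
    exact inter_subset_inter_right _ fun y hy i hi => (hy i hi).1
  have hvol := hbox _ ⟨_, fun i => ⟨hA' i, inter_subset_right⟩, rfl⟩ hexp
  refine ENNReal.toReal_le_of_le_ofReal hV (le_of_eq_of_le ?_ hvol)
  rw [pi_unitMeasure, Measure.restrict_apply (.univ_pi hA), unitCube, ← pi_inter_distrib]

lemma volume_le_of_emb_eq_empty (hP : P n ⊆ unitCube (S.V n)) (hE : S.emb N n = ∅) (hη : 0 < η)
    {V : ENNReal}
    (hbox : ∀ b : Set (S.V n → ℝ), IsBox b →
      S.expProj N n (fun φ => (volume (projBody φ b \ P N)).toReal) < η → volume b ≤ V) :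
    volume (P n) ≤ V := by
  refine (measure_mono hP).trans (hbox _ ⟨_, fun i => ⟨measurableSet_Icc, le_rfl⟩, rfl⟩ ?_)
  simpa [Ssee.expProj, hE] using hη

lemma half_volume_mul_rpow_le (hP : S.Hereditary P) (hNn : N ≤ n) {γ τ κ : ℝ} (hγ : 0 < γ)
    (hγ1 : γ ≤ 1) (hτ : 0 < τ) (hτ1 : τ ≤ 1) (hκ : 0 < κ) (hκ1 : κ ≤ 1) (hη : 0 < η)
    (hκη : Fintype.card (S.V N) * κ ≤ η)
    (hdrop : (S.emb N n).card * (Fintype.card (S.V N) * τ) + (2 / γ) ^ Fintype.card (S.V N) *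
      (24 / γ ^ 2) * (1 / τ ^ (Fintype.card (S.V N) - 1) * √(Fintype.card (S.V n) *
        (Fintype.card (S.V N) * overlapCount (S.emb N n) (fun φ => Finset.univ.image φ)))) ≤
      η * (S.emb N n).card / 4)
    (hV : 0 ≤ V) (hbox : ∀ b : Set (S.V n → ℝ), IsBox b →
      S.expProj N n (fun φ => (volume (projBody φ b \ P N)).toReal) < 2 * η →
      volume b ≤ ENNReal.ofReal V) :
    (volume (P n)).toReal / 2 * (κ ^ 2) ^ (γ * Fintype.card (S.V n) * 4) ≤
      (1 + κ) ^ Fintype.card (S.V n) * V := by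
  have hQ := (hP.1 n).1
  rcases (S.emb N n).eq_empty_or_nonempty with hE | hE
  · have hvol := volume_le_of_emb_eq_empty (hP.1 n).2 hE (by positivity) hbox
    calc (volume (P n)).toReal / 2 * (κ ^ 2) ^ (γ * Fintype.card (S.V n) * 4)
        ≤ V / 2 * 1 := by
          gcongr
          · exact ENNReal.toReal_le_of_le_ofReal hV hvol
          · exact Real.rpow_le_one (by positivity) (pow_le_one₀ hκ.le hκ1) (by positivity)
      _ ≤ 1 * V := by linarith
      _ ≤ _ := by gcongr; exact one_le_pow₀ (by linarith)
  rw [volume_eq_pi_unitMeasure hQ (hP.1 n).2]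
  refine half_measureReal_mul_rpow_le (fun _ => unitMeasure) (C := fun _ => Icc 0 κ)
    (E := S.emb N n) (S := fun φ => Finset.univ.image φ)
    (B := fun φ => (fun y => y ∘ φ) ⁻¹' (unitCube (S.V N) \ P N)) hQ hE
    (fun φ hφ => Finset.card_image_of_injective _ (S.emb_inj N n hNn φ hφ))
    (fun φ _ => (show Measurable fun y : S.V n → ℝ => y ∘ φ by fun_prop)
      (measurableSet_unitCube.diff (hP.1 N).1))
    (fun φ _ => dependsOn_mem_preimage_comp φ _)
    (fun φ hφ => disjoint_preimage_unitCube_sdiff hP hNn hφ) hγ hγ1 hτ hτ1 hκ hκ1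
    (fun _ => measurableSet_Icc) (fun _ => unitMeasure_real_Icc hκ.le hκ1) hη hκη hdrop hV
    fun A hA hload => pi_unitMeasure_le_of_boxLoad_lt (hP.1 N).1 hNn hE hbox hV hA hload

theorem eventually_volume_le (hS : S.Good) (hP : S.Hereditary P) (hη : 0 < η) {ε π : ℝ}
    (hε : 0 < ε) {n₀ : ℕ} (hN : N ≤ n₀)
    (hbox : ∀ n ≥ n₀, ∀ b : Set (S.V n → ℝ), IsBox b →
      S.expProj N n (fun φ => (volume (projBody φ b \ P N)).toReal) < η →
      volume b ≤ ENNReal.ofReal (Real.exp (-((π - ε) * Fintype.card (S.V n))))) :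
    ∀ᶠ n in atTop, volume (P n) ≤
      ENNReal.ofReal (Real.exp (-((π - 4 * ε) * Fintype.card (S.V n)))) := by
  set r := Fintype.card (S.V N)
  obtain ⟨κ, hκ, hκ1, hκεη⟩ := exists_pos_le_one_mul_le (c := r + 1) (by positivity)
    (lt_min hε (half_pos hη))
  obtain ⟨γ, hγ, hγ1, hγκ⟩ := exists_pos_le_one_mul_le (c := 8 * |Real.log κ|) (by positivity) hε
  obtain ⟨τ, hτ, hτ1, hrτ⟩ := exists_pos_le_one_mul_le (c := r) (by positivity)
    (by positivity : 0 < η / 16)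
  obtain ⟨hκε, hκη⟩ := le_min_iff.1 hκεη
  have hrκ : 0 ≤ r * κ := by positivity
  filter_upwards [eventually_card_mul_add_mul_sqrt_overlapCount_le hS N r (η := η / 8)
      (τ := τ) (D := (2 / γ) ^ r * (24 / γ ^ 2) * (1 / τ ^ (r - 1))) (by positivity) (by linarith),
    (tendsto_natCast_atTop_atTop.comp hS.1).eventually_ge_atTop (Real.log 2 / ε),
    eventually_ge_atTop n₀] with n hdrop hlog hn
  have hfin : volume (P n) ≠ ⊤ :=
    ((measure_mono (hP.1 n).2).trans_lt volume_unitCube_lt_top).ne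
  refine (ENNReal.le_ofReal_iff_toReal_le hfin (Real.exp_nonneg _)).2 <|
    le_exp_of_half_mul_rpow_le ENNReal.toReal_nonneg hκ (by linarith) hγ.le hγκ
      ((div_le_iff₀' hε).1 hlog) ?_
  exact half_volume_mul_rpow_le hP (hN.trans hn) hγ hγ1 hτ hτ1 hκ hκ1 (half_pos hη) (by linarith)
    (by linarith) (Real.exp_nonneg _)
    (by simpa only [mul_div_cancel₀ η two_ne_zero] using hbox n hn)

end Ssee

end ProductContainer

/-- **Corollary (volume estimates for hereditary bodies).**
Let `V` be a good ssee and `P` a hereditary property of `[0,1]`-decorations of `V`.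
Assume (a) `π(P) = lim ex(V_n,P_n)/|V_n|` exists, and (b) a supersaturation statement:
for all `ε > 0` there are `η > 0` and `N ≤ n₀` such that for `n ≥ n₀` every box `b` in
`V_n` with `E_φ vol(b_{↓φ} \ P_N) < η` has `Ent(b) > (π(P) − ε)|V_n|`.
Then `(-log vol(P_n))/|V_n| → π(P)`. -/
theorem counting_for_ssee
    (S : Ssee) (hS : S.Good)
    (P : ∀ n, Set (S.V n → ℝ)) (hP : S.Hereditary P) (π : ℝ)
    (ha : Tendsto (fun n => S.exEnt P n / ((Fintype.card (S.V n) : ℝ) : EReal))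
      atTop (nhds (π : EReal)))
    (hb : ∀ ε : ℝ, 0 < ε → ∃ η : ℝ, 0 < η ∧ ∃ N n₀ : ℕ, 0 < N ∧ N ≤ n₀ ∧
      ∀ n ≥ n₀, ∀ b : Set (S.V n → ℝ), IsBox b →
        S.expProj N n (fun φ => (volume (projBody φ b \ P N)).toReal) < η →
        (((π - ε) * (Fintype.card (S.V n) : ℝ) : ℝ) : EReal) < entE b) :
    Tendsto (fun n => (-(ENNReal.log (volume (P n)))) / ((Fintype.card (S.V n) : ℝ) : EReal))
      atTop (nhds (π : EReal)) := by
  have hvol : ∀ ε > 0, ∀ᶠ n in atTop, volume (P n) ≤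
      ENNReal.ofReal (Real.exp (-((π - 4 * ε) * Fintype.card (S.V n)))) := fun ε hε => by
    obtain ⟨η, hη, N, n₀, -, hN, hbox⟩ := hb ε hε
    exact ProductContainer.eventually_volume_le hS hP hη hε hN fun n hn b hbb hbη =>
      ProductContainer.coe_le_neg_log_iff.1 (hbox n hn b hbb hbη).le
  have hpos : ∀ n, (0 : EReal) < ((Fintype.card (S.V n) : ℝ) : EReal) := fun n => by
    exact_mod_cast Fintype.card_pos (α := S.V n)
  refine tendsto_order.2 ⟨fun a haπ => ?_, fun a hπa => ?_⟩
  · obtain ⟨c, hac, hcπ⟩ := EReal.lt_iff_exists_real_btwn.1 haπ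
    filter_upwards [hvol ((π - c) / 4) (by linarith [EReal.coe_lt_coe_iff.1 hcπ])] with n hn
    refine hac.trans_le ?_
    rw [EReal.le_div_iff_mul_le (hpos n) (EReal.coe_ne_top _), ← EReal.coe_mul,
      ProductContainer.coe_le_neg_log_iff]
    exact hn.trans_eq (by ring_nf)
  · filter_upwards [(tendsto_order.1 ha).2 a hπa] with n hn
    have hle := ProductContainer.neg_log_volume_le_exEnt S P n
    exact (EReal.div_le_div_right_of_nonneg (hpos n).le hle).trans_lt hn

end
end
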